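/- arXiv:2502.13692 — 3 statements merged into one kernel-verified Lean document; each statement's English description precedes it below -/
import Mathlib

section
/- There is a constant c > 0 such that for every dimension d ≥ 1, every sample size n ≥ 1, every 0 < δ < 1, and every probability distribution D over B_2^d × {−1,1}, with probability at least 1 − δ over a training set S = ((x_1,y_1),…,(x_n,y_n)) drawn i.i.d. from D, it holds simultaneously for every unit vector w ∈ S^{d−1} and every margin γ with n^{−1/2} ≤ γ ≤ 1 that L_D(w) ≤ L_S^γ(w) + c·( sqrt( L_S^γ(w)·( ln(e/L_S^γ(w))/(γ²n) + ln(e/δ)/n ) ) + ln(e·γ²n)/(γ²n) + ln(e/δ)/n ). -/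
open MeasureTheory ProbabilityTheory

noncomputable section

/-- Dot product on `Fin m → ℝ`. -/
def dotp {m : ℕ} (w x : Fin m → ℝ) : ℝ := ∑ j, w j * x j

/-- Margin loss `L_D^γ(w)` of `w` under a distribution `D` on `ℝ^m × ℝ`
(labels are encoded as reals in `{-1,1}`). -/
def lossD {m : ℕ} (D : Measure ((Fin m → ℝ) × ℝ)) (γ : ℝ) (w : Fin m → ℝ) : ℝ :=
  (D {p | p.2 * dotp w p.1 ≤ γ}).toReal

/-- Empirical margin loss `L_S^γ(w)` on a training set `S` of `n` labeled points. -/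
def lossS {m n : ℕ} (S : Fin n → (Fin m → ℝ) × ℝ) (γ : ℝ) (w : Fin m → ℝ) : ℝ :=
  (Nat.card {i : Fin n // (S i).2 * dotp w (S i).1 ≤ γ} : ℝ) / n

/-- The i.i.d. sample measure `D^n` over training sets of size `n`. -/
def trainM {m : ℕ} (D : Measure ((Fin m → ℝ) × ℝ)) (n : ℕ) :
    Measure (Fin n → (Fin m → ℝ) × ℝ) := Measure.pi fun _ => D

/-- Spacing of the rounding grid: `(10 √k)⁻¹`. -/
def gridStep (k : ℕ) : ℝ := (10 * Real.sqrt k)⁻¹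

/-- The largest grid point `(1/2)(10√k)⁻¹ + z(10√k)⁻¹ ≤ g`. -/
def roundDown (k : ℕ) (g : ℝ) : ℝ :=
  gridStep k / 2 + (⌊(g - gridStep k / 2) / gridStep k⌋ : ℝ) * gridStep k

/-- The probability `p(z)` of rounding `g` down, chosen so the rounding is unbiased. -/
def roundProb (k : ℕ) (g : ℝ) : ℝ := 1 - (g - roundDown k g) / gridStep k

/-- Matrix-vector product, `(Aw)_i = ∑ j A i j * w j`. -/
def matVec {k m : ℕ} (A : Fin k → Fin m → ℝ) (w : Fin m → ℝ) : Fin k → ℝ :=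
  fun i => ∑ j, A i j * w j

/-- The randomized rounding `h_{A,t}(w)` of `Aw` to the grid. -/
def hRound {k m : ℕ} (A : Fin k → Fin m → ℝ) (t : Fin k → ℝ) (w : Fin m → ℝ) :
    Fin k → ℝ :=
  fun i => if t i ≤ roundProb k (matVec A w i)
    then roundDown k (matVec A w i)
    else roundDown k (matVec A w i) + gridStep k

/-- The joint law of `(A, t)`: `A` has i.i.d. `N(0,1/k)` entries and `t` has i.i.d.
uniform `[0,1]` coordinates, independent of `A`. -/
def roundMeasure (k m : ℕ) : Measure ((Fin k → Fin m → ℝ) × (Fin k → ℝ)) :=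
  (Measure.pi fun _ : Fin k => Measure.pi fun _ : Fin m =>
      gaussianReal 0 (k : NNReal)⁻¹).prod
    (Measure.pi fun _ : Fin k => volume.restrict (Set.Icc (0 : ℝ) 1))

/-- Reduced setup: the data domain `X ⊆ S^d ⊂ ℝ^{d+1}` of unit vectors whose first
`d` coordinates have norm at most `cγ`. -/
def Xset (d : ℕ) (cγ : ℝ) : Set (Fin (d+1) → ℝ) :=
  {x | (∑ j, x j ^ 2) = 1 ∧ (∑ j : Fin d, x j.castSucc ^ 2) ≤ cγ ^ 2}

/-- Reduced setup: the hypothesis class `H = S^{d-1} × {0} ⊂ ℝ^{d+1}`. -/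
def Hset (d : ℕ) : Set (Fin (d+1) → ℝ) :=
  {w | (∑ j, w j ^ 2) = 1 ∧ w (Fin.last d) = 0}

/-- `γ_i = 2^{i-1} n^{-1/2}`. -/
def γlo (n i : ℕ) : ℝ := 2 ^ (i - 1) / Real.sqrt n

/-- `γ_{i+1} = 2^i n^{-1/2}`. -/
def γhi (n i : ℕ) : ℝ := 2 ^ i / Real.sqrt n

/-- `ℓ_{j+1} = 2^j n^{-1}`. -/
def ellhi (n j : ℕ) : ℝ := 2 ^ j / n

/-- The interval `L_j`: `L_0 = [0, n⁻¹]`, and `L_j = (2^{j-1}/n, 2^j/n]` for `j ≥ 1`. -/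
def Lset (n j : ℕ) : Set ℝ :=
  if j = 0 then Set.Icc 0 (n : ℝ)⁻¹
  else Set.Ioc ((2 : ℝ) ^ (j - 1) / n) ((2 : ℝ) ^ j / n)

/-- Margin loss of `h ∈ ℝ^k` under the pushforward distribution `A·D`. -/
def kLossD {k m : ℕ} (D : Measure ((Fin m → ℝ) × ℝ)) (γ : ℝ) (h : Fin k → ℝ)
    (A : Fin k → Fin m → ℝ) : ℝ :=
  (D {q | q.2 * (∑ r, h r * ∑ s, A r s * q.1 s) ≤ γ}).toReal

/-- Empirical margin loss of `h ∈ ℝ^k` on the transformed training set `A·S`. -/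
def kLossS {k m n : ℕ} (S : Fin n → (Fin m → ℝ) × ℝ) (γ : ℝ) (h : Fin k → ℝ)
    (A : Fin k → Fin m → ℝ) : ℝ :=
  (Nat.card {i : Fin n // (S i).2 * (∑ r, h r * ∑ s, A r s * (S i).1 s) ≤ γ} : ℝ) / n

/-- Specification of the function `φ` from the paper, for margin parameter `γi`:
on `[-cγ, 0]` it equals the probability (over the randomized rounding) that the rounded
margin exceeds `γi/2` given original margin `α`; on `(0, γi]` it interpolates linearly to
`0`; on `(γi, cγ]` it is `0`. -/
def phiSpec (d k : ℕ) (cγ γi : ℝ) (φ : ℝ → ℝ) : Prop :=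
  (∀ (w x : Fin (d+1) → ℝ) (y : ℝ), w ∈ Hset d → x ∈ Xset d cγ →
      (y = 1 ∨ y = -1) → y * dotp w x ≤ 0 →
      φ (y * dotp w x) =
        (roundMeasure k (d+1)
          {p | γi / 2 < y * ∑ r, hRound p.1 p.2 w r * ∑ s, p.1 r s * x s}).toReal) ∧
  (∀ α : ℝ, 0 < α → α ≤ γi → φ α = ((γi - α) / γi) * φ 0) ∧
  (∀ α : ℝ, γi < α → α ≤ cγ → φ α = 0)

/-- Specification of the function `ρ` from the paper, for margin parameter `γi`. -/
def rhoSpec (d k : ℕ) (cγ γi : ℝ) (ρ : ℝ → ℝ) : Prop :=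
  (∀ (w x : Fin (d+1) → ℝ) (y : ℝ), w ∈ Hset d → x ∈ Xset d cγ →
      (y = 1 ∨ y = -1) → γi < y * dotp w x →
      ρ (y * dotp w x) =
        (roundMeasure k (d+1)
          {p | y * ∑ r, hRound p.1 p.2 w r * ∑ s, p.1 r s * x s ≤ γi / 2}).toReal) ∧
  (∀ α : ℝ, 0 < α → α ≤ γi →
      ∀ (w x : Fin (d+1) → ℝ) (y : ℝ), w ∈ Hset d → x ∈ Xset d cγ →
      (y = 1 ∨ y = -1) → y * dotp w x = γi →
      ρ α = (α / γi) *
        (roundMeasure k (d+1)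
          {p | y * ∑ r, hRound p.1 p.2 w r * ∑ s, p.1 r s * x s ≤ γi / 2}).toReal) ∧
  (∀ α : ℝ, -cγ ≤ α → α ≤ 0 → ρ α = 0)

/-!
The classifier `w / γ` is replaced by the Gaussian posterior `N(w / γ, σ²)`, whose divergence from
the prior is of order `1 / (γ σ)²` and under which the margin at `x` is Gaussian around its true
value, so that a soft step of the margin separates true error from margin error up to a tail
`exp (-c / σ²)`. Shrinking that tail to the target accuracy with a single `σ` would cost a
logarithmic factor in front of the main term. Instead the soft step smoothed at a small scale is
telescoped over the scales `σ_j ~ 2⁻ʲ σ_0`. Link `j` compares two smoothings of a function with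
Lipschitz derivative, so it is of size `4⁻ʲ`, and its square `16⁻ʲ` beats the divergence, which
grows only like `4ʲ`. A self-normalized PAC-Bayes inequality, which charges each link its empirical
second moment, therefore bounds the links by geometric series. For empirical loss about `2⁻ᵐ` the
chain starts at `σ_0² ~ 1 / (m + 1)`, and about `log (γ² n) / (m + 1)` links bring the tail below
`1 / (γ² n)`. A union bound over dyadic margins, loss levels and scales finishes the proof.
-/

open InformationTheory
open scoped RealInnerProductSpace

section gaussian

variable {E : Type*} [NormedAddCommGroup E] [InnerProductSpace ℝ E] [FiniteDimensional ℝ E]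
  [MeasurableSpace E] [BorelSpace E]

variable (E) in
theorem integrable_exp_neg_mul_sq_norm {b : ℝ} (hb : 0 < b) :
    Integrable fun v : E => Real.exp (-b * ‖v‖ ^ 2) := by
  have h := (GaussianFourier.integrable_cexp_neg_mul_sq_norm_add (b := (b : ℂ))
    (by simpa using hb) 0 (0 : E)).norm
  refine h.congr (Filter.Eventually.of_forall fun v => ?_)
  simp only [Complex.norm_exp]
  congr 1
  simp [← Complex.ofReal_pow]

variable (E) in
theorem stdGaussian_eq_withDensity :
    stdGaussian E = volume.withDensity fun v => ENNReal.ofReal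
      (((2 * Real.pi) ^ (Module.finrank ℝ E / 2 : ℝ))⁻¹ * Real.exp (-(1 / 2) * ‖v‖ ^ 2)) := by
  set Z : ℝ := (2 * Real.pi) ^ (Module.finrank ℝ E / 2 : ℝ)
  have hZ : 0 < Z := by positivity
  have hmeas : Measurable fun v : E => ENNReal.ofReal (Z⁻¹ * Real.exp (-(1 / 2) * ‖v‖ ^ 2)) := by
    fun_prop
  have hfin : IsFiniteMeasure (volume.withDensity fun v : E =>
      ENNReal.ofReal (Z⁻¹ * Real.exp (-(1 / 2) * ‖v‖ ^ 2))) :=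
    isFiniteMeasure_withDensity_ofReal
      ((integrable_exp_neg_mul_sq_norm E one_half_pos).const_mul _).2
  refine Measure.ext_of_charFun (funext fun t => ?_)
  have hfourier := GaussianFourier.integral_cexp_neg_mul_sq_norm_add (b := (1 / 2 : ℂ))
    (by norm_num) Complex.I t
  have hintegrand : (fun v : E => (ENNReal.ofReal (Z⁻¹ * Real.exp (-(1 / 2) * ‖v‖ ^ 2))).toReal •
        Complex.exp (⟪v, t⟫ * Complex.I)) =
      fun v => (Z⁻¹ : ℂ) * Complex.exp (-(1 / 2 : ℂ) * ‖v‖ ^ 2 + Complex.I * ⟪t, v⟫) := by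
    funext v
    rw [ENNReal.toReal_ofReal (by positivity), Complex.exp_add, real_inner_comm t v,
      mul_comm Complex.I]
    simp [mul_assoc]
  have hnormalization : (Real.pi / (1 / 2 : ℂ)) ^ (Module.finrank ℝ E / 2 : ℂ) = Z := by
    rw [Complex.ofReal_cpow (by positivity)]
    congr 1
    · push_cast; ring
    · simp
  rw [charFun_stdGaussian, charFun_apply,
    integral_withDensity_eq_integral_toReal_smul hmeas (by simp), hintegrand, integral_const_mul,
    hfourier, hnormalization, ← mul_assoc, inv_mul_cancel₀ (by exact_mod_cast hZ.ne'), one_mul,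
    Complex.I_sq]
  congr 1
  ring

theorem map_inner_stdGaussian (x : E) :
    (stdGaussian E).map (fun g => ⟪g, x⟫) = (gaussianReal 0 1).map (fun r => ‖x‖ * r) := by
  have hdual : (fun g : E => ⟪g, x⟫) = InnerProductSpace.toDual ℝ E x := by
    funext g
    rw [InnerProductSpace.toDual_apply_apply, real_inner_comm]
  rw [gaussianReal_map_const_mul, hdual, IsGaussian.map_eq_gaussianReal,
    integral_strongDual_stdGaussian, variance_dual_stdGaussian]
  congr 1
  · simp
  · ext
    simp

theorem integral_comp_inner_stdGaussian (x : E) {F : ℝ → ℝ} (hF : Measurable F) :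
    ∫ g, F ⟪g, x⟫ ∂stdGaussian E = ∫ r, F (‖x‖ * r) ∂gaussianReal 0 1 := by
  rw [← integral_map (φ := fun g => ⟪g, x⟫) (by fun_prop) hF.aestronglyMeasurable,
    map_inner_stdGaussian, integral_map (by fun_prop) hF.aestronglyMeasurable]

theorem integral_comp_inner_map_add_right_stdGaussian (a x : E) {F : ℝ → ℝ} (hF : Measurable F) :
    ∫ v, F ⟪v, x⟫ ∂(stdGaussian E).map (· + a) =
      ∫ r, F (⟪a, x⟫ + ‖x‖ * r) ∂gaussianReal 0 1 := by
  have hFx : Measurable fun v : E => F ⟪v, x⟫ := hF.comp (by fun_prop)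
  have hFa : Measurable fun t => F (⟪a, x⟫ + t) := hF.comp (by fun_prop)
  rw [integral_map (by fun_prop) hFx.aestronglyMeasurable,
    ← integral_comp_inner_stdGaussian x hFa]
  simp only [inner_add_left, add_comm]

theorem integrable_inner_stdGaussian (a : E) :
    Integrable (fun g => ⟪a, g⟫) (stdGaussian E) :=
  IsGaussian.integrable_dual (stdGaussian E) (InnerProductSpace.toDual ℝ E a)

theorem integral_inner_stdGaussian (a : E) : ∫ g, ⟪a, g⟫ ∂stdGaussian E = 0 :=
  integral_strongDual_stdGaussian (InnerProductSpace.toDual ℝ E a)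

theorem integrable_exp_inner_stdGaussian (a : E) :
    Integrable (fun g => Real.exp ⟪a, g⟫) (stdGaussian E) := by
  have h : Integrable (fun r : ℝ => Real.exp (1 * r))
      ((stdGaussian E).map fun g => ⟪g, a⟫) := by
    rw [map_inner_stdGaussian, gaussianReal_map_const_mul]
    exact integrable_exp_mul_gaussianReal 1
  simpa [Function.comp_def, real_inner_comm] using h.comp_measurable (by fun_prop)

theorem integral_exp_inner_stdGaussian (a : E) :
    ∫ g, Real.exp ⟪a, g⟫ ∂stdGaussian E = Real.exp (‖a‖ ^ 2 / 2) := by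
  have h := mgf_id_gaussianReal (μ := 0) (v := 1)
  have h2 := congrFun h ‖a‖
  simp only [mgf, id, zero_mul, zero_add, NNReal.coe_one, one_mul] at h2
  rw [← h2, ← integral_comp_inner_stdGaussian a Real.measurable_exp]
  simp only [real_inner_comm]

theorem map_add_right_stdGaussian (a : E) :
    (stdGaussian E).map (· + a) = (stdGaussian E).tilted fun g => ⟪a, g⟫ := by
  refine Measure.ext_of_lintegral _ fun f hf => ?_
  rw [lintegral_map hf (by fun_prop), lintegral_tilted, integral_exp_inner_stdGaussian,
    stdGaussian_eq_withDensity, lintegral_withDensity_eq_lintegral_mul _ (by fun_prop)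
      (show Measurable fun g => f (g + a) from hf.comp (by fun_prop)),
    lintegral_withDensity_eq_lintegral_mul _ (by fun_prop) (by fun_prop),
    ← lintegral_sub_right_eq_self _ a]
  refine lintegral_congr fun v => ?_
  simp only [Pi.mul_apply, sub_add_cancel, ← mul_assoc]
  rw [← ENNReal.ofReal_mul (by positivity), mul_assoc, ← Real.exp_sub, ← Real.exp_add,
    norm_sub_sq_real, real_inner_comm v a]
  ring_nf

theorem llr_map_add_right_stdGaussian (a : E) :
    llr ((stdGaussian E).map (· + a)) (stdGaussian E) =ᵐ[(stdGaussian E).map (· + a)]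
      fun g => ⟪a, g⟫ - ‖a‖ ^ 2 / 2 := by
  rw [map_add_right_stdGaussian]
  refine (tilted_absolutelyContinuous _ _).ae_eq ?_
  filter_upwards [log_rnDeriv_tilted_left_self (integrable_exp_inner_stdGaussian a)] with g hg
  rw [llr, hg, integral_exp_inner_stdGaussian, Real.log_exp]

theorem klDiv_map_add_right_stdGaussian (a : E) :
    klDiv ((stdGaussian E).map (· + a)) (stdGaussian E) = ENNReal.ofReal (‖a‖ ^ 2 / 2) := by
  have : IsProbabilityMeasure ((stdGaussian E).map (· + a)) :=
    Measure.isProbabilityMeasure_map (by fun_prop)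
  have hac : (stdGaussian E).map (· + a) ≪ stdGaussian E := by
    rw [map_add_right_stdGaussian]
    exact tilted_absolutelyContinuous _ _
  have hshift : ∀ g, ⟪a, g + a⟫ - ‖a‖ ^ 2 / 2 = ⟪a, g⟫ + ‖a‖ ^ 2 / 2 := fun g => by
    rw [inner_add_right, real_inner_self_eq_norm_sq]
    ring
  have hllr := llr_map_add_right_stdGaussian a
  have hint : Integrable (llr ((stdGaussian E).map (· + a)) (stdGaussian E))
      ((stdGaussian E).map (· + a)) := by
    rw [integrable_congr hllr, integrable_map_measure (by fun_prop) (by fun_prop)]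
    simp only [Function.comp_def, hshift]
    exact (integrable_inner_stdGaussian a).add (integrable_const _)
  rw [klDiv_of_ac_of_integrable hac hint, integral_congr_ae hllr,
    integral_map (by fun_prop) (by fun_prop)]
  simp only [hshift, probReal_univ, add_sub_cancel_right]
  rw [integral_add (integrable_inner_stdGaussian a) (integrable_const _),
    integral_inner_stdGaussian, integral_const, probReal_univ, one_smul, zero_add]

end gaussian

section pacBayes

variable {X Θ : Type*} [MeasurableSpace X] [MeasurableSpace Θ]

theorem integral_le_klDiv_add_log_integral_exp {Q P : Measure Θ} [IsProbabilityMeasure Q]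
    [IsProbabilityMeasure P] {H : Θ → ℝ} (hkl : klDiv Q P ≠ ⊤) (hH : Integrable H Q)
    (hexp : Integrable (fun θ => Real.exp (H θ)) P) :
    ∫ θ, H θ ∂Q ≤ (klDiv Q P).toReal + Real.log (∫ θ, Real.exp (H θ) ∂P) := by
  obtain ⟨hac, hllr⟩ := klDiv_ne_top_iff.1 hkl
  have htilted : IsProbabilityMeasure (P.tilted H) := isProbabilityMeasure_tilted hexp
  have hgibbs := integral_llr_add_sub_measure_univ_nonneg
    (hac.trans (absolutelyContinuous_tilted hexp)) (integrable_llr_tilted_right hac hH hllr hexp)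
  rw [integral_llr_tilted_right hac hH hexp hllr] at hgibbs
  simp only [probReal_univ, add_sub_cancel_right] at hgibbs
  rw [toReal_klDiv_of_measure_eq hac (by simp)]
  linarith

theorem ofReal_exp_integral_sub_klDiv_le {Q P : Measure Θ} [IsProbabilityMeasure Q]
    [IsProbabilityMeasure P] {H : Θ → ℝ} (hm : Measurable H) (hkl : klDiv Q P ≠ ⊤)
    (hH : Integrable H Q) :
    ENNReal.ofReal (Real.exp (∫ θ, H θ ∂Q - (klDiv Q P).toReal)) ≤
      ∫⁻ θ, ENNReal.ofReal (Real.exp (H θ)) ∂P := by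
  by_cases htop : ∫⁻ θ, ENNReal.ofReal (Real.exp (H θ)) ∂P = ⊤
  · simp [htop]
  have hexp : Integrable (fun θ => Real.exp (H θ)) P :=
    ⟨(Real.measurable_exp.comp hm).aestronglyMeasurable, by
      simpa [HasFiniteIntegral, Real.enorm_of_nonneg (Real.exp_pos _).le] using
        lt_top_iff_ne_top.2 htop⟩
  rw [← ofReal_integral_eq_lintegral_ofReal hexp
    (Filter.Eventually.of_forall fun _ => (Real.exp_pos _).le)]
  have hdv := integral_le_klDiv_add_log_integral_exp hkl hH hexp
  exact ENNReal.ofReal_le_ofReal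
    ((Real.le_log_iff_exp_le (integral_exp_pos hexp)).1 (by linarith))

variable {μ : Measure X} [IsProbabilityMeasure μ]

theorem lintegral_pi_exp_sum_le_one {f : X → ℝ} (hf : Measurable f)
    (hexp : ∫⁻ x, ENNReal.ofReal (Real.exp (f x)) ∂μ ≤ 1) (n : ℕ) :
    ∫⁻ S : Fin n → X, ENNReal.ofReal (Real.exp (∑ k, f (S k))) ∂(Measure.pi fun _ => μ) ≤ 1 := by
  simp_rw [Real.exp_sum, ENNReal.ofReal_prod_of_nonneg fun _ _ => (Real.exp_pos _).le]
  rw [lintegral_prod_eq_prod_lintegral_of_indepFun Finset.univ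
    (fun k (S : Fin n → X) => ENNReal.ofReal (Real.exp (f (S k))))
    (iIndepFun_pi (X := fun _ x => ENNReal.ofReal (Real.exp (f x))) fun _ => by fun_prop)
    fun k => by fun_prop]
  refine Finset.prod_le_one' fun k _ => ?_
  rwa [(measurePreserving_eval (fun _ : Fin n => μ) k).lintegral_comp
    (f := fun x => ENNReal.ofReal (Real.exp (f x))) (by fun_prop)]

/-- Donsker-Varadhan bounds all posteriors at once by the random variable
`∫ exp (∑ h θ (S k)) dP`, whose mean is at most one. -/
theorem measure_exists_posterior_le_exp_neg (P : Measure Θ) [IsProbabilityMeasure P]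
    {h : Θ → X → ℝ} (hm : Measurable fun q : Θ × X => h q.1 q.2)
    (hexp : ∀ θ, ∫⁻ x, ENNReal.ofReal (Real.exp (h θ x)) ∂μ ≤ 1) (n : ℕ) (B : ℝ) :
    (Measure.pi fun _ : Fin n => μ) {S | ∃ Q : Measure Θ, IsProbabilityMeasure Q ∧
      klDiv Q P ≠ ⊤ ∧ Integrable (fun θ => ∑ k, h θ (S k)) Q ∧
      (klDiv Q P).toReal + B < ∫ θ, ∑ k, h θ (S k) ∂Q} ≤ ENNReal.ofReal (Real.exp (-B)) := by
  set Z : (Fin n → X) → ENNReal := fun S =>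
    ∫⁻ θ, ENNReal.ofReal (Real.exp (∑ k, h θ (S k))) ∂P with hZ
  have hjoint : Measurable fun q : (Fin n → X) × Θ =>
      ENNReal.ofReal (Real.exp (∑ k, h q.2 (q.1 k))) := by
    refine ENNReal.measurable_ofReal.comp (Real.measurable_exp.comp
      (Finset.measurable_sum _ fun k _ => ?_))
    exact hm.comp (f := fun q : (Fin n → X) × Θ => (q.2, q.1 k)) (by fun_prop)
  have hZmean : ∫⁻ S, Z S ∂(Measure.pi fun _ : Fin n => μ) ≤ 1 := by
    rw [hZ, lintegral_lintegral_swap hjoint.aemeasurable]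
    calc _ ≤ ∫⁻ _, 1 ∂P := lintegral_mono fun θ =>
            lintegral_pi_exp_sum_le_one (hm.comp measurable_prodMk_left) (hexp θ) n
      _ = 1 := by simp
  calc _ ≤ (Measure.pi fun _ : Fin n => μ) {S | ENNReal.ofReal (Real.exp B) ≤ Z S} := by
        refine measure_mono ?_
        rintro S ⟨Q, hQ, hkl, hint, hlt⟩
        have hsum : Measurable fun θ => ∑ k, h θ (S k) :=
          Finset.measurable_sum _ fun k _ => hm.comp measurable_prodMk_right
        refine le_trans (ENNReal.ofReal_le_ofReal (Real.exp_le_exp.2 ?_))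
          (ofReal_exp_integral_sub_klDiv_le hsum hkl hint)
        linarith
    _ ≤ (∫⁻ S, Z S ∂(Measure.pi fun _ : Fin n => μ)) / ENNReal.ofReal (Real.exp B) :=
        meas_ge_le_lintegral_div hjoint.lintegral_prod_right'.aemeasurable
          (by simp [Real.exp_pos]) ENNReal.ofReal_ne_top
    _ ≤ 1 / ENNReal.ofReal (Real.exp B) := by gcongr
    _ = ENNReal.ofReal (Real.exp (-B)) := by
        rw [Real.exp_neg, ENNReal.ofReal_inv_of_pos (Real.exp_pos _), one_div]

theorem exp_neg_sub_sq_le_one_sub {u : ℝ} (hu : u ≤ 1 / 2) : Real.exp (-u - u ^ 2) ≤ 1 - u := by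
  suffices h : 1 ≤ (1 - u) * Real.exp (u + u ^ 2) by
    rw [show -u - u ^ 2 = -(u + u ^ 2) by ring, Real.exp_neg]
    exact (inv_le_iff_one_le_mul₀ (Real.exp_pos _)).2 h
  rcases le_total 0 u with h0 | h0
  · calc (1 : ℝ) ≤ (1 - u) * (1 + (u + u ^ 2) + (u + u ^ 2) ^ 2 / 2) := by
          nlinarith [pow_nonneg h0 2, pow_nonneg h0 3, pow_nonneg h0 4]
      _ ≤ (1 - u) * Real.exp (u + u ^ 2) := by
          gcongr
          · linarith
          · exact Real.quadratic_le_exp_of_nonneg (by positivity)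
  · calc (1 : ℝ) ≤ (1 - u) * (u + u ^ 2 + 1) := by
          nlinarith [mul_nonneg (neg_nonneg.2 h0) (sq_nonneg u)]
      _ ≤ (1 - u) * Real.exp (u + u ^ 2) := by
          gcongr
          · linarith
          · exact Real.add_one_le_exp _

theorem lintegral_exp_selfNormalized_le_one {f : X → ℝ} (hf : Integrable f μ)
    (hf2 : ∀ x, f x ≤ 1 / 2) :
    ∫⁻ x, ENNReal.ofReal (Real.exp (∫ y, f y ∂μ - f x - f x ^ 2)) ∂μ ≤ 1 := by
  have hsplit : ∀ x, ENNReal.ofReal (Real.exp (∫ y, f y ∂μ - f x - f x ^ 2)) ≤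
      ENNReal.ofReal (Real.exp (∫ y, f y ∂μ)) * ENNReal.ofReal (1 - f x) := fun x => by
    rw [← ENNReal.ofReal_mul (Real.exp_pos _).le,
      show ∫ y, f y ∂μ - f x - f x ^ 2 = ∫ y, f y ∂μ + (-f x - f x ^ 2) by ring, Real.exp_add]
    gcongr
    exact exp_neg_sub_sq_le_one_sub (hf2 x)
  calc _ ≤ ∫⁻ x, ENNReal.ofReal (Real.exp (∫ y, f y ∂μ)) * ENNReal.ofReal (1 - f x) ∂μ :=
        lintegral_mono hsplit
    _ = ENNReal.ofReal (Real.exp (∫ y, f y ∂μ) * (1 - ∫ y, f y ∂μ)) := by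
        rw [lintegral_const_mul' _ _ ENNReal.ofReal_ne_top,
          ← ofReal_integral_eq_lintegral_ofReal (f := fun x => 1 - f x)
            ((integrable_const 1).sub hf)
            (Filter.Eventually.of_forall fun x => by
              simp only [Pi.zero_apply]; linarith [hf2 x]),
          ← ENNReal.ofReal_mul (Real.exp_pos _).le, integral_sub (integrable_const 1) hf]
        simp
    _ ≤ ENNReal.ofReal (Real.exp (∫ y, f y ∂μ) * Real.exp (-∫ y, f y ∂μ)) := by
        gcongr
        linarith [Real.add_one_le_exp (-∫ y, f y ∂μ)]
    _ = 1 := by rw [← Real.exp_add, add_neg_cancel, Real.exp_zero, ENNReal.ofReal_one]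

theorem integrable_and_integral_sum_selfNormalized {Q : Measure Θ} [IsProbabilityMeasure Q]
    {f : Θ → X → ℝ} (hm : Measurable fun q : Θ × X => f q.1 q.2) {b : ℝ}
    (hb : ∀ θ x, |f θ x| ≤ b) {n : ℕ} (S : Fin n → X) :
    Integrable (fun θ => ∑ k, (∫ x, f θ x ∂μ - f θ (S k) - f θ (S k) ^ 2)) Q ∧
    ∫ θ, ∑ k, (∫ x, f θ x ∂μ - f θ (S k) - f θ (S k) ^ 2) ∂Q =
      n * ∫ x, ∫ θ, f θ x ∂Q ∂μ - ∑ k, ∫ θ, f θ (S k) ∂Q - ∑ k, ∫ θ, f θ (S k) ^ 2 ∂Q := by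
  have hjoint : Integrable (fun q : Θ × X => f q.1 q.2) (Q.prod μ) :=
    Integrable.of_bound hm.aestronglyMeasurable b (Filter.Eventually.of_forall fun q => hb _ _)
  have hmean : Integrable (fun θ => ∫ x, f θ x ∂μ) Q := hjoint.integral_prod_left
  have hfS : ∀ x, Measurable fun θ => f θ x := fun x => hm.comp measurable_prodMk_right
  have hval : ∀ x, Integrable (fun θ => f θ x) Q := fun x =>
    Integrable.of_bound (hfS x).aestronglyMeasurable b
      (Filter.Eventually.of_forall fun θ => hb _ _)
  have hsq : ∀ x, Integrable (fun θ => f θ x ^ 2) Q := fun x =>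
    Integrable.of_bound ((hfS x).pow_const 2).aestronglyMeasurable (b ^ 2)
      (Filter.Eventually.of_forall fun θ => by
        rw [norm_pow]
        exact pow_le_pow_left₀ (norm_nonneg _) (hb _ _) 2)
  have hdiff : ∀ x, Integrable (fun θ => ∫ x, f θ x ∂μ - f θ x) Q := fun x =>
    hmean.sub (hval x)
  have hterm : ∀ x, Integrable (fun θ => ∫ x, f θ x ∂μ - f θ x - f θ x ^ 2) Q := fun x =>
    (hdiff x).sub (hsq x)
  refine ⟨integrable_finsetSum _ fun k _ => hterm (S k), ?_⟩
  rw [integral_finsetSum _ fun k _ => hterm (S k)]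
  have hsplit : ∀ x, ∫ θ, (∫ x, f θ x ∂μ - f θ x - f θ x ^ 2) ∂Q =
      ∫ θ, ∫ x, f θ x ∂μ ∂Q - ∫ θ, f θ x ∂Q - ∫ θ, f θ x ^ 2 ∂Q := fun x => by
    rw [integral_sub (hdiff x) (hsq x), integral_sub hmean (hval x)]
  rw [Finset.sum_congr rfl fun k _ => hsplit (S k), Finset.sum_sub_distrib,
    Finset.sum_sub_distrib, Finset.sum_const, Finset.card_univ, Fintype.card_fin, nsmul_eq_mul,
    integral_integral_swap hjoint]

theorem measure_exists_posterior_selfNormalized_le (P : Measure Θ) [IsProbabilityMeasure P]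
    {f : Θ → X → ℝ} (hm : Measurable fun q : Θ × X => f q.1 q.2)
    (hf : ∀ θ x, |f θ x| ≤ 1 / 2) (n : ℕ) (B : ℝ) :
    (Measure.pi fun _ : Fin n => μ) {S | ∃ Q : Measure Θ, IsProbabilityMeasure Q ∧
      klDiv Q P ≠ ⊤ ∧ ∑ k, ∫ θ, f θ (S k) ^ 2 ∂Q + (klDiv Q P).toReal + B <
        n * ∫ x, ∫ θ, f θ x ∂Q ∂μ - ∑ k, ∫ θ, f θ (S k) ∂Q} ≤
      ENNReal.ofReal (Real.exp (-B)) := by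
  have hmean : Measurable fun θ => ∫ x, f θ x ∂μ :=
    hm.stronglyMeasurable.integral_prod_right'.measurable
  have hfθ : ∀ θ, Integrable (f θ) μ := fun θ =>
    Integrable.of_bound (hm.comp measurable_prodMk_left).aestronglyMeasurable (1 / 2)
      (Filter.Eventually.of_forall fun x => hf θ x)
  refine (measure_mono ?_).trans (measure_exists_posterior_le_exp_neg P
    (h := fun θ x => ∫ y, f θ y ∂μ - f θ x - f θ x ^ 2)
    (((hmean.comp measurable_fst).sub hm).sub (hm.pow_const 2))
    (fun θ => lintegral_exp_selfNormalized_le_one (hfθ θ) fun x => (abs_le.1 (hf θ x)).2) n B)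
  rintro S ⟨Q, hQ, hkl, hlt⟩
  obtain ⟨hint, heq⟩ :=
    integrable_and_integral_sum_selfNormalized (μ := μ) (Q := Q) hm hf S
  exact ⟨Q, hQ, hkl, hint, by rw [heq]; linarith⟩

end pacBayes

section gaussianSmooth

/-- Convolution of `f` with the centred Gaussian law of standard deviation `c`. -/
def gaussianSmooth (f : ℝ → ℝ) (c a : ℝ) : ℝ := ∫ r, f (a + c * r) ∂gaussianReal 0 1

variable {f : ℝ → ℝ}

theorem measurable_gaussianSmooth (hf : Measurable f) :
    Measurable fun q : ℝ × ℝ => gaussianSmooth f q.1 q.2 :=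
  StronglyMeasurable.measurable (StronglyMeasurable.integral_prod_right'
    (f := fun q : (ℝ × ℝ) × ℝ => f (q.1.2 + q.1.1 * q.2))
    (hf.comp (by fun_prop)).stronglyMeasurable)

theorem integral_sq_gaussianReal : ∫ r, r ^ 2 ∂gaussianReal 0 1 = 1 := by
  have h := variance_fun_id_gaussianReal (μ := 0) (v := 1)
  rw [variance_of_integral_eq_zero (by fun_prop) integral_id_gaussianReal] at h
  simpa using h

theorem abs_sub_gaussianSmooth_le (hf : Measurable f) {a f' K : ℝ}
    (htaylor : ∀ h, |f (a + h) - f a - f' * h| ≤ K * h ^ 2) (c : ℝ) :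
    |f a - gaussianSmooth f c a| ≤ K * c ^ 2 := by
  have hid : Integrable (fun r : ℝ => r) (gaussianReal 0 1) :=
    (memLp_id_gaussianReal 1).integrable le_rfl
  have hlin : Integrable (fun r : ℝ => f a + f' * (c * r)) (gaussianReal 0 1) :=
    (integrable_const _).add ((hid.const_mul c).const_mul f')
  have hquad : Integrable (fun r : ℝ => K * c ^ 2 * r ^ 2) (gaussianReal 0 1) :=
    (memLp_id_gaussianReal 2).integrable_sq.const_mul _
  have hle : ∀ r, ‖f (a + c * r) - (f a + f' * (c * r))‖ ≤ K * c ^ 2 * r ^ 2 := fun r => by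
    rw [← sub_sub, mul_assoc, ← mul_pow]
    exact htaylor (c * r)
  have hrem : Integrable (fun r => f (a + c * r) - (f a + f' * (c * r))) (gaussianReal 0 1) :=
    hquad.mono' (by fun_prop) (Filter.Eventually.of_forall hle)
  have hlinMean : ∫ r, (f a + f' * (c * r)) ∂gaussianReal 0 1 = f a := by
    rw [integral_add (integrable_const _) ((hid.const_mul c).const_mul f'),
      integral_const_mul, integral_const_mul, integral_id_gaussianReal]
    simp
  have hremMean : ∫ r, (f (a + c * r) - (f a + f' * (c * r))) ∂gaussianReal 0 1 =
      gaussianSmooth f c a - f a := by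
    rw [integral_sub ((hrem.add hlin).congr (Filter.Eventually.of_forall fun r => by simp)) hlin,
      hlinMean, gaussianSmooth]
  rw [abs_sub_comm, ← hremMean]
  calc _ ≤ ∫ r, K * c ^ 2 * r ^ 2 ∂gaussianReal 0 1 :=
        norm_integral_le_of_norm_le hquad (Filter.Eventually.of_forall hle)
    _ = K * c ^ 2 := by rw [integral_const_mul, integral_sq_gaussianReal, mul_one]

theorem gaussianSmooth_eq_integral_map (hf : Measurable f) (c a : ℝ) :
    gaussianSmooth f c a = ∫ x, f (a + x) ∂(gaussianReal 0 1).map (c * ·) := by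
  have hshift : Measurable fun x => f (a + x) := hf.comp (by fun_prop)
  rw [integral_map (by fun_prop) hshift.aestronglyMeasurable, gaussianSmooth]

theorem map_mul_gaussianReal_conv (b c : ℝ) :
    (gaussianReal 0 1).map (c * ·) ∗ (gaussianReal 0 1).map (b * ·) =
      (gaussianReal 0 1).map (√(c ^ 2 + b ^ 2) * ·) := by
  simp only [gaussianReal_map_const_mul, gaussianReal_conv_gaussianReal]
  congr 1
  · simp
  · ext
    simp [Real.sq_sqrt (by positivity : 0 ≤ c ^ 2 + b ^ 2)]

theorem gaussianSmooth_gaussianSmooth (hf : Measurable f) {C : ℝ} (hC : ∀ z, |f z| ≤ C)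
    (b c a : ℝ) :
    gaussianSmooth (gaussianSmooth f b) c a = gaussianSmooth f (√(c ^ 2 + b ^ 2)) a := by
  have (e : ℝ) : IsProbabilityMeasure ((gaussianReal 0 1).map (e * ·)) :=
    Measure.isProbabilityMeasure_map (by fun_prop)
  have hsmooth : Measurable (gaussianSmooth f b) :=
    (measurable_gaussianSmooth hf).comp measurable_prodMk_left
  have hshift : Measurable fun x => f (a + x) := hf.comp (by fun_prop)
  rw [gaussianSmooth_eq_integral_map hf, ← map_mul_gaussianReal_conv,
    integral_conv (Integrable.of_bound hshift.aestronglyMeasurable C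
      (Filter.Eventually.of_forall fun x => hC _)), gaussianSmooth_eq_integral_map hsmooth]
  simp only [gaussianSmooth_eq_integral_map hf, add_assoc]

theorem gaussianSmooth_comp_const_sub (f : ℝ → ℝ) (c s a : ℝ) :
    gaussianSmooth (fun z => f (s - z)) c a = gaussianSmooth f c (s - a) := by
  have hneg : (gaussianReal 0 1).map (fun r => -r) = gaussianReal 0 1 := by
    simpa using gaussianReal_map_neg (μ := 0) (v := 1)
  have hreflect := (MeasurableEquiv.neg ℝ).measurableEmbedding.integral_map
    (μ := gaussianReal 0 1) fun r => f (s - a + c * r)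
  change ∫ r, f (s - a + c * r) ∂(gaussianReal 0 1).map (fun r => -r) =
    ∫ r, f (s - a + c * -r) ∂gaussianReal 0 1 at hreflect
  rw [hneg] at hreflect
  simp only [gaussianSmooth, hreflect, mul_neg, ← sub_eq_add_neg, sub_sub]

end gaussianSmooth

section smoothStep

theorem abs_sq_max_zero_taylor (z h : ℝ) :
    |max 0 (z + h) ^ 2 - max 0 z ^ 2 - 2 * max 0 z * h| ≤ h ^ 2 := by
  rcases le_total 0 z with hz | hz <;> rcases le_total 0 (z + h) with hzh | hzh <;>
    simp only [max_eq_left, max_eq_right, hz, hzh] <;> rw [abs_le] <;> constructor <;>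
    nlinarith

/-- Quadratic spline decreasing from `1` on `(-∞, 1/3]` to `0` on `[2/3, ∞)`; it is symmetric about
`(1/2, 1/2)` and its derivative is Lipschitz. -/
def softStep (z : ℝ) : ℝ :=
  1 - 18 * max 0 (z - 1 / 3) ^ 2 + 36 * max 0 (z - 1 / 2) ^ 2 - 18 * max 0 (z - 2 / 3) ^ 2

/-- Derivative of `softStep`. -/
def softStepDeriv (z : ℝ) : ℝ :=
  -36 * max 0 (z - 1 / 3) + 72 * max 0 (z - 1 / 2) - 36 * max 0 (z - 2 / 3)

theorem softStep_of_le {z : ℝ} (hz : z ≤ 1 / 3) : softStep z = 1 := by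
  rw [softStep, max_eq_left (by linarith), max_eq_left (by linarith), max_eq_left (by linarith)]
  norm_num

theorem softStep_one_sub (z : ℝ) : softStep (1 - z) = 1 - softStep z := by
  have hreflect : ∀ x : ℝ, max 0 (-x) ^ 2 = x ^ 2 - max 0 x ^ 2 := fun x => by
    rcases le_total 0 x with hx | hx
    · rw [max_eq_right hx, max_eq_left (by linarith)]; ring
    · rw [max_eq_left hx, max_eq_right (by linarith)]; ring
  unfold softStep
  rw [show 1 - z - 1 / 3 = -(z - 2 / 3) by ring, show 1 - z - 1 / 2 = -(z - 1 / 2) by ring,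
    show 1 - z - 2 / 3 = -(z - 1 / 3) by ring, hreflect, hreflect, hreflect]
  ring

theorem softStep_of_ge {z : ℝ} (hz : 2 / 3 ≤ z) : softStep z = 0 := by
  have h := softStep_one_sub z
  rw [softStep_of_le (by linarith)] at h
  linarith

theorem softStep_nonneg (z : ℝ) : 0 ≤ softStep z := by
  rcases le_total z (1 / 3) with h1 | h1
  · rw [softStep_of_le h1]; exact zero_le_one
  rcases le_total (2 / 3) z with h3 | h3
  · rw [softStep_of_ge h3]
  rw [softStep, max_eq_right (by linarith), max_eq_left (by linarith : z - 2 / 3 ≤ 0)]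
  rcases le_total z (1 / 2) with h2 | h2
  · rw [max_eq_left (by linarith)]; nlinarith
  · rw [max_eq_right (by linarith)]; nlinarith [sq_nonneg (z - 2 / 3)]

theorem softStep_le_one (z : ℝ) : softStep z ≤ 1 := by
  linarith [softStep_nonneg (1 - z), softStep_one_sub z]

theorem abs_softStep_le_one (z : ℝ) : |softStep z| ≤ 1 := by
  rw [abs_of_nonneg (softStep_nonneg z)]
  exact softStep_le_one z

theorem measurable_softStep : Measurable softStep := by unfold softStep; fun_prop

theorem abs_softStep_taylor (z h : ℝ) :
    |softStep (z + h) - softStep z - softStepDeriv z * h| ≤ 72 * h ^ 2 := by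
  have h1 := abs_le.1 (abs_sq_max_zero_taylor (z - 1 / 3) h)
  have h2 := abs_le.1 (abs_sq_max_zero_taylor (z - 1 / 2) h)
  have h3 := abs_le.1 (abs_sq_max_zero_taylor (z - 2 / 3) h)
  unfold softStep softStepDeriv
  rw [add_sub_right_comm z h, add_sub_right_comm z h, add_sub_right_comm z h, abs_le]
  constructor <;> linarith

theorem integrable_softStep_comp {Ω : Type*} [MeasurableSpace Ω] (P : Measure Ω)
    [IsFiniteMeasure P] {f : Ω → ℝ} (hf : Measurable f) : Integrable (fun x => softStep (f x)) P :=
  Integrable.of_bound (measurable_softStep.comp hf).aestronglyMeasurable 1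
    (Filter.Eventually.of_forall fun _ => abs_softStep_le_one _)

/-- The step `softStep` smoothed at scale `c`, the loss seen by a Gaussian posterior whose margin
has standard deviation `c`. -/
def smoothStep (c a : ℝ) : ℝ := gaussianSmooth softStep c a

theorem measurable_smoothStep : Measurable fun q : ℝ × ℝ => smoothStep q.1 q.2 :=
  measurable_gaussianSmooth measurable_softStep

theorem smoothStep_nonneg (c a : ℝ) : 0 ≤ smoothStep c a :=
  integral_nonneg fun _ => softStep_nonneg _

theorem one_sub_smoothStep (c a : ℝ) : 1 - smoothStep c a = smoothStep c (1 - a) := by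
  rw [smoothStep, smoothStep, ← gaussianSmooth_comp_const_sub]
  simp only [gaussianSmooth, softStep_one_sub]
  rw [integral_sub (integrable_const _) (integrable_softStep_comp _ (by fun_prop))]
  simp

theorem smoothStep_le_one (c a : ℝ) : smoothStep c a ≤ 1 := by
  linarith [smoothStep_nonneg c (1 - a), one_sub_smoothStep c a]

theorem integrable_smoothStep_comp {Ω : Type*} [MeasurableSpace Ω] (P : Measure Ω)
    [IsFiniteMeasure P] {g f : Ω → ℝ} (hg : Measurable g) (hf : Measurable f) :
    Integrable (fun x => smoothStep (g x) (f x)) P :=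
  Integrable.of_bound (measurable_smoothStep.comp (hg.prodMk hf)).aestronglyMeasurable 1
    (Filter.Eventually.of_forall fun _ => by
      rw [Real.norm_of_nonneg (smoothStep_nonneg _ _)]
      exact smoothStep_le_one _ _)

theorem abs_softStep_sub_smoothStep_le (c a : ℝ) :
    |softStep a - smoothStep c a| ≤ 72 * c ^ 2 :=
  abs_sub_gaussianSmooth_le measurable_softStep (abs_softStep_taylor a) c

theorem integral_smoothStep (b c a : ℝ) :
    ∫ r, smoothStep b (a + c * r) ∂gaussianReal 0 1 = smoothStep (√(c ^ 2 + b ^ 2)) a :=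
  gaussianSmooth_gaussianSmooth measurable_softStep abs_softStep_le_one b c a

theorem integral_exp_mul_gaussianReal (t : ℝ) :
    ∫ r, Real.exp (t * r) ∂gaussianReal 0 1 = Real.exp (t ^ 2 / 2) := by
  simpa [mgf] using congrFun (mgf_id_gaussianReal (μ := 0) (v := 1)) t

theorem smoothStep_le_of_one_le {c σ z : ℝ} (hσ : 0 < σ) (hc : c ^ 2 ≤ σ ^ 2) (hz : 1 ≤ z) :
    smoothStep c z ≤ Real.exp (-(1 / (18 * σ ^ 2))) := by
  -- Chernoff: `s` minimises `σ ^ 2 * s ^ 2 / 2 - s / 3`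
  set s := 1 / (3 * σ ^ 2) with hs
  have hs0 : 0 < s := by positivity
  have hexp : ∀ r, softStep (z + c * r) ≤
      Real.exp (s * (2 / 3 - z)) * Real.exp (-(c * s) * r) := by
    intro r
    rw [← Real.exp_add]
    rcases le_or_gt (2 / 3) (z + c * r) with h | h
    · rw [softStep_of_ge h]
      positivity
    · refine (softStep_le_one _).trans (Real.one_le_exp ?_)
      nlinarith
  calc smoothStep c z ≤
      ∫ r, Real.exp (s * (2 / 3 - z)) * Real.exp (-(c * s) * r) ∂gaussianReal 0 1 :=
        integral_mono (integrable_softStep_comp _ (by fun_prop))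
          ((integrable_exp_mul_gaussianReal _).const_mul _) hexp
    _ = Real.exp (s * (2 / 3 - z) + c ^ 2 * s ^ 2 / 2) := by
        rw [integral_const_mul, integral_exp_mul_gaussianReal, neg_sq, mul_pow, Real.exp_add]
    _ ≤ Real.exp (s * (2 / 3 - 1) + σ ^ 2 * s ^ 2 / 2) := by gcongr
    _ = Real.exp (-(1 / (18 * σ ^ 2))) := by
        rw [hs]
        congr 1
        field_simp
        norm_num

end smoothStep

section empiricalLoss

variable {E X : Type*} [NormedAddCommGroup E] [InnerProductSpace ℝ E] {n : ℕ}

/-- Fraction of the sample `S` on which the halfspace `w` has margin at most `γ`. The features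
`u p` carry the sign of the label, so that the margin at `p` is `⟪w, u p⟫`. -/
def empiricalLoss (u : X → E) (γ : ℝ) (w : E) (S : Fin n → X) : ℝ :=
  (Nat.card {i : Fin n // ⟪w, u (S i)⟫ ≤ γ} : ℝ) / n

theorem empiricalLoss_le_one (u : X → E) (γ : ℝ) (w : E) (S : Fin n → X) :
    empiricalLoss u γ w S ≤ 1 := by
  refine div_le_one_of_le₀ ?_ (Nat.cast_nonneg n)
  have hcard := Finite.card_subtype_le fun i : Fin n => ⟪w, u (S i)⟫ ≤ γ
  rw [Nat.card_fin] at hcard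
  exact_mod_cast hcard

theorem empiricalLoss_inv_smul (u : X → E) {γ : ℝ} (hγ : 0 < γ) (w : E) (S : Fin n → X) :
    empiricalLoss u 1 (γ⁻¹ • w) S = empiricalLoss u γ w S := by
  simp only [empiricalLoss, real_inner_smul_left, inv_mul_le_one₀ hγ]

theorem sum_ite_inner_le (hn : n ≠ 0) (u : X → E) (γ : ℝ) (w : E) (S : Fin n → X) (c : ℝ) :
    ∑ k, (if ⟪w, u (S k)⟫ ≤ γ then c else 0) = n * (c * empiricalLoss u γ w S) := by
  classical
  rw [empiricalLoss, Nat.card_eq_fintype_card, Fintype.card_subtype, ← Finset.sum_filter,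
    Finset.sum_const, nsmul_eq_mul]
  field_simp

end empiricalLoss

section chaining

/-- Standard deviation of the margin at level `j` of the chain started at level `m`, which serves
the halfspaces of empirical loss about `2⁻ᵐ`. -/
def levelStd (m j : ℕ) : ℝ := (√(288 * (((m : ℝ) + 1) * 4 ^ j)))⁻¹

/-- Bound on how much smoothing at level `j` changes the step at margins outside `(0, 1)`. -/
def levelTail (m j : ℕ) : ℝ := Real.exp (-(4 * (((m : ℝ) + 1) * 4 ^ j)))

theorem levelStd_pos (m j : ℕ) : 0 < levelStd m j := by unfold levelStd; positivity

theorem levelTail_pos (m j : ℕ) : 0 < levelTail m j := Real.exp_pos _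

theorem levelStd_sq (m j : ℕ) : levelStd m j ^ 2 = (288 * (((m : ℝ) + 1) * 4 ^ j))⁻¹ := by
  rw [levelStd, inv_pow, Real.sq_sqrt (by positivity)]

theorem two_mul_levelStd_succ (m j : ℕ) : 2 * levelStd m (j + 1) = levelStd m j := by
  refine (pow_left_inj₀ (mul_pos two_pos (levelStd_pos m _)).le (levelStd_pos m j).le
    two_ne_zero).1 ?_
  rw [mul_pow, levelStd_sq, levelStd_sq, pow_succ]
  field_simp
  norm_num
  ring

theorem levelStd_sq_le (m j : ℕ) : levelStd m j ^ 2 ≤ (288 : ℝ)⁻¹ * (4 ^ j)⁻¹ := by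
  rw [levelStd_sq, ← mul_inv]
  refine inv_anti₀ (by positivity) ?_
  have : (0 : ℝ) ≤ m * 4 ^ j := by positivity
  linarith

theorem levelTail_eq (m j : ℕ) :
    levelTail m j = Real.exp (-(1 / (18 * (2 * levelStd m j) ^ 2))) := by
  rw [mul_pow, levelStd_sq, levelTail]
  congr 2
  field_simp
  norm_num

theorem smoothStep_le_levelTail {m j : ℕ} {c z : ℝ} (hc0 : 0 ≤ c) (hc : c ≤ 2 * levelStd m j)
    (hz : 1 ≤ z) : smoothStep c z ≤ levelTail m j := by
  rw [levelTail_eq]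
  exact smoothStep_le_of_one_le (mul_pos two_pos (levelStd_pos m j))
    (pow_le_pow_left₀ hc0 hc 2) hz

theorem one_sub_smoothStep_le_levelTail {m j : ℕ} {c z : ℝ} (hc0 : 0 ≤ c)
    (hc : c ≤ 2 * levelStd m j) (hz : z ≤ 0) : 1 - smoothStep c z ≤ levelTail m j := by
  rw [one_sub_smoothStep]
  exact smoothStep_le_levelTail hc0 hc (by linarith)

/-- Link `j` of the chain, evaluated at a margin that the posterior has already blurred at
scale `c`. Averaging over that blur gives `smoothLink`; the scale `√3 * c` makes the correction
term blurred at scale `2 * c` in total. -/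
def chainLink : ℕ → ℝ → ℝ → ℝ
  | 0, _, a => softStep a
  | _ + 1, c, a => softStep a - smoothStep (√3 * c) a

/-- The increments of the telescoping sum over the scales `c = σ_j`, where `2 * σ_{j+1} = σ_j`. -/
def smoothLink : ℕ → ℝ → ℝ → ℝ
  | 0, c, a => smoothStep c a
  | _ + 1, c, a => smoothStep c a - smoothStep (2 * c) a

theorem measurable_chainLink : ∀ j, Measurable fun q : ℝ × ℝ => chainLink j q.1 q.2
  | 0 => measurable_softStep.comp measurable_snd
  | _ + 1 => (measurable_softStep.comp measurable_snd).sub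
      (measurable_smoothStep.comp (f := fun q : ℝ × ℝ => (√3 * q.1, q.2)) (by fun_prop))

theorem measurable_smoothLink : ∀ j, Measurable fun q : ℝ × ℝ => smoothLink j q.1 q.2
  | 0 => measurable_smoothStep
  | _ + 1 => measurable_smoothStep.sub
      (measurable_smoothStep.comp (f := fun q : ℝ × ℝ => (2 * q.1, q.2)) (by fun_prop))

theorem abs_smoothLink_le_one (j : ℕ) (c a : ℝ) : |smoothLink j c a| ≤ 1 := by
  have := smoothStep_nonneg c a
  have := smoothStep_le_one c a
  have := smoothStep_nonneg (2 * c) a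
  have := smoothStep_le_one (2 * c) a
  rw [abs_le]
  cases j <;> unfold smoothLink <;> constructor <;> linarith

theorem abs_chainLink_le {m : ℕ} {c : ℝ} (hc0 : 0 ≤ c) (a : ℝ) :
    ∀ j, c ≤ levelStd m j → |chainLink j c a| ≤ ((4 : ℝ) ^ j)⁻¹
  | 0, _ => by simpa [chainLink] using abs_softStep_le_one a
  | j + 1, hc => by
    refine (abs_softStep_sub_smoothStep_le _ _).trans ?_
    rw [mul_pow, Real.sq_sqrt (by norm_num)]
    have hc2 := pow_le_pow_left₀ hc0 hc 2
    have hlevel := levelStd_sq_le m (j + 1)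
    have : (0 : ℝ) < (4 ^ (j + 1))⁻¹ := by positivity
    linarith

theorem sq_chainLink_le {m j : ℕ} {c : ℝ} (hc0 : 0 ≤ c) (hc : c ≤ levelStd m j) (a : ℝ) :
    chainLink j c a ^ 2 ≤ ((16 : ℝ) ^ j)⁻¹ := by
  calc chainLink j c a ^ 2 = |chainLink j c a| ^ 2 := (sq_abs _).symm
    _ ≤ (((4 : ℝ) ^ j)⁻¹) ^ 2 := pow_le_pow_left₀ (abs_nonneg _) (abs_chainLink_le hc0 a j hc) 2
    _ = ((16 : ℝ) ^ j)⁻¹ := by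
        rw [inv_pow, ← pow_mul, mul_comm, pow_mul]
        norm_num

theorem sq_chainLink_le_add (j : ℕ) (c a : ℝ) :
    chainLink j c a ^ 2 ≤ softStep a + smoothStep (√3 * c) a := by
  have h0 := softStep_nonneg a
  have h1 := softStep_le_one a
  have h2 := smoothStep_nonneg (√3 * c) a
  have h3 := smoothStep_le_one (√3 * c) a
  cases j <;> unfold chainLink
  · nlinarith
  · nlinarith [mul_nonneg h0 h2]

theorem integral_smoothStep_sqrt_three {c : ℝ} (hc : 0 ≤ c) (z : ℝ) :
    ∫ r, smoothStep (√3 * c) (z + c * r) ∂gaussianReal 0 1 = smoothStep (2 * c) z := by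
  rw [integral_smoothStep, mul_pow, Real.sq_sqrt (by norm_num),
    show c ^ 2 + 3 * c ^ 2 = (2 * c) ^ 2 by ring, Real.sqrt_sq (by linarith)]

theorem integral_chainLink {c : ℝ} (hc : 0 ≤ c) (z : ℝ) :
    ∀ j, ∫ r, chainLink j c (z + c * r) ∂gaussianReal 0 1 = smoothLink j c z
  | 0 => rfl
  | _ + 1 => by
    unfold chainLink smoothLink
    rw [integral_sub (integrable_softStep_comp _ (by fun_prop))
      (integrable_smoothStep_comp _ (by fun_prop) (by fun_prop)),
      integral_smoothStep_sqrt_three hc]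
    rfl

theorem integral_sq_chainLink_le_of_one_le {m j : ℕ} {c z : ℝ} (hc0 : 0 ≤ c)
    (hc : c ≤ levelStd m j) (hz : 1 ≤ z) :
    ∫ r, chainLink j c (z + c * r) ^ 2 ∂gaussianReal 0 1 ≤ 2 * levelTail m j := by
  have hsoft : Integrable (fun r => softStep (z + c * r)) (gaussianReal 0 1) :=
    integrable_softStep_comp _ (by fun_prop)
  have hsmooth : Integrable (fun r => smoothStep (√3 * c) (z + c * r)) (gaussianReal 0 1) :=
    integrable_smoothStep_comp _ (by fun_prop) (by fun_prop)
  calc ∫ r, chainLink j c (z + c * r) ^ 2 ∂gaussianReal 0 1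
      ≤ ∫ r, (softStep (z + c * r) + smoothStep (√3 * c) (z + c * r)) ∂gaussianReal 0 1 :=
        integral_mono_of_nonneg (Filter.Eventually.of_forall fun _ => sq_nonneg _)
          (hsoft.add hsmooth) (Filter.Eventually.of_forall fun _ => sq_chainLink_le_add _ _ _)
    _ = smoothStep c z + smoothStep (2 * c) z := by
        rw [integral_add hsoft hsmooth, integral_smoothStep_sqrt_three hc0]
        rfl
    _ ≤ levelTail m j + levelTail m j := by
        gcongr <;> exact smoothStep_le_levelTail (by linarith) (by linarith) hz
    _ = 2 * levelTail m j := (two_mul _).symm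

theorem integral_sq_chainLink_le {m j : ℕ} {c : ℝ} (hc0 : 0 ≤ c) (hc : c ≤ levelStd m j)
    (z : ℝ) :
    ∫ r, chainLink j c (z + c * r) ^ 2 ∂gaussianReal 0 1 ≤
      (if z ≤ 1 then ((16 : ℝ) ^ j)⁻¹ else 0) + 2 * levelTail m j := by
  have htail := levelTail_pos m j
  split_ifs with hz
  · calc _ ≤ ∫ _, ((16 : ℝ) ^ j)⁻¹ ∂gaussianReal 0 1 :=
          integral_mono_of_nonneg (Filter.Eventually.of_forall fun _ => sq_nonneg _)
            (integrable_const _) (Filter.Eventually.of_forall fun _ => sq_chainLink_le hc0 hc _)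
      _ ≤ ((16 : ℝ) ^ j)⁻¹ + 2 * levelTail m j := by simpa using htail.le
  · rw [zero_add]
    exact integral_sq_chainLink_le_of_one_le hc0 hc (not_le.1 hz).le

theorem sum_smoothLink (m : ℕ) (b z : ℝ) (J : ℕ) :
    ∑ j ∈ Finset.range (J + 1), smoothLink j (levelStd m j * b) z =
      smoothStep (levelStd m J * b) z := by
  induction J with
  | zero => simp [smoothLink]
  | succ J ih =>
    rw [Finset.sum_range_succ, ih, smoothLink, ← mul_assoc, two_mul_levelStd_succ]
    ring

end chaining

section level

variable {E X : Type*} [NormedAddCommGroup E] [InnerProductSpace ℝ E] [FiniteDimensional ℝ E]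
  [MeasurableSpace E] [BorelSpace E] {u : X → E} {n : ℕ}

theorem integral_comp_mul_inner_map_add_right_stdGaussian {σ : ℝ} (hσ : σ ≠ 0) (w x : E)
    {F : ℝ → ℝ} (hF : Measurable F) :
    ∫ v, F (σ * ⟪v, x⟫) ∂(stdGaussian E).map (· + σ⁻¹ • w) =
      ∫ r, F (⟪w, x⟫ + σ * ‖x‖ * r) ∂gaussianReal 0 1 := by
  have hFσ : Measurable fun t => F (σ * t) := hF.comp (by fun_prop)
  rw [integral_comp_inner_map_add_right_stdGaussian _ _ hFσ]
  simp only [real_inner_smul_left, mul_add, mul_inv_cancel_left₀ hσ, mul_assoc]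

theorem integral_chainLink_posterior {σ : ℝ} (hσ : 0 < σ) (j : ℕ) (w x : E) :
    ∫ v, chainLink j (σ * ‖x‖) (σ * ⟪v, x⟫) ∂(stdGaussian E).map (· + σ⁻¹ • w) =
      smoothLink j (σ * ‖x‖) ⟪w, x⟫ := by
  rw [integral_comp_mul_inner_map_add_right_stdGaussian hσ.ne' w x
    (F := chainLink j (σ * ‖x‖)) ((measurable_chainLink j).comp measurable_prodMk_left)]
  exact integral_chainLink (by positivity) _ j

theorem integral_sq_chainLink_posterior_le (m j : ℕ) (w : E) {x : E} (hx : ‖x‖ ≤ 1) :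
    ∫ v, chainLink j (levelStd m j * ‖x‖) (levelStd m j * ⟪v, x⟫) ^ 2
        ∂(stdGaussian E).map (· + (levelStd m j)⁻¹ • w) ≤
      (if ⟪w, x⟫ ≤ 1 then ((16 : ℝ) ^ j)⁻¹ else 0) + 2 * levelTail m j := by
  have hσ := levelStd_pos m j
  rw [integral_comp_mul_inner_map_add_right_stdGaussian hσ.ne' w x
    (F := fun t => chainLink j (levelStd m j * ‖x‖) t ^ 2)
    (((measurable_chainLink j).comp measurable_prodMk_left).pow_const 2)]
  exact integral_sq_chainLink_le (by positivity) (mul_le_of_le_one_right hσ.le hx) _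

theorem sum_integral_sq_chainLink_posterior_le (hn : n ≠ 0) (hu1 : ∀ p, ‖u p‖ ≤ 1) (m j : ℕ)
    (w : E) (S : Fin n → X) :
    ∑ k, ∫ v, chainLink j (levelStd m j * ‖u (S k)‖) (levelStd m j * ⟪v, u (S k)⟫) ^ 2
        ∂(stdGaussian E).map (· + (levelStd m j)⁻¹ • w) ≤
      n * (((16 : ℝ) ^ j)⁻¹ * empiricalLoss u 1 w S + 2 * levelTail m j) := by
  refine (Finset.sum_le_sum fun k _ =>
    integral_sq_chainLink_posterior_le m j w (hu1 (S k))).trans_eq ?_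
  rw [Finset.sum_add_distrib, sum_ite_inner_le hn, Finset.sum_const, Finset.card_univ,
    Fintype.card_fin, nsmul_eq_mul, ← mul_add]

theorem klDiv_posterior_le {σ R : ℝ} {w : E} (hw : ‖w‖ ≤ R) :
    (klDiv ((stdGaussian E).map (· + σ⁻¹ • w)) (stdGaussian E)).toReal ≤ R ^ 2 / (2 * σ ^ 2) := by
  rw [klDiv_map_add_right_stdGaussian, ENNReal.toReal_ofReal (by positivity), norm_smul, mul_pow,
    norm_inv, inv_pow, Real.norm_eq_abs, sq_abs]
  calc (σ ^ 2)⁻¹ * ‖w‖ ^ 2 / 2 = ‖w‖ ^ 2 / (2 * σ ^ 2) := by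
        rw [inv_mul_eq_div, div_div, mul_comm]
    _ ≤ R ^ 2 / (2 * σ ^ 2) := by gcongr

variable [MeasurableSpace X]

/-- Excess of the population mean of the `j`-th increment over its empirical mean, both multiplied
by `n`, for the halfspace `w` normalised to margin `1`. -/
def levelExcess (μ : Measure X) (u : X → E) (m j : ℕ) (w : E) (S : Fin n → X) : ℝ :=
  n * ∫ p, smoothLink j (levelStd m j * ‖u p‖) ⟪w, u p⟫ ∂μ -
    ∑ k, smoothLink j (levelStd m j * ‖u (S k)‖) ⟪w, u (S k)⟫

/-- Bound on the level excess of all halfspaces of norm at most `R` and empirical loss `q` that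
holds at inverse temperature `l` outside an event of probability `exp (-B)`. -/
def levelBound (n m j : ℕ) (R B l q : ℝ) : ℝ :=
  l * (n * (((16 : ℝ) ^ j)⁻¹ * q + 2 * levelTail m j)) + (R ^ 2 / (2 * levelStd m j ^ 2) + B) / l

theorem measure_exists_levelBound_lt_levelExcess_le (μ : Measure X) [IsProbabilityMeasure μ]
    (hn : n ≠ 0) (hu : Measurable u) (hu1 : ∀ p, ‖u p‖ ≤ 1) (m j : ℕ) (R B : ℝ) {l : ℝ}
    (hl0 : 0 < l) (hl : l ≤ 4 ^ j / 2) :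
    (Measure.pi fun _ : Fin n => μ) {S | ∃ w, ‖w‖ ≤ R ∧
      levelBound n m j R B l (empiricalLoss u 1 w S) < levelExcess μ u m j w S} ≤
      ENNReal.ofReal (Real.exp (-B)) := by
  set σ := levelStd m j
  have hσ : 0 < σ := levelStd_pos m j
  have hmeas : Measurable fun q : E × X => l * chainLink j (σ * ‖u q.2‖) (σ * ⟪q.1, u q.2⟫) :=
    ((measurable_chainLink j).comp (f := fun q : E × X => (σ * ‖u q.2‖, σ * ⟪q.1, u q.2⟫))
      (by fun_prop)).const_mul l
  have hhalf : ∀ (v : E) p, |l * chainLink j (σ * ‖u p‖) (σ * ⟪v, u p⟫)| ≤ 1 / 2 := fun v p => by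
    rw [abs_mul, abs_of_pos hl0]
    calc _ ≤ 4 ^ j / 2 * ((4 : ℝ) ^ j)⁻¹ :=
          mul_le_mul hl (abs_chainLink_le (by positivity) _ j
            (mul_le_of_le_one_right hσ.le (hu1 p))) (abs_nonneg _) (by positivity)
      _ = 1 / 2 := by field_simp
  refine (measure_mono ?_).trans
    (measure_exists_posterior_selfNormalized_le (stdGaussian E) hmeas hhalf n B)
  rintro S ⟨w, hw, hlt⟩
  refine ⟨(stdGaussian E).map (· + σ⁻¹ • w), Measure.isProbabilityMeasure_map (by fun_prop),
    by rw [klDiv_map_add_right_stdGaussian]; exact ENNReal.ofReal_ne_top, ?_⟩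
  simp only [mul_pow, integral_const_mul, integral_chainLink_posterior hσ, ← Finset.mul_sum]
  have hkl := klDiv_posterior_le (σ := σ) hw
  have hsq := mul_le_mul_of_nonneg_left (sum_integral_sq_chainLink_posterior_le hn hu1 m j w S)
    (sq_nonneg l)
  have hscaled := mul_lt_mul_of_pos_left hlt hl0
  rw [levelBound, levelExcess, mul_add, mul_div_cancel₀ _ hl0.ne'] at hscaled
  linarith

end level

section budget

theorem one_le_log_exp_one_div {x : ℝ} (h0 : 0 < x) (h1 : x ≤ 1) :
    1 ≤ Real.log (Real.exp 1 / x) := by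
  rw [Real.log_div (Real.exp_pos 1).ne' h0.ne', Real.log_exp]
  linarith [Real.log_nonpos h0.le h1]

theorem two_pow_le_exp (k : ℕ) : (2 : ℝ) ^ k ≤ Real.exp k := by
  rw [← mul_one (k : ℝ), Real.exp_nat_mul]
  exact pow_le_pow_left₀ two_pos.le (by linarith [Real.add_one_le_exp (1 : ℝ)]) k

theorem add_one_le_four_pow (k : ℕ) : (k : ℝ) + 1 ≤ 4 ^ k := by
  exact_mod_cast Nat.lt_pow_self (n := k) (by norm_num : 1 < 4)

theorem levelTail_le (m j : ℕ) : levelTail m j ≤ (2 ^ m)⁻¹ * (16 ^ j)⁻¹ := by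
  have hexponent : ((m + 4 * j : ℕ) : ℝ) ≤ 4 * (((m : ℝ) + 1) * 4 ^ j) := by
    have hlevel : ((m : ℝ) + 1) * (j + 1) ≤ ((m : ℝ) + 1) * 4 ^ j := by
      gcongr
      exact add_one_le_four_pow j
    have : (0 : ℝ) ≤ m * j := by positivity
    push_cast
    linarith [Nat.cast_nonneg (α := ℝ) m]
  calc levelTail m j = (Real.exp (4 * (((m : ℝ) + 1) * 4 ^ j)))⁻¹ := Real.exp_neg _
    _ ≤ ((2 : ℝ) ^ (m + 4 * j))⁻¹ := inv_anti₀ (by positivity)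
        ((two_pow_le_exp _).trans (Real.exp_le_exp.2 hexponent))
    _ = (2 ^ m)⁻¹ * (16 ^ j)⁻¹ := by
        rw [pow_add, pow_mul, mul_inv]
        norm_num

/-- Cost of level `0` for the halfspaces of norm at most `2 ^ (i + 1)` and empirical loss at most
`2⁻ᵐ`: the divergence `144 * 4 ^ (i + 1) * (m + 1)` of the posteriors, and the weight of `(i, m)` in
the union bound. At level `j` the cost is `4 ^ j` times as large. -/
def chainCost (i m : ℕ) : ℝ := 147 * (4 ^ (i + 1) * (m + 1))

/-- Total error of the chain in the variance-limited regime, up to a constant factor. -/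
def chainError (n : ℕ) (δ : ℝ) (i m : ℕ) : ℝ :=
  √((chainCost i m + Real.log (Real.exp 1 / δ)) / n * (2 ^ m)⁻¹)

/-- Inverse temperature at level `j`. The first entry of the minimum is the largest value allowed
by `|chainLink| ≤ 4⁻ʲ`; the second balances the variance against the cost at level `0` and
grows like `8 ^ j`, so that both contributions decay geometrically in `j`. -/
def chainTemp (n : ℕ) (δ : ℝ) (i m j : ℕ) : ℝ :=
  min (4 ^ j / 2) (8 ^ j * (2 ^ m * chainError n δ i m))

/-- Minus the logarithm of the failure probability granted to level `j`. -/
def chainConf (δ : ℝ) (i m j : ℕ) : ℝ := Real.log (2 ^ (i + 1) * 2 ^ (m + 1) * 2 ^ (j + 1) / δ)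

theorem chainCost_pos (i m : ℕ) : 0 < chainCost i m := by unfold chainCost; positivity

theorem chainError_nonneg (n : ℕ) (δ : ℝ) (i m : ℕ) : 0 ≤ chainError n δ i m := Real.sqrt_nonneg _

theorem entropy_eq (i m j : ℕ) :
    ((2 : ℝ) ^ (i + 1)) ^ 2 / (2 * levelStd m j ^ 2) = 144 * (4 ^ (i + 1) * (m + 1)) * 4 ^ j := by
  rw [levelStd_sq, ← pow_mul, mul_comm (i + 1) 2, pow_mul]
  norm_num
  field_simp
  norm_num

variable {n : ℕ} {δ q : ℝ}

theorem chainConf_le (hδ0 : 0 < δ) (i m j : ℕ) :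
    chainConf δ i m j ≤ 3 * (4 ^ (i + 1) * (m + 1)) * 4 ^ j + Real.log (Real.exp 1 / δ) := by
  have hlog : chainConf δ i m j ≤ (i + 1) + (m + 1) + (j + 1) - Real.log δ := by
    have h := Real.log_le_log (by positivity) (two_pow_le_exp (i + 1 + (m + 1) + (j + 1)))
    rw [Real.log_exp] at h
    rw [chainConf, Real.log_div (by positivity) hδ0.ne', ← pow_add, ← pow_add]
    push_cast at h
    linarith
  have hi : (i : ℝ) + 1 ≤ 4 ^ (i + 1) := by
    have := add_one_le_four_pow (i + 1)
    push_cast at this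
    linarith
  have hi1 : (1 : ℝ) ≤ 4 ^ (i + 1) := one_le_pow₀ (by norm_num)
  have hj1 : (1 : ℝ) ≤ 4 ^ j := one_le_pow₀ (by norm_num)
  have hm1 : (1 : ℝ) ≤ m + 1 := by linarith [Nat.cast_nonneg (α := ℝ) m]
  have h1 : (i : ℝ) + 1 ≤ 4 ^ (i + 1) * (m + 1) * 4 ^ j := by
    calc (i : ℝ) + 1 ≤ 4 ^ (i + 1) * 1 * 1 := by linarith
      _ ≤ _ := by gcongr
  have h2 : (m : ℝ) + 1 ≤ 4 ^ (i + 1) * (m + 1) * 4 ^ j := by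
    calc (m : ℝ) + 1 = 1 * (m + 1) * 1 := by ring
      _ ≤ _ := by gcongr
  have h3 : (j : ℝ) + 1 ≤ 4 ^ (i + 1) * (m + 1) * 4 ^ j := by
    calc (j : ℝ) + 1 ≤ 1 * 1 * 4 ^ j := by linarith [add_one_le_four_pow j]
      _ ≤ _ := by gcongr
  rw [Real.log_div (Real.exp_pos 1).ne' hδ0.ne', Real.log_exp]
  linarith

theorem entropy_add_chainConf_le (hδ0 : 0 < δ) (i m j : ℕ) :
    ((2 : ℝ) ^ (i + 1)) ^ 2 / (2 * levelStd m j ^ 2) + chainConf δ i m j ≤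
      chainCost i m * 4 ^ j + Real.log (Real.exp 1 / δ) := by
  rw [entropy_eq, chainCost]
  linarith [chainConf_le hδ0 i m j]

theorem chainError_pos (hn : n ≠ 0) (hδ0 : 0 < δ) (hδ1 : δ ≤ 1) (i m : ℕ) :
    0 < chainError n δ i m := by
  have := one_le_log_exp_one_div hδ0 hδ1
  have := chainCost_pos i m
  unfold chainError
  positivity

theorem chainTemp_pos (hn : n ≠ 0) (hδ0 : 0 < δ) (hδ1 : δ ≤ 1) (i m j : ℕ) :
    0 < chainTemp n δ i m j := by
  have := chainError_pos hn hδ0 hδ1 i m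
  exact lt_min (by positivity) (by positivity)

theorem inv_chainTemp_le (n : ℕ) (δ : ℝ) (i m j : ℕ) :
    (chainTemp n δ i m j)⁻¹ ≤ 2 / 4 ^ j + (8 ^ j * (2 ^ m * chainError n δ i m))⁻¹ := by
  have := chainError_nonneg n δ i m
  rcases min_choice ((4 : ℝ) ^ j / 2) (8 ^ j * (2 ^ m * chainError n δ i m)) with h | h
  · rw [chainTemp, h, inv_div]
    exact le_add_of_nonneg_right (by positivity)
  · rw [chainTemp, h]
    exact le_add_of_nonneg_left (by positivity)

theorem chainTemp_mul_variance_le (n : ℕ) (δ : ℝ) (i m j : ℕ) (hq : q ≤ (2 ^ m)⁻¹) :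
    chainTemp n δ i m j * (n * (((16 : ℝ) ^ j)⁻¹ * q + 2 * levelTail m j)) ≤
      3 * n * chainError n δ i m * (2 ^ j)⁻¹ := by
  have hε := chainError_nonneg n δ i m
  have hl : 0 ≤ chainTemp n δ i m j := le_min (by positivity) (by positivity)
  have htemp : chainTemp n δ i m j ≤ 8 ^ j * (2 ^ m * chainError n δ i m) := min_le_right _ _
  have hvar : ((16 : ℝ) ^ j)⁻¹ * q + 2 * levelTail m j ≤ 3 * ((2 ^ m)⁻¹ * (16 ^ j)⁻¹) := by
    have := levelTail_le m j
    have := mul_le_mul_of_nonneg_left hq (show (0 : ℝ) ≤ (16 ^ j)⁻¹ by positivity)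
    linarith
  have h16 : (16 : ℝ) ^ j = 8 ^ j * 2 ^ j := by rw [← mul_pow]; norm_num
  calc _ ≤ chainTemp n δ i m j * (n * (3 * ((2 ^ m)⁻¹ * (16 ^ j)⁻¹))) := by gcongr
    _ ≤ 8 ^ j * (2 ^ m * chainError n δ i m) * (n * (3 * ((2 ^ m)⁻¹ * (16 ^ j)⁻¹))) := by gcongr
    _ = _ := by
        rw [h16]
        field_simp

theorem chainError_balance (hn : n ≠ 0) (hδ0 : 0 < δ) (hδ1 : δ ≤ 1) (i m : ℕ) :
    (chainCost i m + Real.log (Real.exp 1 / δ)) / (2 ^ m * chainError n δ i m) =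
      n * chainError n δ i m := by
  have hε := chainError_pos hn hδ0 hδ1 i m
  have hL := one_le_log_exp_one_div hδ0 hδ1
  have hK := chainCost_pos i m
  have hsq : chainError n δ i m ^ 2 =
      (chainCost i m + Real.log (Real.exp 1 / δ)) / n * (2 ^ m)⁻¹ :=
    Real.sq_sqrt (by positivity)
  field_simp at hsq ⊢
  linarith

theorem cost_div_chainTemp_le (hn : n ≠ 0) (hδ0 : 0 < δ) (hδ1 : δ ≤ 1) (i m j : ℕ) :
    (chainCost i m * 4 ^ j + Real.log (Real.exp 1 / δ)) / chainTemp n δ i m j ≤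
      n * chainError n δ i m * (2 ^ j)⁻¹ + 2 * Real.log (Real.exp 1 / δ) * (2 ^ j)⁻¹ +
        2 * chainCost i m := by
  have hε := chainError_pos hn hδ0 hδ1 i m
  have hL := one_le_log_exp_one_div hδ0 hδ1
  have hK := chainCost_pos i m
  have hbalance := chainError_balance hn hδ0 hδ1 i m
  have hinv := inv_chainTemp_le n δ i m j
  set K := chainCost i m
  set L := Real.log (Real.exp 1 / δ)
  set a := 2 ^ m * chainError n δ i m
  have ha0 : 0 < a := by positivity
  have h8 : (8 : ℝ) ^ j = 2 ^ j * 4 ^ j := by rw [← mul_pow]; norm_num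
  have h41 : (1 : ℝ) ≤ 4 ^ j := one_le_pow₀ (by norm_num)
  calc (K * 4 ^ j + L) / chainTemp n δ i m j
      ≤ (K * 4 ^ j + L) * (2 / 4 ^ j + (8 ^ j * a)⁻¹) := by
        rw [div_eq_mul_inv]
        gcongr
    _ = (K * 4 ^ j + L * 1) * (8 ^ j * a)⁻¹ + 2 * L * (4 ^ j)⁻¹ + 2 * K := by
        field_simp
        ring
    _ ≤ (K * 4 ^ j + L * 4 ^ j) * (8 ^ j * a)⁻¹ + 2 * L * (2 ^ j)⁻¹ + 2 * K := by
        gcongr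
        norm_num
    _ = (K + L) / a * (2 ^ j)⁻¹ + 2 * L * (2 ^ j)⁻¹ + 2 * K := by
        rw [h8]
        field_simp
    _ = _ := by rw [hbalance]

theorem levelBound_le (hn : n ≠ 0) (hδ0 : 0 < δ) (hδ1 : δ ≤ 1) (i m j : ℕ)
    (hq : q ≤ (2 ^ m)⁻¹) :
    levelBound n m j (2 ^ (i + 1)) (chainConf δ i m j) (chainTemp n δ i m j) q ≤
      (4 * n * chainError n δ i m + 2 * Real.log (Real.exp 1 / δ)) * (2 ^ j)⁻¹ +
        2 * chainCost i m := by
  have hvar := chainTemp_mul_variance_le n δ i m j hq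
  have hcost := (div_le_div_of_nonneg_right (entropy_add_chainConf_le hδ0 i m j)
    (chainTemp_pos hn hδ0 hδ1 i m j).le).trans (cost_div_chainTemp_le hn hδ0 hδ1 i m j)
  rw [levelBound]
  linarith

theorem sum_inv_two_pow_le (J : ℕ) : ∑ j ∈ Finset.range J, ((2 : ℝ) ^ j)⁻¹ ≤ 2 := by
  simpa only [one_div, inv_pow] using sum_geometric_two_le J

theorem sum_levelBound_le (hn : n ≠ 0) (hδ0 : 0 < δ) (hδ1 : δ ≤ 1) (i m J : ℕ)
    (hq : q ≤ (2 ^ m)⁻¹) :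
    ∑ j ∈ Finset.range J,
        levelBound n m j (2 ^ (i + 1)) (chainConf δ i m j) (chainTemp n δ i m j) q ≤
      8 * n * chainError n δ i m + 4 * Real.log (Real.exp 1 / δ) + 2 * J * chainCost i m := by
  have hε := chainError_pos hn hδ0 hδ1 i m
  have hL := one_le_log_exp_one_div hδ0 hδ1
  refine (Finset.sum_le_sum fun j _ => levelBound_le hn hδ0 hδ1 i m j hq).trans ?_
  rw [Finset.sum_add_distrib, ← Finset.mul_sum, Finset.sum_const, Finset.card_range, nsmul_eq_mul]
  have hgeo := mul_le_mul_of_nonneg_left (sum_inv_two_pow_le J)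
    (show 0 ≤ 4 * n * chainError n δ i m + 2 * Real.log (Real.exp 1 / δ) by positivity)
  linarith

theorem exp_neg_chainConf (hδ0 : 0 < δ) (i m j : ℕ) :
    ENNReal.ofReal (Real.exp (-chainConf δ i m j)) =
      ENNReal.ofReal δ * 2⁻¹ ^ (i + 1) * 2⁻¹ ^ (m + 1) * 2⁻¹ ^ (j + 1) := by
  have hpow : ∀ k : ℕ, (2⁻¹ : ENNReal) ^ k = ENNReal.ofReal (2⁻¹ ^ k) := fun k => by
    rw [ENNReal.ofReal_pow (by positivity), ENNReal.ofReal_inv_of_pos two_pos,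
      ENNReal.ofReal_ofNat]
  rw [chainConf, Real.exp_neg, Real.exp_log (by positivity), hpow, hpow, hpow,
    ← ENNReal.ofReal_mul hδ0.le, ← ENNReal.ofReal_mul (by positivity),
    ← ENNReal.ofReal_mul (by positivity)]
  congr 1
  simp only [inv_pow]
  field_simp

theorem tsum_exp_neg_chainConf (hδ0 : 0 < δ) :
    ∑' (i : ℕ) (m : ℕ) (j : ℕ), ENNReal.ofReal (Real.exp (-chainConf δ i m j)) =
      ENNReal.ofReal δ := by
  have hone : ∑' k : ℕ, (2⁻¹ : ENNReal) ^ (k + 1) = 1 := by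
    rw [ENNReal.tsum_geometric_add_one, ENNReal.one_sub_inv_two, inv_inv]
    exact ENNReal.inv_mul_cancel two_ne_zero ENNReal.ofNat_ne_top
  simp only [exp_neg_chainConf hδ0, ENNReal.tsum_mul_left, hone, mul_one]

end budget

section generalization

variable {E X : Type*} [NormedAddCommGroup E] [InnerProductSpace ℝ E] {u : X → E} {n : ℕ}

theorem sum_smoothStep_le (hn : n ≠ 0) (hu1 : ∀ p, ‖u p‖ ≤ 1) (m J : ℕ) (w : E)
    (S : Fin n → X) :
    ∑ k, smoothStep (levelStd m J * ‖u (S k)‖) ⟪w, u (S k)⟫ ≤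
      n * (empiricalLoss u 1 w S + levelTail m J) := by
  have hσ := levelStd_pos m J
  have htail := levelTail_pos m J
  calc _ ≤ ∑ k, ((if ⟪w, u (S k)⟫ ≤ 1 then 1 else 0) + levelTail m J) := by
        refine Finset.sum_le_sum fun k _ => ?_
        split_ifs with hk
        · linarith [smoothStep_le_one (levelStd m J * ‖u (S k)‖) ⟪w, u (S k)⟫]
        · rw [zero_add]
          refine smoothStep_le_levelTail (by positivity) ?_ (not_le.1 hk).le
          linarith [mul_le_of_le_one_right hσ.le (hu1 (S k))]
    _ = _ := by
        rw [Finset.sum_add_distrib, sum_ite_inner_le hn, Finset.sum_const, Finset.card_univ,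
          Fintype.card_fin, nsmul_eq_mul, one_mul, mul_add]

variable [MeasurableSpace X]

/-- The event on which the level excesses of all halfspaces are within budget, simultaneously for
all radii `2 ^ (i + 1)`, loss levels `2⁻ᵐ` and scales `j`. -/
def IsChainGood (μ : Measure X) (u : X → E) (δ : ℝ) (S : Fin n → X) : Prop :=
  ∀ i m j w, ‖w‖ ≤ 2 ^ (i + 1) → levelExcess μ u m j w S ≤
    levelBound n m j (2 ^ (i + 1)) (chainConf δ i m j) (chainTemp n δ i m j)
      (empiricalLoss u 1 w S)

variable [MeasurableSpace E] [BorelSpace E]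

theorem ofReal_one_sub_le_measure_isChainGood [FiniteDimensional ℝ E] (μ : Measure X)
    [IsProbabilityMeasure μ] (hn : n ≠ 0) (hu : Measurable u) (hu1 : ∀ p, ‖u p‖ ≤ 1) {δ : ℝ}
    (hδ0 : 0 < δ) (hδ1 : δ ≤ 1) :
    ENNReal.ofReal (1 - δ) ≤ (Measure.pi fun _ : Fin n => μ) {S | IsChainGood μ u δ S} := by
  have hbad : (Measure.pi fun _ : Fin n => μ) {S | IsChainGood μ u δ S}ᶜ ≤ ENNReal.ofReal δ := by
    rw [← tsum_exp_neg_chainConf hδ0]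
    refine le_trans (measure_mono fun S hS => ?_) <| (measure_iUnion_le _).trans <|
      ENNReal.tsum_le_tsum fun i => (measure_iUnion_le _).trans <|
      ENNReal.tsum_le_tsum fun m => (measure_iUnion_le _).trans <|
      ENNReal.tsum_le_tsum fun j => measure_exists_levelBound_lt_levelExcess_le μ hn hu hu1 m j
        (2 ^ (i + 1)) (chainConf δ i m j) (chainTemp_pos hn hδ0 hδ1 i m j) (min_le_left _ _)
    simpa [IsChainGood] using hS
  rw [ENNReal.ofReal_sub _ hδ0.le, ENNReal.ofReal_one, tsub_le_iff_right]
  calc (1 : ENNReal) = (Measure.pi fun _ : Fin n => μ) Set.univ := measure_univ.symm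
    _ ≤ _ := measure_univ_le_add_compl {S | IsChainGood μ u δ S}
    _ ≤ _ := by gcongr

variable (μ : Measure X)

theorem integrable_smoothLink_inner [IsFiniteMeasure μ] (hu : Measurable u) (j : ℕ) (σ : ℝ)
    (w : E) :
    Integrable (fun p => smoothLink j (σ * ‖u p‖) ⟪w, u p⟫) μ :=
  Integrable.of_bound ((measurable_smoothLink j).comp
    (f := fun p => (σ * ‖u p‖, ⟪w, u p⟫)) (by fun_prop)).aestronglyMeasurable 1
    (Filter.Eventually.of_forall fun _ => abs_smoothLink_le_one _ _ _)

theorem sum_levelExcess [IsFiniteMeasure μ] (hu : Measurable u) (m J : ℕ) (w : E) (S : Fin n → X) :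
    ∑ j ∈ Finset.range (J + 1), levelExcess μ u m j w S =
      n * ∫ p, smoothStep (levelStd m J * ‖u p‖) ⟪w, u p⟫ ∂μ -
        ∑ k, smoothStep (levelStd m J * ‖u (S k)‖) ⟪w, u (S k)⟫ := by
  simp only [levelExcess, Finset.sum_sub_distrib, ← Finset.mul_sum]
  rw [← integral_finsetSum _ fun j _ => integrable_smoothLink_inner μ hu j _ w, Finset.sum_comm]
  simp only [sum_smoothLink]

variable [IsProbabilityMeasure μ]

theorem measureReal_inner_nonpos_le (hu : Measurable u) (hu1 : ∀ p, ‖u p‖ ≤ 1) (m J : ℕ) (w : E) :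
    μ.real {p | ⟪w, u p⟫ ≤ 0} ≤
      ∫ p, smoothStep (levelStd m J * ‖u p‖) ⟪w, u p⟫ ∂μ + levelTail m J := by
  have hσ := levelStd_pos m J
  have hint : Integrable (fun p => smoothStep (levelStd m J * ‖u p‖) ⟪w, u p⟫) μ :=
    integrable_smoothStep_comp μ (by fun_prop) (by fun_prop)
  have hset : MeasurableSet {p | ⟪w, u p⟫ ≤ 0} := measurableSet_le (by fun_prop) measurable_const
  calc μ.real {p | ⟪w, u p⟫ ≤ 0} = ∫ p, {p | ⟪w, u p⟫ ≤ 0}.indicator 1 p ∂μ :=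
        (integral_indicator_one hset).symm
    _ ≤ ∫ p, (smoothStep (levelStd m J * ‖u p‖) ⟪w, u p⟫ + levelTail m J) ∂μ := by
        refine integral_mono ((integrable_const (1 : ℝ)).indicator hset)
          (hint.add (integrable_const _)) (Set.indicator_le' (fun p hp => ?_) fun p _ => ?_)
        · have hc : levelStd m J * ‖u p‖ ≤ 2 * levelStd m J := by
            linarith [mul_le_of_le_one_right hσ.le (hu1 p)]
          have := one_sub_smoothStep_le_levelTail (by positivity) hc hp
          rw [Pi.one_apply]
          linarith
        · exact add_nonneg (smoothStep_nonneg _ _) (levelTail_pos m J).le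
    _ = _ := by rw [integral_add hint (integrable_const _)]; simp

theorem measureReal_le_of_isChainGood (hn : n ≠ 0) (hu : Measurable u) (hu1 : ∀ p, ‖u p‖ ≤ 1)
    {δ : ℝ} (hδ0 : 0 < δ) (hδ1 : δ ≤ 1) {S : Fin n → X} (hS : IsChainGood μ u δ S) {i m : ℕ}
    (J : ℕ) {w : E} (hw : ‖w‖ ≤ 2 ^ (i + 1)) (hq : empiricalLoss u 1 w S ≤ (2 ^ m)⁻¹) :
    μ.real {p | ⟪w, u p⟫ ≤ 0} ≤ empiricalLoss u 1 w S + (2 * levelTail m J +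
      8 * chainError n δ i m + 4 * (Real.log (Real.exp 1 / δ) / n) +
        2 * ((J + 1) * (chainCost i m / n))) := by
  have hexcess := (Finset.sum_le_sum fun j _ => hS i m j w hw).trans
    (sum_levelBound_le hn hδ0 hδ1 i m (J + 1) hq)
  rw [sum_levelExcess μ hu] at hexcess
  have hpopulation := mul_le_mul_of_nonneg_left (measureReal_inner_nonpos_le μ hu hu1 m J w)
    (Nat.cast_nonneg (α := ℝ) n)
  have hsample := sum_smoothStep_le hn hu1 m J w S
  refine le_of_mul_le_mul_left ?_ (show (0 : ℝ) < n by positivity)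
  calc _ ≤ n * empiricalLoss u 1 w S + (2 * n * levelTail m J + 8 * n * chainError n δ i m +
        4 * Real.log (Real.exp 1 / δ) + 2 * (J + 1) * chainCost i m) := by
        push_cast at hexcess
        linarith
    _ = _ := by field_simp

end generalization

section tuning

/-- The slack of the generalization bound at margin `γ` and empirical margin loss `q`, up to a
constant factor. At `q = 0` the square root vanishes, so the junk value of `log (e / 0)` is
harmless. -/
def marginSlack (n : ℕ) (δ γ q : ℝ) : ℝ :=
  √(q * (Real.log (Real.exp 1 / q) / (γ ^ 2 * n) + Real.log (Real.exp 1 / δ) / n)) +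
    Real.log (Real.exp 1 * γ ^ 2 * n) / (γ ^ 2 * n) + Real.log (Real.exp 1 / δ) / n

theorem exists_loss_level {q : ℝ} (hq1 : q ≤ 1) (N : ℕ) :
    ∃ m ≤ N, q ≤ (2 ^ m)⁻¹ ∧
      (m = N ∨ ((2 : ℝ) ^ m)⁻¹ ≤ 2 * q ∧ (m : ℝ) + 1 ≤ 2 * Real.log (Real.exp 1 / q)) := by
  rcases le_or_gt q (2 ^ N)⁻¹ with h | h
  · exact ⟨N, le_rfl, h, Or.inl rfl⟩
  have hq : 0 < q := lt_trans (by positivity) h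
  obtain ⟨m, hm1, hm2⟩ := exists_nat_pow_near ((one_le_inv₀ hq).2 hq1) one_lt_two
  have hN : (2 : ℝ) ^ m < 2 ^ N := hm1.trans_lt (inv_lt_of_inv_lt₀ (by positivity) h)
  have hmN : m < N := (pow_lt_pow_iff_right₀ one_lt_two).1 hN
  refine ⟨m, hmN.le, (le_inv_comm₀ (by positivity) hq).1 hm1, Or.inr ⟨?_, ?_⟩⟩
  · have h2 := inv_lt_of_inv_lt₀ hq hm2
    rw [pow_succ, mul_inv] at h2
    linarith
  · have h2 := Real.log_le_log (by positivity) hm1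
    rw [Real.log_pow, Real.log_inv] at h2
    rw [Real.log_div (Real.exp_pos 1).ne' hq.ne', Real.log_exp]
    nlinarith [Real.log_two_gt_d9, Nat.cast_nonneg (α := ℝ) m]

theorem exists_chain_length {m N : ℕ} (hmN : m ≤ N) :
    ∃ J : ℕ, ((J : ℝ) + 1) * (m + 1) ≤ 2 * N + 1 ∧ (N : ℝ) + 1 ≤ (m + 1) * 4 ^ J := by
  refine ⟨N / (m + 1), ?_, ?_⟩
  · have hdiv := Nat.div_mul_le_self N (m + 1)
    have : (N / (m + 1) + 1) * (m + 1) ≤ 2 * N + 1 := by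
      rw [add_mul]
      omega
    exact_mod_cast this
  · have hdiv : N + 1 ≤ (m + 1) * (N / (m + 1) + 1) := Nat.lt_mul_div_succ N (Nat.succ_pos m)
    calc (N : ℝ) + 1 ≤ ((m : ℝ) + 1) * ((N / (m + 1) : ℕ) + 1) := by exact_mod_cast hdiv
      _ ≤ _ := by
        gcongr
        exact add_one_le_four_pow _

theorem levelTail_le_one_div {N m J : ℕ} {M : ℝ} (hM : 0 < M) (hN : M ≤ 2 ^ (N + 1))
    (hJ : (N : ℝ) + 1 ≤ (m + 1) * 4 ^ J) : levelTail m J ≤ 1 / M := by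
  rw [levelTail, Real.exp_neg, one_div]
  refine inv_anti₀ hM (hN.trans ((two_pow_le_exp _).trans (Real.exp_le_exp.2 ?_)))
  push_cast
  linarith [Nat.cast_nonneg (α := ℝ) N]

theorem two_mul_add_one_le_log {N : ℕ} {M : ℝ} (hN : 2 ^ N ≤ M) :
    2 * (N : ℝ) + 1 ≤ 4 * Real.log (Real.exp 1 * M) := by
  have hM : 0 < M := lt_of_lt_of_le (by positivity) hN
  have hlog := Real.log_le_log (by positivity) hN
  rw [Real.log_pow] at hlog
  rw [Real.log_mul (Real.exp_pos 1).ne' hM.ne', Real.log_exp]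
  nlinarith [Real.log_two_gt_d9, Nat.cast_nonneg (α := ℝ) N]

theorem chainCost_div_le {γ : ℝ} {i : ℕ} (hi : 2 ^ i ≤ γ⁻¹) (n m : ℕ) :
    chainCost i m / n ≤ 588 * ((m + 1) / (γ ^ 2 * n)) := by
  have hpow : (4 : ℝ) ^ i ≤ (γ ^ 2)⁻¹ := by
    calc (4 : ℝ) ^ i = (2 ^ i) ^ 2 := by rw [← pow_mul, mul_comm, pow_mul]; norm_num
      _ ≤ (γ⁻¹) ^ 2 := pow_le_pow_left₀ (by positivity) hi 2
      _ = (γ ^ 2)⁻¹ := inv_pow _ _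
  calc chainCost i m / n = 588 * (4 ^ i * (m + 1) / n) := by
        rw [chainCost, pow_succ]
        ring
    _ ≤ 588 * ((γ ^ 2)⁻¹ * (m + 1) / n) := by gcongr
    _ = _ := by rw [div_mul_eq_div_div]; ring

variable {n : ℕ} {δ γ q : ℝ}

theorem chainError_le_of_level_eq (hδ0 : 0 < δ) (hδ1 : δ ≤ 1) {i N : ℕ} (hi : 2 ^ i ≤ γ⁻¹)
    (hN1 : 2 ^ N ≤ γ ^ 2 * n) (hN2 : γ ^ 2 * n ≤ 2 ^ (N + 1)) :
    chainError n δ i N ≤ 2400 * marginSlack n δ γ q := by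
  have hL := one_le_log_exp_one_div hδ0 hδ1
  have hK := (chainCost_pos i N).le
  have hcost := chainCost_div_le hi n N
  have hlog := two_mul_add_one_le_log hN1
  have hsqrt := Real.sqrt_nonneg
    (q * (Real.log (Real.exp 1 / q) / (γ ^ 2 * n) + Real.log (Real.exp 1 / δ) / n))
  rw [marginSlack, mul_assoc (Real.exp 1)]
  set M := γ ^ 2 * n
  set L := Real.log (Real.exp 1 / δ)
  set D := Real.log (Real.exp 1 * M)
  have hM : 0 < M := lt_of_lt_of_le (by positivity) hN1
  have hLn : 0 ≤ L / n := by positivity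
  have hNM : ((N : ℝ) + 1) / M ≤ 4 * (D / M) := by
    rw [← mul_div_assoc]
    gcongr
    linarith [Nat.cast_nonneg (α := ℝ) N]
  have hpow : ((2 : ℝ) ^ N)⁻¹ ≤ 8 * (D / M) := by
    calc ((2 : ℝ) ^ N)⁻¹ ≤ 2 / M := by
          rwa [inv_le_comm₀ (by positivity) (by positivity), inv_div, div_le_iff₀ two_pos,
            ← pow_succ]
      _ ≤ 8 * D / M := by gcongr; linarith [Nat.cast_nonneg (α := ℝ) N]
      _ = _ := mul_div_assoc _ _ _
  have hamgm : chainError n δ i N ≤ (chainCost i N + L) / n + (2 ^ N)⁻¹ := by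
    have ha : 0 ≤ (chainCost i N + L) / n := by positivity
    have hb : (0 : ℝ) ≤ (2 ^ N)⁻¹ := by positivity
    exact Real.sqrt_le_iff.2 ⟨add_nonneg ha hb, by nlinarith⟩
  rw [add_div] at hamgm
  linarith [show (0 : ℝ) < (2 ^ N)⁻¹ by positivity]

theorem chainError_le_of_level_lt (hδ0 : 0 < δ) (hδ1 : δ ≤ 1) {i m : ℕ} (hi : 2 ^ i ≤ γ⁻¹)
    (hM : 1 ≤ γ ^ 2 * n) (hpow : (2 ^ m)⁻¹ ≤ 2 * q)
    (hm : (m : ℝ) + 1 ≤ 2 * Real.log (Real.exp 1 / q)) :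
    chainError n δ i m ≤ 49 * marginSlack n δ γ q := by
  have hL := one_le_log_exp_one_div hδ0 hδ1
  have hcost := chainCost_div_le hi n m
  have hlog := two_mul_add_one_le_log (N := 0) (by simpa using hM)
  have hq : 0 ≤ q := by linarith [show (0 : ℝ) ≤ (2 ^ m)⁻¹ by positivity]
  rw [marginSlack, mul_assoc (Real.exp 1)]
  set M := γ ^ 2 * n
  set L := Real.log (Real.exp 1 / δ)
  set Lq := Real.log (Real.exp 1 / q)
  have hM0 : 0 < M := by linarith
  have hmM : ((m : ℝ) + 1) / M ≤ 2 * (Lq / M) := by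
    rw [← mul_div_assoc]
    gcongr
  have hLq : 0 ≤ Lq / M := by linarith [div_nonneg (add_nonneg m.cast_nonneg zero_le_one) hM0.le]
  have hLn : 0 ≤ L / n := by positivity
  have hDM : 0 ≤ Real.log (Real.exp 1 * M) / M := by
    have : 0 ≤ Real.log (Real.exp 1 * M) := by push_cast at hlog; linarith
    positivity
  calc chainError n δ i m ≤ √(49 ^ 2 * (q * (Lq / M + L / n))) := by
        refine Real.sqrt_le_sqrt ?_
        calc (chainCost i m + L) / n * (2 ^ m)⁻¹ ≤ (1176 * (Lq / M + L / n)) * (2 * q) := by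
              refine mul_le_mul ?_ hpow (by positivity) (by positivity)
              rw [add_div]
              linarith
          _ ≤ 49 ^ 2 * (q * (Lq / M + L / n)) := by
              linarith [show 0 ≤ q * (Lq / M + L / n) by positivity]
    _ = 49 * √(q * (Lq / M + L / n)) := by
        rw [Real.sqrt_mul (by positivity), Real.sqrt_sq (by norm_num)]
    _ ≤ _ := by linarith

theorem exists_chain_tuning (hδ0 : 0 < δ) (hδ1 : δ ≤ 1) {i : ℕ} (hi : 2 ^ i ≤ γ⁻¹)
    (hM : 1 ≤ γ ^ 2 * n) (hq1 : q ≤ 1) :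
    ∃ m J : ℕ, q ≤ (2 ^ m)⁻¹ ∧
      2 * levelTail m J + 8 * chainError n δ i m + 4 * (Real.log (Real.exp 1 / δ) / n) +
        2 * ((J + 1) * (chainCost i m / n)) ≤ 30000 * marginSlack n δ γ q := by
  have hM0 : 0 < γ ^ 2 * n := by linarith
  obtain ⟨N, hN1, hN2⟩ := exists_nat_pow_near hM one_lt_two
  obtain ⟨m, hmN, hqm, hm⟩ := exists_loss_level hq1 N
  obtain ⟨J, hJ1, hJ2⟩ := exists_chain_length hmN
  have herror : chainError n δ i m ≤ 2400 * marginSlack n δ γ q := by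
    rcases hm with rfl | ⟨hpow, hmq⟩
    · exact chainError_le_of_level_eq hδ0 hδ1 hi hN1 hN2.le
    · have hle := chainError_le_of_level_lt hδ0 hδ1 hi hM hpow hmq
      have hpos := chainError_nonneg n δ i m
      linarith
  refine ⟨m, J, hqm, ?_⟩
  have htail := levelTail_le_one_div hM0 hN2.le hJ2
  have hlog := two_mul_add_one_le_log hN1
  have hL := one_le_log_exp_one_div hδ0 hδ1
  have hsqrt := Real.sqrt_nonneg
    (q * (Real.log (Real.exp 1 / q) / (γ ^ 2 * n) + Real.log (Real.exp 1 / δ) / n))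
  have hcost : (J + 1) * (chainCost i m / n) ≤
      588 * (4 * Real.log (Real.exp 1 * (γ ^ 2 * n)) / (γ ^ 2 * n)) := by
    calc _ ≤ (J + 1) * (588 * ((m + 1) / (γ ^ 2 * n))) := by
          gcongr
          exact chainCost_div_le hi n m
      _ = 588 * ((J + 1) * (m + 1) / (γ ^ 2 * n)) := by ring
      _ ≤ _ := mul_le_mul_of_nonneg_left
          (div_le_div_of_nonneg_right (hJ1.trans hlog) hM0.le) (by norm_num)
  have hone : 1 / (γ ^ 2 * n) ≤ 4 * Real.log (Real.exp 1 * (γ ^ 2 * n)) / (γ ^ 2 * n) := by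
    gcongr
    linarith [Nat.cast_nonneg (α := ℝ) N]
  have hLn : 0 ≤ Real.log (Real.exp 1 / δ) / n := by positivity
  rw [mul_div_assoc] at hcost hone
  rw [marginSlack, mul_assoc (Real.exp 1)] at herror ⊢
  have hpos : 0 < 1 / (γ ^ 2 * n) := by positivity
  linarith

end tuning

section margin

variable {E X : Type*} [NormedAddCommGroup E] [InnerProductSpace ℝ E] [MeasurableSpace X]
  {n : ℕ} {u : X → E} {δ : ℝ}

/-- The margin bound holds on the sample `S`, with constant `30000`, for all halfspaces in the unit
ball and all margins at once. -/
def HasMarginBound (μ : Measure X) (u : X → E) (δ : ℝ) (S : Fin n → X) : Prop :=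
  ∀ w, ‖w‖ ≤ 1 → ∀ γ, (√n)⁻¹ ≤ γ → γ ≤ 1 → μ.real {p | ⟪w, u p⟫ ≤ 0} ≤
    empiricalLoss u γ w S + 30000 * marginSlack n δ γ (empiricalLoss u γ w S)

theorem measure_hasMarginBound_congr_ae (μ : Measure X) [IsProbabilityMeasure μ] {v : X → E}
    (huv : u =ᵐ[μ] v) :
    (Measure.pi fun _ : Fin n => μ) {S | HasMarginBound μ u δ S} =
      (Measure.pi fun _ : Fin n => μ) {S | HasMarginBound μ v δ S} := by
  have hsample : ∀ᵐ S ∂Measure.pi fun _ : Fin n => μ, ∀ k, u (S k) = v (S k) :=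
    ae_all_iff.2 fun k =>
      (Measure.tendsto_eval_ae_ae (μ := fun _ : Fin n => μ) (i := k)).eventually huv
  have hpopulation (w : E) : μ.real {p | ⟪w, u p⟫ ≤ 0} = μ.real {p | ⟪w, v p⟫ ≤ 0} :=
    measureReal_congr (huv.fun_comp (⟪w, ·⟫ ≤ 0))
  refine measure_congr ?_
  filter_upwards [hsample] with S hS
  refine propext ?_
  change HasMarginBound μ u δ S ↔ HasMarginBound μ v δ S
  simp only [HasMarginBound, empiricalLoss, hS, hpopulation]

variable [FiniteDimensional ℝ E] [MeasurableSpace E] [BorelSpace E]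

theorem ofReal_one_sub_le_measure_hasMarginBound (μ : Measure X) [IsProbabilityMeasure μ]
    (hn : n ≠ 0) (hu : Measurable u) (hu1 : ∀ p, ‖u p‖ ≤ 1) (hδ0 : 0 < δ) (hδ1 : δ ≤ 1) :
    ENNReal.ofReal (1 - δ) ≤ (Measure.pi fun _ : Fin n => μ) {S | HasMarginBound μ u δ S} := by
  refine (ofReal_one_sub_le_measure_isChainGood μ hn hu hu1 hδ0 hδ1).trans (measure_mono ?_)
  intro S hS w hw γ hγn hγ1
  have hn0 : (0 : ℝ) < n := by positivity
  have hγ : 0 < γ := lt_of_lt_of_le (by positivity) hγn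
  have hM : 1 ≤ γ ^ 2 * n := by
    have := pow_le_pow_left₀ (by positivity) hγn 2
    rwa [inv_pow, Real.sq_sqrt hn0.le, ← one_div, div_le_iff₀ hn0] at this
  obtain ⟨i, hi1, hi2⟩ := exists_nat_pow_near ((one_le_inv₀ hγ).2 hγ1) one_lt_two
  obtain ⟨m, J, hqm, hslack⟩ := exists_chain_tuning hδ0 hδ1 hi1 hM (empiricalLoss_le_one u γ w S)
  have hnorm : ‖γ⁻¹ • w‖ ≤ 2 ^ (i + 1) := by
    rw [norm_smul, norm_inv, Real.norm_of_nonneg hγ.le]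
    exact (mul_le_of_le_one_right (by positivity) hw).trans hi2.le
  have hbound := measureReal_le_of_isChainGood μ hn hu hu1 hδ0 hδ1 hS J hnorm
    (by rwa [empiricalLoss_inv_smul u hγ])
  simp only [empiricalLoss_inv_smul u hγ, real_inner_smul_left,
    inv_mul_le_iff₀ hγ, mul_zero] at hbound
  linarith

theorem statement0_general (μ : Measure X) [IsProbabilityMeasure μ] (hn : n ≠ 0)
    (hu : AEMeasurable u μ) (hu1 : ∀ᵐ p ∂μ, ‖u p‖ ≤ 1) (hδ0 : 0 < δ) (hδ1 : δ ≤ 1) :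
    ENNReal.ofReal (1 - δ) ≤ (Measure.pi fun _ : Fin n => μ) {S | HasMarginBound μ u δ S} := by
  let ball := {p | ‖hu.mk u p‖ ≤ 1}
  have hball : MeasurableSet ball := measurableSet_le hu.measurable_mk.norm measurable_const
  have htruncate : u =ᵐ[μ] ball.indicator (hu.mk u) := by
    filter_upwards [hu.ae_eq_mk, hu1] with p hp hp1
    rw [hp] at hp1 ⊢
    exact (Set.indicator_of_mem (show p ∈ ball from hp1) _).symm
  have hle (p) : ‖ball.indicator (hu.mk u) p‖ ≤ 1 := by
    by_cases hp : p ∈ ball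
    · rwa [Set.indicator_of_mem hp]
    · simp [Set.indicator_of_notMem hp]
  refine (ofReal_one_sub_le_measure_hasMarginBound μ hn (hu.measurable_mk.indicator hball) hle
    hδ0 hδ1).trans_eq ?_
  exact (measure_hasMarginBound_congr_ae μ htruncate).symm

end margin

section halfspace

variable {d n : ℕ}

/-- The feature vector with the sign of its label, `y • x`. -/
def signedFeature (p : (Fin d → ℝ) × ℝ) : EuclideanSpace ℝ (Fin d) := WithLp.toLp 2 (p.2 • p.1)

theorem measurable_signedFeature : Measurable (signedFeature (d := d)) :=
  (PiLp.continuous_toLp 2 _).measurable.comp (measurable_snd.smul measurable_fst)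

theorem inner_signedFeature (w : Fin d → ℝ) (p : (Fin d → ℝ) × ℝ) :
    ⟪WithLp.toLp 2 w, signedFeature p⟫ = p.2 * dotp w p.1 := by
  rw [signedFeature, PiLp.inner_apply, dotp, Finset.mul_sum]
  refine Finset.sum_congr rfl fun j _ => ?_
  simp [mul_left_comm, mul_comm]

theorem lossD_eq_measureReal (D : Measure ((Fin d → ℝ) × ℝ)) (γ : ℝ) (w : Fin d → ℝ) :
    lossD D γ w = D.real {p | ⟪WithLp.toLp 2 w, signedFeature p⟫ ≤ γ} := by
  simp only [inner_signedFeature]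
  rfl

theorem lossS_eq_empiricalLoss (S : Fin n → (Fin d → ℝ) × ℝ) (γ : ℝ) (w : Fin d → ℝ) :
    lossS S γ w = empiricalLoss signedFeature γ (WithLp.toLp 2 w) S := by
  simp only [empiricalLoss, inner_signedFeature]
  rfl

theorem norm_signedFeature_le_one {p : (Fin d → ℝ) × ℝ} (hx : ∑ j, p.1 j ^ 2 ≤ 1)
    (hy : p.2 = 1 ∨ p.2 = -1) : ‖signedFeature p‖ ≤ 1 := by
  have hsq : p.2 ^ 2 = 1 := sq_eq_one_iff.2 hy
  rw [signedFeature, EuclideanSpace.norm_eq, Real.sqrt_le_one]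
  simpa [mul_pow, hsq] using hx

theorem ae_norm_signedFeature_le_one (D : Measure ((Fin d → ℝ) × ℝ)) [IsProbabilityMeasure D]
    (hD : D {p | ∑ j, p.1 j ^ 2 ≤ 1 ∧ (p.2 = 1 ∨ p.2 = -1)} = 1) :
    ∀ᵐ p ∂D, ‖signedFeature p‖ ≤ 1 := by
  have hset : MeasurableSet {p : (Fin d → ℝ) × ℝ | ‖signedFeature p‖ ≤ 1} :=
    measurableSet_le measurable_signedFeature.norm measurable_const
  refine (prob_compl_eq_zero_iff hset).2 (le_antisymm prob_le_one (hD.ge.trans (measure_mono ?_)))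
  exact fun p hp => norm_signedFeature_le_one hp.1 hp.2

end halfspace

/-- Tight generalization bound for large-margin halfspaces
(Theorem 1.2 of the paper). -/
theorem statement0 : ∃ c : ℝ, 0 < c ∧
    ∀ (d n : ℕ), 1 ≤ d → 1 ≤ n →
    ∀ δ : ℝ, 0 < δ → δ < 1 →
    ∀ D : Measure ((Fin d → ℝ) × ℝ), IsProbabilityMeasure D →
    D {p | (∑ j, p.1 j ^ 2) ≤ 1 ∧ (p.2 = 1 ∨ p.2 = -1)} = 1 →
    ENNReal.ofReal (1 - δ) ≤ trainM D n {S |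
      ∀ w : Fin d → ℝ, (∑ j, w j ^ 2) = 1 →
      ∀ γ : ℝ, (Real.sqrt n)⁻¹ ≤ γ → γ ≤ 1 →
      lossD D 0 w ≤ lossS S γ w + c *
        (Real.sqrt (lossS S γ w *
            (Real.log (Real.exp 1 / lossS S γ w) / (γ ^ 2 * n) +
              Real.log (Real.exp 1 / δ) / n)) +
          Real.log (Real.exp 1 * γ ^ 2 * n) / (γ ^ 2 * n) +
          Real.log (Real.exp 1 / δ) / n)} := by
  refine ⟨30000, by norm_num, fun d n _ hn δ h0 h1 D _ hsupp => ?_⟩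
  refine (statement0_general D (Nat.one_le_iff_ne_zero.1 hn) measurable_signedFeature.aemeasurable
    (ae_norm_signedFeature_le_one D hsupp) h0 h1.le).trans (measure_mono fun S hS w hw => ?_)
  rw [lossD_eq_measureReal]
  simp only [lossS_eq_empiricalLoss]
  exact hS _ (by rw [EuclideanSpace.norm_eq, Real.sqrt_le_one]; simpa using hw.le)
end
end

section
/- There is a constant c > 1 such that for every 0 < δ < 1 and every margin interval Γ_i = (γ_i, γ_{i+1}], with probability at least 1 − δ over a training set S ∼ D^n it holds for all w ∈ H that L_S^{γ_i}(w) ≥ L_D^{(3/4)γ_i}(w)/4 − c·( ln(e·γ_{i+1}²n)/(γ_{i+1}²n) + ln(e/δ)/n ). -/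
open MeasureTheory ProbabilityTheory

noncomputable section

/-! The perceptron algorithm, run on a finite family of points of the unit ball, shows that every
`w` in the unit ball agrees up to `ε` on these points with `ε • ∑ j, c j • x j`, where `c` is an
integer vector of `ℓ¹`-norm at most `ε⁻²`: each update lowers the squared distance to `w` by `ε²`.
On a double sample of `2n` points, the infinite class is thus replaced by a finite one that depends
on the double sample only as a set, with about `exp (ε⁻² log (ε² n))` elements.

Let `N` and `N'` be the numbers of points of low margin on the sample and on an independent ghost
sample. Exchanging the two points of each pair independently at random, the mean of
`(1 - η) ^ N * (1 + η) ^ N'` is at most `1` for each classifier in the finite class, since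
`(1 - α) * (1 + β) + (1 - β) * (1 + α) = 2 - 2 * α * β`. Integrating out the ghost sample instead
turns `(1 + η) ^ N'` into `(1 + η p) ^ n`, where `p` is the distributional margin loss. If some `w`
has `N` much smaller than `(1 - η) / (1 + η) * n * p`, then `(1 - η) ^ N * (1 + η p) ^ n` is large,
and Markov's inequality bounds the probability of this event. -/

section DeviationBound

open scoped ENNReal InnerProductSpace

section Symmetrization

variable {ι κ Ω : Type*} [MeasurableSpace Ω]

lemma measurable_sumElim : Measurable fun p : (ι → Ω) × (κ → Ω) => Sum.elim p.1 p.2 :=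
  measurable_pi_lambda _ (Sum.forall.2 ⟨fun i => by simp only [Sum.elim_inl]; fun_prop,
    fun k => by simp only [Sum.elim_inr]; fun_prop⟩)

variable [Fintype ι]

lemma lintegral_pi_comp_perm (μ : Measure Ω) [SigmaFinite μ] (σ : Equiv.Perm ι)
    {f : (ι → Ω) → ℝ≥0∞} (hf : Measurable f) :
    ∫⁻ x, f (x ∘ σ) ∂(Measure.pi fun _ => μ) = ∫⁻ x, f x ∂(Measure.pi fun _ => μ) :=
  (measurePreserving_arrowCongr' (fun _ => μ) (fun _ => μ) σ.symm (MeasurableEquiv.refl Ω)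
    fun _ => MeasurePreserving.id μ).lintegral_comp hf

theorem lintegral_pi_le_of_sum_comp_perm_le [Fintype κ] [Nonempty κ] (μ : Measure Ω)
    [IsProbabilityMeasure μ] (σ : κ → Equiv.Perm ι) {f : (ι → Ω) → ℝ≥0∞} (hf : Measurable f)
    {C : ℝ≥0∞} (h : ∀ x, ∑ k, f (x ∘ σ k) ≤ Fintype.card κ * C) :
    ∫⁻ x, f x ∂(Measure.pi fun _ => μ) ≤ C := by
  refine (ENNReal.mul_le_mul_iff_right (a := Fintype.card κ) (by simp) (by simp)).1 ?_
  calc (Fintype.card κ : ℝ≥0∞) * ∫⁻ x, f x ∂(Measure.pi fun _ => μ)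
      = ∑ k, ∫⁻ x, f (x ∘ σ k) ∂(Measure.pi fun _ => μ) := by
        simp only [lintegral_pi_comp_perm μ _ hf, Finset.sum_const, Finset.card_univ,
          nsmul_eq_mul]
    _ = ∫⁻ x, ∑ k, f (x ∘ σ k) ∂(Measure.pi fun _ => μ) :=
        (lintegral_finsetSum _ fun k _ => hf.comp (by fun_prop)).symm
    _ ≤ ∫⁻ _, Fintype.card κ * C ∂(Measure.pi fun _ => μ) := lintegral_mono h
    _ = Fintype.card κ * C := by simp

lemma lintegral_lintegral_sumElim [Fintype κ] (μ : Measure Ω) [SigmaFinite μ]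
    {f : (ι ⊕ κ → Ω) → ℝ≥0∞} (hf : Measurable f) :
    ∫⁻ x, ∫⁻ y, f (Sum.elim x y) ∂(Measure.pi fun _ => μ) ∂(Measure.pi fun _ => μ) =
      ∫⁻ z, f z ∂(Measure.pi fun _ => μ) := by
  rw [← lintegral_prod (fun p : (ι → Ω) × (κ → Ω) => f (Sum.elim p.1 p.2))
    (hf.comp measurable_sumElim).aemeasurable]
  have elim_eq (p : (ι → Ω) × (κ → Ω)) :
      Sum.elim p.1 p.2 = (MeasurableEquiv.sumPiEquivProdPi fun _ : ι ⊕ κ => Ω).symm p := by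
    funext j
    cases j <;> rfl
  simp only [elim_eq]
  exact (measurePreserving_sumPiEquivProdPi_symm fun _ : ι ⊕ κ => μ).lintegral_comp hf

/-- The permutation of a double sample, indexed by `ι ⊕ ι`, exchanging the two points with index
`i` whenever `s i` holds. -/
def pairSwap (s : ι → Bool) : Equiv.Perm (ι ⊕ ι) :=
  Function.Involutive.toPerm
    (Sum.elim (fun i => if s i then .inr i else .inl i) fun i => if s i then .inl i else .inr i)
    (by rintro (i | i) <;> cases h : s i <;> simp [h])

lemma sum_prod_pairSwap [DecidableEq ι] (u v : ι ⊕ ι → ℝ≥0∞) :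
    ∑ s : ι → Bool, ∏ i, u (pairSwap s (.inl i)) * v (pairSwap s (.inr i)) =
      ∏ i, (u (.inr i) * v (.inl i) + u (.inl i) * v (.inr i)) := by
  calc _ = ∏ i, ∑ b : Bool, u (if b then .inr i else .inl i) * v (if b then .inl i else .inr i) :=
        (Fintype.prod_sum fun i (b : Bool) =>
          u (if b then .inr i else .inl i) * v (if b then .inl i else .inr i)).symm
    _ = ∏ i, (u (.inr i) * v (.inl i) + u (.inl i) * v (.inr i)) := by
        simp only [Fintype.sum_bool, if_true, Bool.false_eq_true, if_false]

lemma one_sub_mul_one_add_add_le_two {α β : ℝ≥0∞} (hα : α ≤ 1) (hβ : β ≤ 1) :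
    (1 - α) * (1 + β) + (1 - β) * (1 + α) ≤ 2 := by
  have mul_le {x y : ℝ≥0∞} : (1 - x) * y ≤ y := mul_le_of_le_one_left' tsub_le_self
  calc (1 - α) * (1 + β) + (1 - β) * (1 + α)
      = (1 - α) + (1 - α) * β + ((1 - β) + (1 - β) * α) := by ring
    _ ≤ (1 - α) + β + ((1 - β) + α) := by gcongr <;> exact mul_le
    _ = (1 - α + α) + (1 - β + β) := by ring
    _ = 2 := by rw [tsub_add_cancel_of_le hα, tsub_add_cancel_of_le hβ, one_add_one_eq_two]

lemma sum_prod_pairSwap_le [DecidableEq ι] {g : ι ⊕ ι → ℝ≥0∞} (hg : ∀ j, g j ≤ 1) :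
    ∑ s : ι → Bool, ∏ i, (1 - g (pairSwap s (.inl i))) * (1 + g (pairSwap s (.inr i))) ≤
      2 ^ Fintype.card ι := by
  rw [sum_prod_pairSwap (fun j => 1 - g j) fun j => 1 + g j, ← Finset.card_univ]
  exact Finset.prod_le_pow_card _ _ _ fun i _ => one_sub_mul_one_add_add_le_two (hg _) (hg _)

end Symmetrization

section IntL1Ball

variable {ι : Type*} [Fintype ι] [DecidableEq ι]

variable (ι) in
/-- The integer vectors of `ℓ¹`-norm at most `T`; the ambient box only serves to make the ball a
`Finset`. -/
def intL1Ball (T : ℕ) : Finset (ι → ℤ) :=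
  {c ∈ Fintype.piFinset fun _ => Finset.Icc (-(T : ℤ)) T | ∑ j, (c j).natAbs ≤ T}

lemma mem_intL1Ball {T : ℕ} {c : ι → ℤ} : c ∈ intL1Ball ι T ↔ ∑ j, (c j).natAbs ≤ T := by
  refine ⟨fun h => (Finset.mem_filter.1 h).2, fun h => Finset.mem_filter.2 ⟨?_, h⟩⟩
  refine Fintype.mem_piFinset.2 fun j => Finset.mem_Icc.2 (abs_le.1 ?_)
  have hj : (c j).natAbs ≤ T :=
    (Finset.single_le_sum_of_canonicallyOrdered (f := fun j => (c j).natAbs)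
      (Finset.mem_univ j)).trans h
  rw [Int.abs_eq_natAbs]
  exact_mod_cast hj

lemma comp_perm_mem_intL1Ball {T : ℕ} {c : ι → ℤ} (σ : Equiv.Perm ι) :
    c ∘ σ ∈ intL1Ball ι T ↔ c ∈ intL1Ball ι T := by
  simp only [mem_intL1Ball, Function.comp_apply, Equiv.sum_comp σ fun j => (c j).natAbs]

lemma sum_Icc_neg_pow_natAbs_le {z : ℝ} (hz : 0 ≤ z) (hz' : z ≤ 1 / 2) (T : ℕ) :
    ∑ a ∈ Finset.Icc (-(T : ℤ)) T, z ^ a.natAbs ≤ 1 + 4 * z := by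
  have hgeom : ∑ m ∈ Finset.range (T + 1), z ^ m ≤ 1 + 2 * z := by
    calc ∑ m ∈ Finset.range (T + 1), z ^ m
        ≤ ∑' m, z ^ m := (summable_geometric_of_lt_one hz (by linarith)).sum_le_tsum _
          fun m _ => pow_nonneg hz m
      _ = (1 - z)⁻¹ := tsum_geometric_of_lt_one hz (by linarith)
      _ ≤ 1 + 2 * z := by
          rw [inv_le_iff_one_le_mul₀ (by linarith)]
          nlinarith
  rw [Finset.sum_Icc_of_even_eq_range fun a => by rw [Int.natAbs_neg]]
  simp only [Int.natAbs_natCast, Int.natAbs_zero, pow_zero, nsmul_eq_mul]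
  push_cast
  linarith

theorem card_intL1Ball_le {q : ℝ} (hq : 2 ≤ q) (T : ℕ) :
    ((intL1Ball ι T).card : ℝ) ≤ q ^ T * Real.exp (4 * Fintype.card ι / q) := by
  have : 0 < q := by linarith
  have hbox : ∏ _j : ι, ∑ a ∈ Finset.Icc (-(T : ℤ)) T, q⁻¹ ^ a.natAbs ≤
      Real.exp (4 * Fintype.card ι / q) := by
    calc _ ≤ ∏ _j : ι, Real.exp (4 / q) := by
          refine Finset.prod_le_prod (fun _ _ => by positivity) fun _ _ => ?_
          refine (sum_Icc_neg_pow_natAbs_le (by positivity) ?_ T).trans ?_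
          · rw [one_div]; exact inv_anti₀ two_pos hq
          · rw [← div_eq_mul_inv, add_comm]; exact Real.add_one_le_exp _
      _ = Real.exp (4 * Fintype.card ι / q) := by
          rw [Finset.prod_const, ← Real.exp_nat_mul, Finset.card_univ]; ring_nf
  calc ((intL1Ball ι T).card : ℝ)
      ≤ ∑ c ∈ intL1Ball ι T, q ^ T * ∏ j, q⁻¹ ^ (c j).natAbs := by
        rw [Finset.card_eq_sum_ones, Nat.cast_sum, Nat.cast_one]
        refine Finset.sum_le_sum fun c hc => ?_
        rw [Finset.prod_pow_eq_pow_sum, inv_pow, ← div_eq_mul_inv, one_le_div (by positivity)]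
        exact pow_le_pow_right₀ (by linarith) (mem_intL1Ball.1 hc)
    _ ≤ ∑ c ∈ Fintype.piFinset fun _ : ι => Finset.Icc (-(T : ℤ)) T,
          q ^ T * ∏ j, q⁻¹ ^ (c j).natAbs :=
        Finset.sum_le_sum_of_subset_of_nonneg (Finset.filter_subset _ _)
          fun _ _ _ => by positivity
    _ = q ^ T * ∏ _j : ι, ∑ a ∈ Finset.Icc (-(T : ℤ)) T, q⁻¹ ^ a.natAbs := by
        rw [← Finset.mul_sum, Finset.prod_univ_sum]
    _ ≤ _ := by gcongr

end IntL1Ball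

section Perceptron

variable {E : Type*} [NormedAddCommGroup E] [InnerProductSpace ℝ E]

lemma exists_perceptron_update {ε : ℝ} (hε : 0 < ε) {u x : E} (hx : ‖x‖ ≤ 1)
    (hu : ε < |⟪u, x⟫_ℝ|) :
    ∃ s : ℤ, s.natAbs = 1 ∧ ‖u - ε • s • x‖ ^ 2 ≤ ‖u‖ ^ 2 - ε ^ 2 := by
  obtain ⟨s, hs, hsu⟩ : ∃ s : ℤ, s.natAbs = 1 ∧ ε < s * ⟪u, x⟫_ℝ := by
    rcases lt_abs.1 hu with h | h
    · exact ⟨1, rfl, by simpa using h⟩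
    · exact ⟨-1, rfl, by simpa using h⟩
  have hs_norm : ‖s • x‖ ≤ 1 := by
    rcases Int.natAbs_eq_iff.1 hs with rfl | rfl <;> simpa using hx
  have hs_inner : ⟪u, ε • s • x⟫_ℝ = ε * (s * ⟪u, x⟫_ℝ) := by
    rw [inner_smul_right, ← Int.cast_smul_eq_zsmul ℝ, inner_smul_right]
  refine ⟨s, hs, ?_⟩
  rw [norm_sub_sq_real, hs_inner, norm_smul, mul_pow, Real.norm_of_nonneg hε.le]
  have : ε ^ 2 * ‖s • x‖ ^ 2 ≤ ε ^ 2 :=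
    mul_le_of_le_one_right (sq_nonneg ε) (pow_le_one₀ (norm_nonneg _) hs_norm)
  nlinarith [mul_lt_mul_of_pos_left hsu hε]

variable {ι : Type*} [Fintype ι] [DecidableEq ι]

theorem exists_mem_intL1Ball_abs_inner_sub_le {ε : ℝ} (hε : 0 < ε) {x : ι → E}
    (hx : ∀ j, ‖x j‖ ≤ 1) {w : E} (hw : ‖w‖ ≤ 1) :
    ∃ c ∈ intL1Ball ι ⌊(ε ^ 2)⁻¹⌋₊,
      ∀ j, |⟪w - ε • Fintype.linearCombination ℤ x c, x j⟫_ℝ| ≤ ε := by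
  let Reached (t : ℕ) : Prop := ∃ c : ι → ℤ, ∑ j, (c j).natAbs ≤ t ∧
    ‖w - ε • Fintype.linearCombination ℤ x c‖ ^ 2 ≤ 1 - t * ε ^ 2
  have le_of_reached {t : ℕ} (h : Reached t) : t ≤ ⌊(ε ^ 2)⁻¹⌋₊ := by
    obtain ⟨c, -, hc⟩ := h
    rw [Nat.le_floor_iff (by positivity), ← one_div, le_div_iff₀ (by positivity)]
    linarith [sq_nonneg ‖w - ε • Fintype.linearCombination ℤ x c‖]
  obtain ⟨t, ht, ht_succ⟩ : ∃ t, ¬ ¬ Reached t ∧ ¬ Reached (t + 1) := by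
    refine Nat.exists_not_and_succ_of_not_zero_of_exists (not_not.2 ⟨0, by simp, ?_⟩)
      ⟨_, fun h => (le_of_reached h).not_gt (Nat.lt_succ_self _)⟩
    simpa using hw
  obtain ⟨c, hct, hc⟩ := not_not.1 ht
  refine ⟨c, mem_intL1Ball.2 (hct.trans (le_of_reached ⟨c, hct, hc⟩)), fun j => ?_⟩
  by_contra! hj
  obtain ⟨s, hs, hsc⟩ := exists_perceptron_update hε (hx j) hj
  refine ht_succ ⟨c + Pi.single j s, ?_, ?_⟩
  · have hsingle : ∑ i, ((Pi.single j s : ι → ℤ) i).natAbs = 1 := by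
      rw [Finset.sum_eq_single_of_mem j (Finset.mem_univ j)
        fun i _ hi => by rw [Pi.single_eq_of_ne hi, Int.natAbs_zero], Pi.single_eq_same, hs]
    calc ∑ i, ((c + Pi.single j s : ι → ℤ) i).natAbs
        ≤ ∑ i, ((c i).natAbs + ((Pi.single j s : ι → ℤ) i).natAbs) :=
          Finset.sum_le_sum fun i _ => Int.natAbs_add_le _ _
      _ ≤ t + 1 := by rw [Finset.sum_add_distrib, hsingle]; gcongr
  · rw [map_add, Fintype.linearCombination_apply_single, smul_add, ← sub_sub]
    push_cast
    linarith

end Perceptron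

section Potential

lemma linearCombination_comp_perm {ι R M : Type*} [Fintype ι] [Semiring R] [AddCommMonoid M]
    [Module R M] (σ : Equiv.Perm ι) (x : ι → M) (c : ι → R) :
    Fintype.linearCombination R (x ∘ σ) (c ∘ σ) = Fintype.linearCombination R x c :=
  Equiv.sum_comp σ fun j => c j • x j

variable {E : Type*} [NormedAddCommGroup E] [InnerProductSpace ℝ E]

open Classical in
/-- The weight `η` on the points on which `w` has margin at most `θ`, and `0` elsewhere. -/
def marginWeight (η : ℝ≥0∞) (θ : ℝ) (w x : E) : ℝ≥0∞ := if ⟪w, x⟫_ℝ ≤ θ then η else 0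

lemma marginWeight_le (η : ℝ≥0∞) (θ : ℝ) (w x : E) : marginWeight η θ w x ≤ η := by
  unfold marginWeight
  split_ifs <;> simp

lemma marginWeight_le_marginWeight (η : ℝ≥0∞) {θ θ' : ℝ} {w w' x : E}
    (h : ⟪w, x⟫_ℝ ≤ θ → ⟪w', x⟫_ℝ ≤ θ') : marginWeight η θ w x ≤ marginWeight η θ' w' x := by
  unfold marginWeight
  split_ifs <;> simp_all

lemma prod_one_sub_marginWeight {ι : Type*} [Fintype ι] (η : ℝ≥0∞) (θ : ℝ) (w : E) (x : ι → E) :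
    ∏ i, (1 - marginWeight η θ w (x i)) = (1 - η) ^ Nat.card {i // ⟪w, x i⟫_ℝ ≤ θ} := by
  classical
  have hfactor (i : ι) :
      1 - marginWeight η θ w (x i) = if ⟪w, x i⟫_ℝ ≤ θ then 1 - η else 1 := by
    unfold marginWeight
    split_ifs <;> simp
  simp only [hfactor, Finset.prod_ite, Finset.prod_const, one_pow, mul_one,
    Nat.card_eq_fintype_card, Fintype.card_subtype]

variable {ι : Type*} [Fintype ι] [DecidableEq ι]

/-- The exponential potential of a double sample `x`, with sample half `Sum.inl` and ghost half
`Sum.inr`: every point of low margin costs a factor `1 - η` on the sample half and gains a factor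
`1 + η` on the ghost half, and the products are summed over the classifiers `ε • ∑ j, c j • x j`
with `c` an integer vector of `ℓ¹`-norm at most `T`. -/
def doublePotential (η : ℝ≥0∞) (T : ℕ) (ε θ : ℝ) (x : ι ⊕ ι → E) : ℝ≥0∞ :=
  ∑ c ∈ intL1Ball (ι ⊕ ι) T,
    ∏ i, (1 - marginWeight η θ (ε • Fintype.linearCombination ℤ x c) (x (.inl i))) *
      (1 + marginWeight η θ (ε • Fintype.linearCombination ℤ x c) (x (.inr i)))

lemma doublePotential_comp_perm (η : ℝ≥0∞) (T : ℕ) (ε θ : ℝ) (x : ι ⊕ ι → E)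
    (σ : Equiv.Perm (ι ⊕ ι)) :
    doublePotential η T ε θ (x ∘ σ) = ∑ c ∈ intL1Ball (ι ⊕ ι) T,
      ∏ i, (1 - marginWeight η θ (ε • Fintype.linearCombination ℤ x c) (x (σ (.inl i)))) *
        (1 + marginWeight η θ (ε • Fintype.linearCombination ℤ x c) (x (σ (.inr i)))) := by
  refine (Finset.sum_equiv (σ.symm.arrowCongr (Equiv.refl ℤ))
    (fun c => (comp_perm_mem_intL1Ball σ).symm) fun c _ => ?_).symm
  change _ = ∏ i, (1 - marginWeight η θ
    (ε • Fintype.linearCombination ℤ (x ∘ σ) (c ∘ σ)) (x (σ (.inl i)))) *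
      (1 + marginWeight η θ (ε • Fintype.linearCombination ℤ (x ∘ σ) (c ∘ σ)) (x (σ (.inr i))))
  rw [linearCombination_comp_perm]

lemma sum_doublePotential_comp_pairSwap_le {η : ℝ≥0∞} (hη : η ≤ 1) (T : ℕ) (ε θ : ℝ)
    (x : ι ⊕ ι → E) :
    ∑ s : ι → Bool, doublePotential η T ε θ (x ∘ pairSwap s) ≤
      2 ^ Fintype.card ι * (intL1Ball (ι ⊕ ι) T).card := by
  simp only [doublePotential_comp_perm]
  rw [Finset.sum_comm, mul_comm, ← nsmul_eq_mul]
  refine Finset.sum_le_card_nsmul _ _ _ fun c _ => ?_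
  exact sum_prod_pairSwap_le
    (g := fun j => marginWeight η θ (ε • Fintype.linearCombination ℤ x c) (x j))
    fun j => (marginWeight_le η θ _ (x j)).trans hη

theorem prod_le_doublePotential (η : ℝ≥0∞) {ε θ θlo θhi : ℝ} (hε : 0 < ε) (hlo : θlo + ε ≤ θ)
    (hhi : θ + ε ≤ θhi) {x : ι ⊕ ι → E} (hx : ∀ j, ‖x j‖ ≤ 1) {w : E} (hw : ‖w‖ ≤ 1) :
    (∏ i, (1 - marginWeight η θhi w (x (.inl i)))) *
      ∏ i, (1 + marginWeight η θlo w (x (.inr i))) ≤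
        doublePotential η ⌊(ε ^ 2)⁻¹⌋₊ ε θ x := by
  obtain ⟨c, hc, hcw⟩ := exists_mem_intL1Ball_abs_inner_sub_le hε hx hw
  simp only [inner_sub_left, abs_le] at hcw
  rw [← Finset.prod_mul_distrib]
  refine le_trans (Finset.prod_le_prod' fun i _ => ?_)
    (Finset.single_le_sum_of_canonicallyOrdered (f := fun c =>
      ∏ i, (1 - marginWeight η θ (ε • Fintype.linearCombination ℤ x c) (x (.inl i))) *
        (1 + marginWeight η θ (ε • Fintype.linearCombination ℤ x c) (x (.inr i)))) hc)
  refine mul_le_mul' (tsub_le_tsub_left (marginWeight_le_marginWeight η fun h => ?_) _)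
    (add_le_add_right (marginWeight_le_marginWeight η fun h => ?_) _)
  · linarith [hcw (.inl i)]
  · linarith [hcw (.inr i)]

end Potential

section Deviation

variable {E : Type*} [NormedAddCommGroup E] [InnerProductSpace ℝ E] [MeasurableSpace E]
  [BorelSpace E] [SecondCountableTopology E]

lemma measurable_marginWeight {Ω : Type*} [MeasurableSpace Ω] (η : ℝ≥0∞) (θ : ℝ) {v x : Ω → E}
    (hv : Measurable v) (hx : Measurable x) : Measurable fun ω => marginWeight η θ (v ω) (x ω) :=
  Measurable.ite (measurableSet_le (hv.inner hx) measurable_const) measurable_const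
    measurable_const

lemma measurable_doublePotential {ι : Type*} [Fintype ι] [DecidableEq ι] (η : ℝ≥0∞) (T : ℕ)
    (ε θ : ℝ) : Measurable (doublePotential (E := E) (ι := ι) η T ε θ) := by
  have hcomb (c : ι ⊕ ι → ℤ) : Measurable fun x : ι ⊕ ι → E =>
      ε • Fintype.linearCombination ℤ x c := by
    simp only [Fintype.linearCombination_apply]
    fun_prop
  refine Finset.measurable_sum _ fun c _ => Finset.measurable_prod _ fun i _ => ?_
  exact ((measurable_marginWeight η θ (hcomb c) (measurable_pi_apply _)).const_sub 1).mul
    ((measurable_marginWeight η θ (hcomb c) (measurable_pi_apply _)).const_add 1)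

variable {Ω : Type*} [MeasurableSpace Ω] (D : Measure Ω) [IsProbabilityMeasure D] {X : Ω → E}

lemma lintegral_one_add_marginWeight (hX : Measurable X) (η : ℝ≥0∞) (θ : ℝ) (w : E) :
    ∫⁻ ω, (1 + marginWeight η θ w (X ω)) ∂D = 1 + η * D {ω | ⟪w, X ω⟫_ℝ ≤ θ} := by
  have hset : MeasurableSet {ω | ⟪w, X ω⟫_ℝ ≤ θ} :=
    measurableSet_le (measurable_const.inner hX) measurable_const
  rw [lintegral_add_left measurable_const, lintegral_const, measure_univ, mul_one,
    ← lintegral_indicator_const hset]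
  rfl

variable {ι : Type*} [Fintype ι]

lemma lintegral_prod_one_add_marginWeight (hX : Measurable X) (η : ℝ≥0∞) (θ : ℝ) (w : E) :
    ∫⁻ S, ∏ i, (1 + marginWeight η θ w (X (S i))) ∂(Measure.pi fun _ : ι => D) =
      (1 + η * D {ω | ⟪w, X ω⟫_ℝ ≤ θ}) ^ Fintype.card ι := by
  have hmeas : Measurable fun ω => 1 + marginWeight η θ w (X ω) :=
    (measurable_marginWeight η θ measurable_const hX).const_add 1
  calc ∫⁻ S, ∏ i, (1 + marginWeight η θ w (X (S i))) ∂(Measure.pi fun _ : ι => D)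
      = ∏ i, ∫⁻ S, (1 + marginWeight η θ w (X (S i))) ∂(Measure.pi fun _ : ι => D) :=
        lintegral_prod_eq_prod_lintegral_of_indepFun Finset.univ _
          (iIndepFun_pi fun _ => hmeas.aemeasurable) fun i => hmeas.comp (measurable_pi_apply i)
    _ = ∏ _i : ι, ∫⁻ ω, (1 + marginWeight η θ w (X ω)) ∂D :=
        Finset.prod_congr rfl fun i _ =>
          (measurePreserving_eval (fun _ : ι => D) i).lintegral_comp hmeas
    _ = (1 + η * D {ω | ⟪w, X ω⟫_ℝ ≤ θ}) ^ Fintype.card ι := by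
        rw [lintegral_one_add_marginWeight D hX, Finset.prod_const, Finset.card_univ]

variable [DecidableEq ι]

lemma measurable_doublePotential_comp (hX : Measurable X) (η : ℝ≥0∞) (T : ℕ) (ε θ : ℝ) :
    Measurable fun S : ι ⊕ ι → Ω => doublePotential η T ε θ (X ∘ S) :=
  (measurable_doublePotential η T ε θ).comp
    (measurable_pi_lambda _ fun j => hX.comp (measurable_pi_apply j))

lemma lintegral_doublePotential_le (hX : Measurable X) {η : ℝ≥0∞} (hη : η ≤ 1) (T : ℕ)
    (ε θ : ℝ) :
    ∫⁻ S, doublePotential η T ε θ (X ∘ S) ∂(Measure.pi fun _ : ι ⊕ ι => D) ≤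
      (intL1Ball (ι ⊕ ι) T).card := by
  refine lintegral_pi_le_of_sum_comp_perm_le D (pairSwap (ι := ι))
    (measurable_doublePotential_comp hX η T ε θ) fun S => ?_
  simpa [Function.comp_assoc] using sum_doublePotential_comp_pairSwap_le hη T ε θ (X ∘ S)

lemma ae_forall_pow_mul_pow_le_lintegral_doublePotential (hX : Measurable X)
    (hX1 : ∀ᵐ ω ∂D, ‖X ω‖ ≤ 1) (η : ℝ≥0∞) {ε θ θlo θhi : ℝ} (hε : 0 < ε) (hlo : θlo + ε ≤ θ)
    (hhi : θ + ε ≤ θhi) :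
    ∀ᵐ S ∂(Measure.pi fun _ : ι => D), ∀ w, ‖w‖ ≤ 1 →
      (1 - η) ^ Nat.card {i // ⟪w, X (S i)⟫_ℝ ≤ θhi} *
          (1 + η * D {ω | ⟪w, X ω⟫_ℝ ≤ θlo}) ^ Fintype.card ι ≤
        ∫⁻ S', doublePotential η ⌊(ε ^ 2)⁻¹⌋₊ ε θ (X ∘ Sum.elim S S')
          ∂(Measure.pi fun _ : ι => D) := by
  have hae : ∀ᵐ S ∂(Measure.pi fun _ : ι => D), ∀ i, ‖X (S i)‖ ≤ 1 :=
    Filter.eventually_all.2 fun i =>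
      (Measure.tendsto_eval_ae_ae (μ := fun _ : ι => D) (i := i)).eventually hX1
  filter_upwards [hae] with S hS w hw
  have hmeas : Measurable fun S' : ι → Ω => ∏ i, (1 + marginWeight η θlo w (X (S' i))) :=
    Finset.measurable_prod _ fun i _ => (measurable_marginWeight η θlo measurable_const
      (hX.comp (measurable_pi_apply i))).const_add 1
  rw [← prod_one_sub_marginWeight η θhi w fun i => X (S i),
    ← lintegral_prod_one_add_marginWeight D hX, ← lintegral_const_mul _ hmeas]
  refine lintegral_mono_ae ?_
  filter_upwards [hae] with S' hS'
  exact prod_le_doublePotential η hε hlo hhi (x := X ∘ Sum.elim S S')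
    (Sum.forall.2 ⟨hS, hS'⟩) hw

theorem measure_pi_exists_le_pow_mul_pow_le (hX : Measurable X) (hX1 : ∀ᵐ ω ∂D, ‖X ω‖ ≤ 1)
    {η : ℝ≥0∞} (hη : η ≤ 1) {ε θ θlo θhi : ℝ} (hε : 0 < ε) (hlo : θlo + ε ≤ θ)
    (hhi : θ + ε ≤ θhi) {t : ℝ≥0∞} (ht : t ≠ 0) (ht' : t ≠ ∞) :
    Measure.pi (fun _ : ι => D) {S | ∃ w, ‖w‖ ≤ 1 ∧
      t ≤ (1 - η) ^ Nat.card {i // ⟪w, X (S i)⟫_ℝ ≤ θhi} *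
        (1 + η * D {ω | ⟪w, X ω⟫_ℝ ≤ θlo}) ^ Fintype.card ι} ≤
      (intL1Ball (ι ⊕ ι) ⌊(ε ^ 2)⁻¹⌋₊).card / t := by
  set P := Measure.pi fun _ : ι => D
  let F (S : ι ⊕ ι → Ω) : ℝ≥0∞ := doublePotential η ⌊(ε ^ 2)⁻¹⌋₊ ε θ (X ∘ S)
  have hF : Measurable F := measurable_doublePotential_comp hX η _ ε θ
  calc P {S | ∃ w, ‖w‖ ≤ 1 ∧ t ≤ (1 - η) ^ Nat.card {i // ⟪w, X (S i)⟫_ℝ ≤ θhi} *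
        (1 + η * D {ω | ⟪w, X ω⟫_ℝ ≤ θlo}) ^ Fintype.card ι}
      ≤ P {S | t ≤ ∫⁻ S', F (Sum.elim S S') ∂P} := by
        refine measure_mono_ae ?_
        filter_upwards [ae_forall_pow_mul_pow_le_lintegral_doublePotential D hX hX1 η hε hlo hhi]
          with S hS
        rintro ⟨w, hw, htw⟩
        exact htw.trans (hS w hw)
    _ ≤ (∫⁻ S, ∫⁻ S', F (Sum.elim S S') ∂P ∂P) / t :=
        meas_ge_le_lintegral_div
          (hF.comp measurable_sumElim).lintegral_prod_right'.aemeasurable ht ht'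
    _ = (∫⁻ S, F S ∂(Measure.pi fun _ : ι ⊕ ι => D)) / t := by
        rw [lintegral_lintegral_sumElim D hF]
    _ ≤ (intL1Ball (ι ⊕ ι) ⌊(ε ^ 2)⁻¹⌋₊).card / t := by
        gcongr
        exact lintegral_doublePotential_le D hX hη _ ε θ

end Deviation

section Estimates

lemma card_intL1Ball_floor_le {ι : Type*} [Fintype ι] [DecidableEq ι] {ε : ℝ} (hε : 0 < ε) :
    ((intL1Ball ι ⌊(ε ^ 2)⁻¹⌋₊).card : ℝ) ≤
      Real.exp (5 * Real.log (Real.exp 1 + ε ^ 2 * Fintype.card ι) / ε ^ 2) := by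
  set q := Real.exp 1 + ε ^ 2 * Fintype.card ι
  have he : Real.exp 1 ≤ q := le_add_of_nonneg_right (by positivity)
  have hq : 2 ≤ q := by linarith [Real.add_one_le_exp (1 : ℝ)]
  have hlog : 1 ≤ Real.log q := (Real.le_log_iff_exp_le (by linarith)).2 he
  have hpow : q ^ ⌊(ε ^ 2)⁻¹⌋₊ ≤ Real.exp (Real.log q / ε ^ 2) := by
    rw [← Real.exp_log (show 0 < q by linarith), ← Real.exp_nat_mul, Real.log_exp,
      div_eq_inv_mul]
    gcongr
    exact Nat.floor_le (by positivity)
  have hcard : 4 * Fintype.card ι / q ≤ 4 * Real.log q / ε ^ 2 := by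
    rw [div_le_div_iff₀ (by linarith) (by positivity)]
    nlinarith [Real.exp_pos 1]
  calc _ ≤ Real.exp (Real.log q / ε ^ 2) * Real.exp (4 * Real.log q / ε ^ 2) :=
        (card_intL1Ball_le hq _).trans (by gcongr)
    _ = Real.exp (5 * Real.log q / ε ^ 2) := by
        rw [← Real.exp_add]
        ring_nf

lemma exp_le_one_sub_pow_mul_one_add_pow {η p B : ℝ} {N n : ℕ} (hη : 0 < η) (hη' : η < 1)
    (hp : 0 ≤ p) (hp' : p ≤ 1) (h : N ≤ (1 - η) / (1 + η) * (n * p) - (1 - η) / η * B) :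
    Real.exp B ≤ (1 - η) ^ N * (1 + η * p) ^ n := by
  have h1 : 0 < 1 - η := by linarith
  have h2 : 0 < 1 + η * p := by positivity
  have hsub : -(η / (1 - η)) ≤ Real.log (1 - η) := by
    convert Real.one_sub_inv_le_log_of_pos h1 using 1
    field_simp
    ring
  have hadd : η * p / (1 + η) ≤ Real.log (1 + η * p) := by
    calc η * p / (1 + η) ≤ η * p / (1 + η * p) := by
          gcongr
          exact mul_le_of_le_one_right hη.le hp'
      _ = 1 - (1 + η * p)⁻¹ := by field_simp; ring
      _ ≤ Real.log (1 + η * p) := Real.one_sub_inv_le_log_of_pos h2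
  have hB : B ≤ N * -(η / (1 - η)) + n * (η * p / (1 + η)) := by
    have := mul_le_mul_of_nonneg_right h (div_pos hη h1).le
    calc B = ((1 - η) / (1 + η) * (n * p)) * (η / (1 - η)) -
          ((1 - η) / (1 + η) * (n * p) - (1 - η) / η * B) * (η / (1 - η)) := by
          field_simp
          ring
      _ ≤ ((1 - η) / (1 + η) * (n * p)) * (η / (1 - η)) - N * (η / (1 - η)) := by gcongr
      _ = N * -(η / (1 - η)) + n * (η * p / (1 + η)) := by
          field_simp
          ring
  calc Real.exp B ≤ Real.exp (N * Real.log (1 - η) + n * Real.log (1 + η * p)) := by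
        gcongr
        exact hB.trans (by gcongr)
    _ = (1 - η) ^ N * (1 + η * p) ^ n := by
        rw [Real.exp_add, Real.exp_nat_mul, Real.exp_nat_mul, Real.exp_log h1, Real.exp_log h2]

end Estimates

section Uniform

lemma ofReal_one_sub_le_of_measure_compl_le {Ω : Type*} [MeasurableSpace Ω] {μ : Measure Ω}
    [IsProbabilityMeasure μ] {s : Set Ω} {δ : ℝ} (hδ : 0 ≤ δ)
    (h : μ sᶜ ≤ ENNReal.ofReal δ) : ENNReal.ofReal (1 - δ) ≤ μ s := by
  rw [ENNReal.ofReal_sub _ hδ, ENNReal.ofReal_one, tsub_le_iff_right]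
  calc 1 = μ (s ∪ sᶜ) := by rw [Set.union_compl_self, measure_univ]
    _ ≤ μ s + μ sᶜ := measure_union_le _ _
    _ ≤ μ s + ENNReal.ofReal δ := by gcongr

lemma ofReal_one_sub_pow_mul_one_add_pow {Ω : Type*} [MeasurableSpace Ω] (D : Measure Ω)
    [IsFiniteMeasure D] {η : ℝ} (hη : 0 ≤ η) (hη' : η ≤ 1) (A : Set Ω) (N n : ℕ) :
    ENNReal.ofReal ((1 - η) ^ N * (1 + η * D.real A) ^ n) =
      (1 - ENNReal.ofReal η) ^ N * (1 + ENNReal.ofReal η * D A) ^ n := by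
  rw [ENNReal.ofReal_mul (pow_nonneg (sub_nonneg.2 hη') N),
    ENNReal.ofReal_pow (sub_nonneg.2 hη'), ENNReal.ofReal_pow (by positivity),
    ENNReal.ofReal_sub _ hη, ENNReal.ofReal_add zero_le_one (by positivity),
    ENNReal.ofReal_mul hη, ofReal_measureReal, ENNReal.ofReal_one]

variable {Ω E : Type*} [MeasurableSpace Ω] [NormedAddCommGroup E] [InnerProductSpace ℝ E]
  [MeasurableSpace E] [BorelSpace E] [SecondCountableTopology E]

theorem statement3_general (D : Measure Ω) [IsProbabilityMeasure D] {X : Ω → E}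
    (hX : Measurable X) (hX1 : ∀ᵐ ω ∂D, ‖X ω‖ ≤ 1) {n : ℕ} (hn : 0 < n) {ε θ γ η δ : ℝ}
    (hε : 0 < ε) (hγ : θ + 2 * ε ≤ γ) (hη : 0 < η) (hη' : η < 1) (hδ : 0 < δ) :
    ENNReal.ofReal (1 - δ) ≤ Measure.pi (fun _ : Fin n => D) {S | ∀ w, ‖w‖ ≤ 1 →
      (1 - η) / (1 + η) * D.real {ω | ⟪w, X ω⟫_ℝ ≤ θ} -
          (1 - η) / η * (5 * Real.log (Real.exp 1 + 2 * (ε ^ 2 * n)) / (ε ^ 2 * n) +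
            Real.log δ⁻¹ / n) ≤
        (Nat.card {i // ⟪w, X (S i)⟫_ℝ ≤ γ} : ℝ) / n} := by
  have hn0 : (0 : ℝ) < n := by exact_mod_cast hn
  set C := 5 * Real.log (Real.exp 1 + 2 * (ε ^ 2 * n)) / ε ^ 2
  have hcard : ((intL1Ball (Fin n ⊕ Fin n) ⌊(ε ^ 2)⁻¹⌋₊).card : ℝ) ≤ Real.exp C := by
    convert card_intL1Ball_floor_le (ι := Fin n ⊕ Fin n) hε using 6
    simp only [Fintype.card_sum, Fintype.card_fin]
    push_cast
    ring
  have hexp : Real.exp (C + Real.log δ⁻¹) = Real.exp C / δ := by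
    rw [Real.exp_add, Real.exp_log (inv_pos.2 hδ), div_eq_mul_inv]
  have hbad := measure_pi_exists_le_pow_mul_pow_le (ι := Fin n) D hX hX1
    (ENNReal.ofReal_le_one.2 hη'.le) hε le_rfl (by linarith : θ + ε + ε ≤ γ)
    (ENNReal.ofReal_pos.2 (Real.exp_pos (C + Real.log δ⁻¹))).ne' ENNReal.ofReal_ne_top
  refine ofReal_one_sub_le_of_measure_compl_le hδ.le
    ((measure_mono fun S hS => ?_).trans (hbad.trans ?_))
  · simp only [Set.mem_compl_iff, Set.mem_ofPred_eq, not_forall, not_le] at hS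
    obtain ⟨w, hw, hlt⟩ := hS
    rw [div_lt_iff₀ hn0] at hlt
    refine ⟨w, hw, ?_⟩
    rw [← ofReal_one_sub_pow_mul_one_add_pow D hη.le hη'.le, Fintype.card_fin]
    refine ENNReal.ofReal_le_ofReal (exp_le_one_sub_pow_mul_one_add_pow hη hη'
      measureReal_nonneg measureReal_le_one (hlt.le.trans_eq ?_))
    simp only [C]
    field_simp
  · rw [← ENNReal.ofReal_natCast, ← ENNReal.ofReal_div_of_pos (Real.exp_pos _), hexp]
    refine ENNReal.ofReal_le_ofReal ?_
    rw [div_div_eq_mul_div, div_le_iff₀ (Real.exp_pos C), mul_comm]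
    gcongr

end Uniform

section LabeledPoints

/-- The point `y • x` of Euclidean space attached to a labeled point `(x, y)`; its inner product
with a classifier is the margin of that classifier on `(x, y)`. -/
def signedPoint {m : ℕ} (p : (Fin m → ℝ) × ℝ) : EuclideanSpace ℝ (Fin m) :=
  p.2 • WithLp.toLp 2 p.1

lemma measurable_signedPoint {m : ℕ} : Measurable (signedPoint (m := m)) :=
  measurable_snd.smul ((WithLp.measurable_toLp 2 _).comp measurable_fst)

lemma inner_toLp_signedPoint {m : ℕ} (w : Fin m → ℝ) (p : (Fin m → ℝ) × ℝ) :
    ⟪WithLp.toLp 2 w, signedPoint p⟫_ℝ = p.2 * dotp w p.1 := by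
  rw [signedPoint, inner_smul_right, EuclideanSpace.inner_toLp_toLp, star_trivial,
    dotProduct_comm]
  rfl

lemma norm_toLp_eq_one {m : ℕ} {x : Fin m → ℝ} (hx : ∑ j, x j ^ 2 = 1) :
    ‖WithLp.toLp 2 x‖ = 1 := by
  simp only [EuclideanSpace.norm_eq, Real.norm_eq_abs, sq_abs, hx, Real.sqrt_one]

lemma measurableSet_Xset (d : ℕ) (cγ : ℝ) : MeasurableSet (Xset d cγ) :=
  (measurableSet_eq_fun (f := fun x : Fin (d + 1) → ℝ => ∑ j, x j ^ 2) (by fun_prop)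
    measurable_const).inter
    (measurableSet_le (f := fun x : Fin (d + 1) → ℝ => ∑ j : Fin d, x j.castSucc ^ 2)
      (by fun_prop) measurable_const)

lemma ae_norm_signedPoint_le_one {d : ℕ} {cγ : ℝ} {D : Measure ((Fin (d + 1) → ℝ) × ℝ)}
    [IsProbabilityMeasure D] (hD : D {p | p.1 ∈ Xset d cγ ∧ (p.2 = 1 ∨ p.2 = -1)} = 1) :
    ∀ᵐ p ∂D, ‖signedPoint p‖ ≤ 1 := by
  have hmeas : MeasurableSet
      {p : (Fin (d + 1) → ℝ) × ℝ | p.1 ∈ Xset d cγ ∧ (p.2 = 1 ∨ p.2 = -1)} :=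
    (measurable_fst (measurableSet_Xset d cγ)).inter
      ((measurableSet_eq_fun measurable_snd measurable_const).union
        (measurableSet_eq_fun measurable_snd measurable_const))
  filter_upwards [(mem_ae_iff_prob_eq_one hmeas).2 hD] with p ⟨hx, hy⟩
  have hlabel : ‖p.2‖ = 1 := by rcases hy with h | h <;> simp [h]
  rw [signedPoint, norm_smul, hlabel, norm_toLp_eq_one hx.1, one_mul]

end LabeledPoints

section MarginIntervals

variable {n i : ℕ}

lemma γlo_eq (hi : 1 ≤ i) : γlo n i = γhi n i / 2 := by
  obtain ⟨j, rfl⟩ := Nat.exists_eq_add_of_le' hi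
  rw [γlo, γhi, Nat.add_sub_cancel, pow_succ]
  ring

lemma γhi_sq_mul (hn : 0 < n) : γhi n i ^ 2 * n = 4 ^ i := by
  have : (0 : ℝ) < n := by exact_mod_cast hn
  rw [γhi, div_pow, Real.sq_sqrt this.le, div_mul_cancel₀ _ this.ne', ← pow_mul, mul_comm,
    pow_mul]
  norm_num

lemma marginError_le (hn : 0 < n) (hi : 1 ≤ i) {δ : ℝ} (hδ : 0 < δ) (hδ' : δ ≤ 1) :
    2 / 3 * (5 * Real.log (Real.exp 1 + 2 * ((γlo n i / 8) ^ 2 * n)) / ((γlo n i / 8) ^ 2 * n) +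
        Real.log δ⁻¹ / n) ≤
      1000 * (Real.log (Real.exp 1 * γhi n i ^ 2 * n) / (γhi n i ^ 2 * n) +
        Real.log (Real.exp 1 / δ) / n) := by
  set M := γhi n i ^ 2 * n
  have hM : 4 ≤ M := by
    rw [show M = 4 ^ i from γhi_sq_mul hn]
    exact le_self_pow₀ (by norm_num) (by omega)
  have hlo : (γlo n i / 8) ^ 2 * n = M / 256 := by
    rw [γlo_eq hi]
    ring
  have hlogM : Real.log (Real.exp 1 + 2 * (M / 256)) ≤ Real.log (Real.exp 1 * M) := by
    refine Real.log_le_log (by positivity) ?_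
    nlinarith [Real.add_one_le_exp (1 : ℝ)]
  have hlogM0 : 0 ≤ Real.log (Real.exp 1 * M) :=
    Real.log_nonneg (by nlinarith [Real.add_one_le_exp (1 : ℝ)])
  have hlogδ : Real.log δ⁻¹ ≤ Real.log (Real.exp 1 / δ) := by
    rw [div_eq_mul_inv]
    exact Real.log_le_log (by positivity)
      (le_mul_of_one_le_left (by positivity) (Real.one_le_exp zero_le_one))
  have hlogδ0 : 0 ≤ Real.log δ⁻¹ := Real.log_nonneg ((one_le_inv₀ hδ).2 hδ')
  rw [hlo, mul_assoc (Real.exp 1)]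
  calc 2 / 3 * (5 * Real.log (Real.exp 1 + 2 * (M / 256)) / (M / 256) + Real.log δ⁻¹ / n)
      ≤ 2 / 3 * (5 * Real.log (Real.exp 1 * M) / (M / 256) + Real.log (Real.exp 1 / δ) / n) := by
        gcongr
    _ = 2560 / 3 * (Real.log (Real.exp 1 * M) / M) +
          2 / 3 * (Real.log (Real.exp 1 / δ) / n) := by
        field_simp
        ring
    _ ≤ 1000 * (Real.log (Real.exp 1 * M) / M) + 1000 * (Real.log (Real.exp 1 / δ) / n) := by
        have := hlogδ0.trans hlogδ
        gcongr <;> norm_num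
    _ = 1000 * (Real.log (Real.exp 1 * M) / M + Real.log (Real.exp 1 / δ) / n) := by ring

end MarginIntervals

end DeviationBound

/-- (Lemma 3.2 of the paper.) The empirical margin loss at margin `γ_i`
is at least a quarter of the distributional margin loss at margin `(3/4)γ_i`, up to an
additive error term. -/
theorem statement3 : ∃ cγ c : ℝ, 0 < cγ ∧ cγ ≤ (Real.sqrt 2)⁻¹ ∧ 1 < c ∧
    ∀ (d n : ℕ), 1 ≤ n →
    ∀ D : Measure ((Fin (d+1) → ℝ) × ℝ), IsProbabilityMeasure D →
    D {p | p.1 ∈ Xset d cγ ∧ (p.2 = 1 ∨ p.2 = -1)} = 1 →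
    ∀ δ : ℝ, 0 < δ → δ < 1 →
    ∀ i : ℕ, 1 ≤ i → (2 : ℝ) ^ i ≤ cγ * Real.sqrt n →
    ENNReal.ofReal (1 - δ) ≤ trainM D n {S |
      ∀ w, w ∈ Hset d →
      lossD D (3 / 4 * γlo n i) w / 4 - c *
          (Real.log (Real.exp 1 * γhi n i ^ 2 * n) / (γhi n i ^ 2 * n) +
            Real.log (Real.exp 1 / δ) / n) ≤ lossS S (γlo n i) w} := by
  refine ⟨(Real.sqrt 2)⁻¹, 1000, by positivity, le_rfl, by norm_num, ?_⟩
  intro d n hn D _ hD δ hδ hδ' i hi _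
  have hγ : 0 < γlo n i := by unfold γlo; positivity
  -- `η = 3 / 5` solves `(1 - η) / (1 + η) = 1 / 4`.
  refine (statement3_general D measurable_signedPoint (ae_norm_signedPoint_le_one hD) hn
    (ε := γlo n i / 8) (θ := 3 / 4 * γlo n i) (γ := γlo n i) (η := 3 / 5) (by positivity)
    (by linarith) (by norm_num) (by norm_num) hδ).trans (measure_mono fun S hS w hw => ?_)
  have hmargin := hS (WithLp.toLp 2 w) (norm_toLp_eq_one hw.1).le
  simp only [inner_toLp_signedPoint] at hmargin
  norm_num only at hmargin
  have herror := marginError_le hn hi hδ hδ'.le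
  simp only [lossD, lossS, Measure.real] at hmargin ⊢
  linarith
end
end

section
/- There is a constant c > 0 such that for any integer k ≥ 1, any unit vectors w, x ∈ ℝ^m, and any γ ∈ (0,1], the randomized rounding satisfies Pr_{A,t}[ |⟨h_{A,t}(w), Ax⟩ − ⟨w, x⟩| > γ ] < c·exp(−γ²k/c). -/
open MeasureTheory ProbabilityTheory

noncomputable section

/-!
Write `a` for a row of `A`, so that `⟨a, w⟩` and `⟨a, x⟩` are Gaussian with variance at most `1/k`
and `E ⟨a, w⟩⟨a, x⟩ = ⟨w, x⟩ / k`. The rounding of `⟨a, w⟩` is unbiased given `a`, hence each row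
contributes a variable of mean `⟨w, x⟩ / k` to `⟨h(w), Ax⟩`, and the contributions of the `k` rows
are independent. Since rounding moves `⟨a, w⟩` by at most `1 / (10√k)`, the centred contribution is
at most `⟨a, w⟩² + ⟨a, x⟩² + 2/k` in absolute value, so that `k/8` times it has a bounded
exponential moment: it is subexponential, with variance proxy of order `1/k²` up to `|t| ~ k`.
The sum over the rows is then subexponential with variance proxy of order `1/k`, and Chernoff's
bound gives a tail `2 exp(-min(γ, γ²) k / 4096)`, valid for all `γ ≥ 0`.
-/

/-- `X` has a subexponential moment generating function with variance proxy `v` on the interval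
`[-r, r]`. As for Mathlib's `HasSubgaussianMGF`, this entails that `X` has mean zero when
`0 < r` and `μ` is a probability measure; sub-Gaussian variables are the case where every `r` is
allowed. -/
structure HasSubexponentialMGF {Ω : Type*} [MeasurableSpace Ω] (X : Ω → ℝ) (v r : ℝ)
    (μ : Measure Ω) : Prop where
  integrable_exp_mul : ∀ t, |t| ≤ r → Integrable (fun ω => Real.exp (t * X ω)) μ
  mgf_le : ∀ t, |t| ≤ r → mgf X μ t ≤ Real.exp (v * t ^ 2 / 2)

namespace HasSubexponentialMGF

variable {Ω Ω' ι : Type*} [MeasurableSpace Ω] [MeasurableSpace Ω'] {μ : Measure Ω}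
  {X : Ω → ℝ} {v r ε : ℝ}

lemma neg (h : HasSubexponentialMGF X v r μ) : HasSubexponentialMGF (-X) v r μ where
  integrable_exp_mul t ht := by
    simpa using h.integrable_exp_mul (-t) (by rwa [abs_neg])
  mgf_le t ht := by
    simpa [mgf_neg] using h.mgf_le (-t) (by rwa [abs_neg])

lemma comp_measurePreserving {ν : Measure Ω'} {f : Ω' → Ω} (h : HasSubexponentialMGF X v r μ)
    (hf : MeasurePreserving f ν μ) : HasSubexponentialMGF (X ∘ f) v r ν where
  integrable_exp_mul t ht := hf.integrable_comp_of_integrable (h.integrable_exp_mul t ht)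
  mgf_le t ht := by
    rw [← hf.map_eq] at h
    rw [← mgf_map hf.aemeasurable (h.integrable_exp_mul t ht).1]
    exact h.mgf_le t ht

lemma sum_of_iIndepFun [IsFiniteMeasure μ] {X : ι → Ω → ℝ} {v : ι → ℝ} (hX : iIndepFun X μ)
    (hX_meas : ∀ i, Measurable (X i)) (s : Finset ι)
    (h : ∀ i ∈ s, HasSubexponentialMGF (X i) (v i) r μ) :
    HasSubexponentialMGF (∑ i ∈ s, X i) (∑ i ∈ s, v i) r μ where
  integrable_exp_mul t ht :=
    hX.integrable_exp_mul_sum hX_meas fun i hi => (h i hi).integrable_exp_mul t ht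
  mgf_le t ht := by
    calc mgf (∑ i ∈ s, X i) μ t = ∏ i ∈ s, mgf (X i) μ t := hX.mgf_sum hX_meas s
      _ ≤ ∏ i ∈ s, Real.exp (v i * t ^ 2 / 2) :=
          Finset.prod_le_prod (fun _ _ => mgf_nonneg) fun i hi => (h i hi).mgf_le t ht
      _ = Real.exp ((∑ i ∈ s, v i) * t ^ 2 / 2) := by
          rw [← Real.exp_sum, Finset.sum_mul, Finset.sum_div]

lemma sum_pi [Fintype ι] [IsProbabilityMeasure μ] (h : HasSubexponentialMGF X v r μ)
    (hX : Measurable X) :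
    HasSubexponentialMGF (fun ω : ι → Ω => ∑ i, X (ω i)) (Fintype.card ι * v) r
      (Measure.pi fun _ => μ) := by
  have h_coord (i : ι) : HasSubexponentialMGF (fun ω : ι → Ω => X (ω i)) v r
      (Measure.pi fun _ => μ) :=
    h.comp_measurePreserving (measurePreserving_eval (fun _ => μ) i)
  have h_sum := sum_of_iIndepFun (iIndepFun_pi fun _ : ι => hX.aemeasurable)
    (fun i => hX.comp (measurable_pi_apply i)) Finset.univ fun i _ => h_coord i
  convert h_sum using 1
  · ext ω
    simp
  · simp

-- Chernoff's bound at `t = min (ε / v) r`, the minimizer of `v * t ^ 2 / 2 - t * ε` on `[0, r]`.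
lemma measure_ge_le [IsFiniteMeasure μ] (h : HasSubexponentialMGF X v r μ) (hv : 0 < v)
    (hr : 0 ≤ r) (hε : 0 ≤ ε) :
    μ.real {ω | ε ≤ X ω} ≤ Real.exp (-(min (ε / v) r * ε / 2)) := by
  set t := min (ε / v) r
  have ht : 0 ≤ t := le_min (by positivity) hr
  have htr : |t| ≤ r := (abs_of_nonneg ht).trans_le (min_le_right _ _)
  have htv : t * v ≤ ε := (le_div_iff₀ hv).1 (min_le_left _ _)
  calc μ.real {ω | ε ≤ X ω}
      ≤ Real.exp (-t * ε) * mgf X μ t :=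
        measure_ge_le_exp_mul_mgf ε ht (h.integrable_exp_mul t htr)
    _ ≤ Real.exp (-t * ε) * Real.exp (v * t ^ 2 / 2) := by
        gcongr
        exact h.mgf_le t htr
    _ ≤ Real.exp (-(t * ε / 2)) := by
        rw [← Real.exp_add, Real.exp_le_exp]
        linarith [mul_le_mul_of_nonneg_left htv ht]

lemma measure_abs_ge_le [IsFiniteMeasure μ] (h : HasSubexponentialMGF X v r μ) (hv : 0 < v)
    (hr : 0 ≤ r) (hε : 0 ≤ ε) :
    μ.real {ω | ε ≤ |X ω|} ≤ 2 * Real.exp (-(min (ε / v) r * ε / 2)) := by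
  have h_union : {ω | ε ≤ |X ω|} = {ω | ε ≤ X ω} ∪ {ω | ε ≤ (-X) ω} :=
    Set.ext fun ω => le_abs (a := ε) (b := X ω)
  rw [h_union, two_mul]
  exact (measureReal_union_le _ _).trans
    (add_le_add (h.measure_ge_le hv hr hε) (h.neg.measure_ge_le hv hr hε))

end HasSubexponentialMGF

section ExponentialMoment

lemma exp_le_one_add_add_sq_mul_exp_abs (y : ℝ) :
    Real.exp y ≤ 1 + y + y ^ 2 * Real.exp |y| := by
  have h := Complex.norm_exp_sub_sum_le_norm_mul_exp y 2
  have h_ofReal : Complex.exp y - ∑ i ∈ Finset.range 2, (y : ℂ) ^ i / i.factorial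
      = ((Real.exp y - (1 + y) : ℝ) : ℂ) := by
    simp [Finset.sum_range_succ]
  rw [h_ofReal, Complex.norm_real, Complex.norm_real, Real.norm_eq_abs, Real.norm_eq_abs,
    sq_abs] at h
  linarith [le_abs_self (Real.exp y - (1 + y))]

-- Half of the exponent `c * |z|` dominates `exp |t * z|`, the other half dominates `z ^ 2`.
lemma exp_mul_le_of_abs_le_half {c t : ℝ} (hc : 0 < c) (ht : |t| ≤ c / 2) (z : ℝ) :
    Real.exp (t * z) ≤ 1 + t * z + 8 / c ^ 2 * t ^ 2 * Real.exp (c * |z|) := by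
  set u := c * |z| / 2 with hu_def
  have hu : 0 ≤ u := by positivity
  have h_exp : Real.exp |t * z| ≤ Real.exp u := by
    rw [Real.exp_le_exp, abs_mul]
    linarith [mul_le_mul_of_nonneg_right ht (abs_nonneg z)]
  have h_sq : z ^ 2 ≤ 8 / c ^ 2 * Real.exp u := by
    have h_quad : u ^ 2 ≤ 2 * Real.exp u := by
      linarith [Real.quadratic_le_exp_of_nonneg hu]
    calc z ^ 2 = 4 / c ^ 2 * u ^ 2 := by
          rw [hu_def, div_pow, mul_pow, sq_abs]
          field_simp
          norm_num
      _ ≤ 4 / c ^ 2 * (2 * Real.exp u) := by gcongr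
      _ = 8 / c ^ 2 * Real.exp u := by ring
  have h_split : Real.exp (c * |z|) = Real.exp u * Real.exp u := by
    rw [← Real.exp_add, hu_def, add_halves]
  calc Real.exp (t * z) ≤ 1 + t * z + t ^ 2 * z ^ 2 * Real.exp |t * z| := by
        rw [← mul_pow]
        exact exp_le_one_add_add_sq_mul_exp_abs _
    _ ≤ 1 + t * z + t ^ 2 * (8 / c ^ 2 * Real.exp u) * Real.exp u := by gcongr
    _ = 1 + t * z + 8 / c ^ 2 * t ^ 2 * Real.exp (c * |z|) := by rw [h_split]; ring

lemma HasSubexponentialMGF.of_integral_exp_abs_le {Ω : Type*} [MeasurableSpace Ω]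
    {μ : Measure Ω} [IsProbabilityMeasure μ] {X : Ω → ℝ} {c M : ℝ} (hX : Integrable X μ)
    (h_mean : μ[X] = 0) (hc : 0 < c) (h_int : Integrable (fun ω => Real.exp (c * |X ω|)) μ)
    (hM : ∫ ω, Real.exp (c * |X ω|) ∂μ ≤ M) :
    HasSubexponentialMGF X (16 * M / c ^ 2) (c / 2) μ := by
  have h_exp (t : ℝ) (ht : |t| ≤ c / 2) : Integrable (fun ω => Real.exp (t * X ω)) μ := by
    refine h_int.mono' (by fun_prop) (ae_of_all _ fun ω => ?_)
    rw [Real.norm_eq_abs, Real.abs_exp, Real.exp_le_exp]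
    calc t * X ω ≤ |t| * |X ω| := (le_abs_self _).trans (abs_mul _ _).le
      _ ≤ c * |X ω| := by gcongr; linarith
  refine ⟨h_exp, fun t ht => ?_⟩
  have h_lin : Integrable (fun ω => 1 + t * X ω) μ := (integrable_const _).add (hX.const_mul t)
  calc mgf X μ t
      ≤ ∫ ω, 1 + t * X ω + 8 / c ^ 2 * t ^ 2 * Real.exp (c * |X ω|) ∂μ :=
        integral_mono (h_exp t ht) (h_lin.add (h_int.const_mul _))
          fun ω => exp_mul_le_of_abs_le_half hc ht (X ω)
    _ = 1 + 8 / c ^ 2 * t ^ 2 * ∫ ω, Real.exp (c * |X ω|) ∂μ := by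
        rw [integral_add h_lin (h_int.const_mul _), integral_const_mul,
          integral_add (integrable_const _) (hX.const_mul t), integral_const_mul, h_mean]
        simp
    _ ≤ 16 * M / c ^ 2 * t ^ 2 / 2 + 1 := by
        have := mul_le_mul_of_nonneg_left hM (by positivity : 0 ≤ 8 / c ^ 2 * t ^ 2)
        linarith [show 8 / c ^ 2 * t ^ 2 * M = 16 * M / c ^ 2 * t ^ 2 / 2 by ring]
    _ ≤ Real.exp (16 * M / c ^ 2 * t ^ 2 / 2) := Real.add_one_le_exp _

end ExponentialMoment

section GaussianSquare

variable {v : NNReal} {s : ℝ}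

lemma gaussianPDFReal_zero_mul_exp_mul_sq (hv : v ≠ 0) (s y : ℝ) :
    gaussianPDFReal 0 v y * Real.exp (s * y ^ 2)
      = (√(2 * Real.pi * v))⁻¹ * Real.exp (-((1 - 2 * s * v) / (2 * v)) * y ^ 2) := by
  have hv' : (v : ℝ) ≠ 0 := by exact_mod_cast hv
  rw [gaussianPDFReal_def, mul_assoc, ← Real.exp_add]
  congr 2
  field_simp
  ring

lemma integrable_exp_mul_sq_gaussianReal (h : 2 * s * v < 1) :
    Integrable (fun y => Real.exp (s * y ^ 2)) (gaussianReal 0 v) := by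
  rcases eq_or_ne v 0 with rfl | hv
  · simp [gaussianReal_zero_var, integrable_dirac]
  rw [gaussianReal_of_var_ne_zero _ hv,
    integrable_withDensity_iff_integrable_smul₀' (by fun_prop)
      (ae_of_all _ fun _ => gaussianPDF_lt_top)]
  simp only [toReal_gaussianPDF, smul_eq_mul, gaussianPDFReal_zero_mul_exp_mul_sq hv]
  have : (0 : ℝ) < v := by exact_mod_cast pos_iff_ne_zero.2 hv
  exact (integrable_exp_neg_mul_sq (div_pos (sub_pos.2 h) (by positivity))).const_mul _

lemma integral_exp_mul_sq_gaussianReal (h : 2 * s * v < 1) :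
    ∫ y, Real.exp (s * y ^ 2) ∂gaussianReal 0 v = (√(1 - 2 * s * v))⁻¹ := by
  rcases eq_or_ne v 0 with rfl | hv
  · simp [gaussianReal_zero_var]
  have : (0 : ℝ) < v := by exact_mod_cast pos_iff_ne_zero.2 hv
  simp only [integral_gaussianReal_eq_integral_smul hv, smul_eq_mul,
    gaussianPDFReal_zero_mul_exp_mul_sq hv]
  rw [integral_const_mul, integral_gaussian, ← Real.sqrt_inv, ← Real.sqrt_inv,
    ← Real.sqrt_mul (by positivity)]
  congr 1
  have := sub_pos.2 h
  field_simp

end GaussianSquare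

section CoordinateMoments

variable {ι : Type*} [Fintype ι] {μ : Measure ℝ} [IsProbabilityMeasure μ]

lemma memLp_eval_mul_pi {p : ENNReal} (hμ : MemLp id p μ) (c : ℝ) (j : ι) :
    MemLp (fun a : ι → ℝ => a j * c) p (Measure.pi fun _ => μ) :=
  (hμ.comp_measurePreserving (measurePreserving_eval (fun _ => μ) j)).mul_const c

lemma covariance_eval_eval_pi [DecidableEq ι] (hμ : MemLp id 2 μ) (i j : ι) :
    cov[fun a : ι → ℝ => a i, fun a => a j; Measure.pi fun _ => μ]
      = if i = j then Var[id; μ] else 0 := by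
  have h_eval (l : ι) := measurePreserving_eval (fun _ : ι => μ) l
  split_ifs with hij
  · rw [hij, covariance_self (measurable_pi_apply j).aemeasurable]
    exact (h_eval j).hasLaw.variance_eq
  · exact ((iIndepFun_pi fun _ => aemeasurable_id).indepFun hij).covariance_eq_zero
      (hμ.comp_measurePreserving (h_eval i)) (hμ.comp_measurePreserving (h_eval j))

end CoordinateMoments

section DotProduct

variable {m : ℕ} {μ : Measure ℝ} [IsProbabilityMeasure μ]

lemma abs_dotp_le_one {w x : Fin m → ℝ} (hw : ∑ j, w j ^ 2 ≤ 1) (hx : ∑ j, x j ^ 2 ≤ 1) :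
    |dotp w x| ≤ 1 := by
  rw [← sq_le_one_iff_abs_le_one]
  exact (Finset.sum_mul_sq_le_sq_mul_sq Finset.univ w x).trans
    (mul_le_one₀ hw (Finset.sum_nonneg fun _ _ => sq_nonneg _) hx)

@[fun_prop]
lemma measurable_dotp_left (w : Fin m → ℝ) : Measurable fun a => dotp a w := by
  unfold dotp
  fun_prop

lemma memLp_dotp_pi {p : ENNReal} (hμ : MemLp id p μ) (w : Fin m → ℝ) :
    MemLp (fun a => dotp a w) p (Measure.pi fun _ => μ) :=
  memLp_finsetSum _ fun j _ => memLp_eval_mul_pi hμ (w j) j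

lemma integral_dotp_pi (hμ : MemLp id 1 μ) (w : Fin m → ℝ) :
    ∫ a, dotp a w ∂(Measure.pi fun _ => μ) = μ[id] * ∑ j, w j := by
  have h_eval (j : Fin m) : ∫ a : Fin m → ℝ, a j ∂(Measure.pi fun _ => μ) = μ[id] :=
    (measurePreserving_eval (fun _ => μ) j).hasLaw.integral_eq
  simp only [dotp]
  rw [integral_finsetSum _ fun j _ => memLp_one_iff_integrable.1 (memLp_eval_mul_pi hμ (w j) j),
    Finset.mul_sum]
  simp only [integral_mul_const, h_eval]

lemma covariance_dotp_dotp_pi (hμ : MemLp id 2 μ) (w x : Fin m → ℝ) :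
    cov[fun a => dotp a w, fun a => dotp a x; Measure.pi fun _ => μ] = Var[id; μ] * dotp w x := by
  simp only [dotp]
  rw [covariance_fun_sum_fun_sum (fun i => memLp_eval_mul_pi hμ (w i) i)
    fun j => memLp_eval_mul_pi hμ (x j) j]
  simp only [covariance_mul_const_left, covariance_mul_const_right, covariance_eval_eval_pi hμ,
    ite_mul, zero_mul, Finset.sum_ite_eq, Finset.mem_univ, if_true, Finset.mul_sum]
  exact Finset.sum_congr rfl fun i _ => by ring

lemma hasLaw_dotp_pi_gaussianReal (v : NNReal) (w : Fin m → ℝ) :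
    HasLaw (fun a => dotp a w) (gaussianReal 0 (v * (∑ j, w j ^ 2).toNNReal))
      (Measure.pi fun _ => gaussianReal 0 v) := by
  have h_coord (j : Fin m) :
      HasGaussianLaw (fun a : Fin m → ℝ => a j * w j) (Measure.pi fun _ => gaussianReal 0 v) := by
    have h_eval := (measurePreserving_eval (fun _ : Fin m => gaussianReal 0 v) j).hasLaw
    exact (h_eval.hasGaussianLaw.map_fun ((ContinuousLinearMap.mul ℝ ℝ).flip (w j)))
  have h_gauss : HasGaussianLaw (fun a => dotp a w) (Measure.pi fun _ => gaussianReal 0 v) :=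
    iIndepFun.hasGaussianLaw_fun_sum h_coord
      (iIndepFun_pi (X := fun j y => y * w j) fun _ => by fun_prop)
  have h_var : Var[fun a => dotp a w; Measure.pi fun _ => gaussianReal 0 v]
      = v * ∑ j, w j ^ 2 := by
    rw [← covariance_self (by fun_prop), covariance_dotp_dotp_pi (memLp_id_gaussianReal 2),
      variance_id_gaussianReal]
    simp only [dotp, sq]
  refine ⟨by fun_prop, ?_⟩
  rw [h_gauss.map_eq_gaussianReal, integral_dotp_pi (memLp_id_gaussianReal 1), h_var,
    Real.toNNReal_mul v.coe_nonneg, Real.toNNReal_coe]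
  simp

lemma integral_dotp_mul_dotp_pi_gaussianReal (v : NNReal) (w x : Fin m → ℝ) :
    ∫ a, dotp a w * dotp a x ∂(Measure.pi fun _ => gaussianReal 0 v) = v * dotp w x := by
  have h_memLp (u : Fin m → ℝ) := memLp_dotp_pi (memLp_id_gaussianReal (μ := 0) (v := v) 2) u
  have h_mean (u : Fin m → ℝ) : ∫ a, dotp a u ∂(Measure.pi fun _ => gaussianReal 0 v) = 0 := by
    rw [integral_dotp_pi (memLp_id_gaussianReal 1)]
    simp
  have h_cov := covariance_dotp_dotp_pi (memLp_id_gaussianReal (μ := 0) (v := v) 2) w x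
  rw [covariance_eq_sub (h_memLp w) (h_memLp x), variance_id_gaussianReal, h_mean, zero_mul,
    sub_zero] at h_cov
  exact h_cov

end DotProduct

section Rounding

/-- The randomized rounding of a single real `g` to the grid, with threshold `t`; the coordinates
of `hRound` are of this form. -/
def roundCoord (k : ℕ) (g t : ℝ) : ℝ :=
  if t ≤ roundProb k g then roundDown k g else roundDown k g + gridStep k

instance isProbabilityMeasure_restrict_Icc_zero_one :
    IsProbabilityMeasure (volume.restrict (Set.Icc (0 : ℝ) 1)) :=
  ⟨by simp⟩

lemma integral_Icc_zero_one_ite_le {p : ℝ} (hp : p ∈ Set.Icc (0 : ℝ) 1) (a b : ℝ) :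
    ∫ t in Set.Icc (0 : ℝ) 1, (if t ≤ p then a else b) = p * a + (1 - p) * b := by
  have h_Iic : Set.Iic p ∩ Set.Icc 0 1 = Set.Icc 0 p := by
    rw [← Set.Ici_inter_Iic, Set.inter_left_comm, Set.Iic_inter_Iic, min_eq_left hp.2,
      Set.Ici_inter_Iic]
  have h_Ioi : (Set.Iic p)ᶜ ∩ Set.Icc 0 1 = Set.Ioc p 1 := by
    ext t
    simp only [Set.compl_Iic, Set.mem_inter_iff, Set.mem_Ioi, Set.mem_Icc, Set.mem_Ioc]
    exact ⟨fun h => ⟨h.1, h.2.2⟩, fun h => ⟨h.1, hp.1.trans h.1.le, h.2⟩⟩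
  change ∫ t in Set.Icc (0 : ℝ) 1, (Set.Iic p).piecewise (fun _ => a) (fun _ => b) t = _
  rw [integral_piecewise measurableSet_Iic (integrable_const a).integrableOn
      (integrable_const b).integrableOn,
    setIntegral_const, setIntegral_const, measureReal_restrict_apply measurableSet_Iic,
    measureReal_restrict_apply measurableSet_Iic.compl, h_Iic, h_Ioi,
    Real.volume_real_Icc_of_le hp.1, Real.volume_real_Ioc_of_le hp.2, sub_zero, smul_eq_mul,
    smul_eq_mul]

variable {k : ℕ}

lemma gridStep_pos (hk : 1 ≤ k) : 0 < gridStep k := by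
  have : (0 : ℝ) < k := by exact_mod_cast hk
  unfold gridStep
  positivity

lemma mul_gridStep_sq (hk : 1 ≤ k) : k * gridStep k ^ 2 = 1 / 100 := by
  have hk0 : (0 : ℝ) < k := by exact_mod_cast hk
  rw [gridStep, inv_pow, mul_pow, Real.sq_sqrt hk0.le]
  field_simp
  norm_num

lemma roundDown_le (hk : 1 ≤ k) (g : ℝ) : roundDown k g ≤ g := by
  have h := (le_div_iff₀ (gridStep_pos hk)).1 (Int.floor_le ((g - gridStep k / 2) / gridStep k))
  unfold roundDown
  linarith

lemma lt_roundDown_add_gridStep (hk : 1 ≤ k) (g : ℝ) : g < roundDown k g + gridStep k := by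
  have h := (div_lt_iff₀ (gridStep_pos hk)).1
    (Int.lt_floor_add_one ((g - gridStep k / 2) / gridStep k))
  unfold roundDown
  linarith

lemma roundProb_mem_Icc (hk : 1 ≤ k) (g : ℝ) : roundProb k g ∈ Set.Icc (0 : ℝ) 1 := by
  have hδ := gridStep_pos hk
  have h_frac : (g - roundDown k g) / gridStep k ∈ Set.Icc (0 : ℝ) 1 :=
    ⟨div_nonneg (sub_nonneg.2 (roundDown_le hk g)) hδ.le,
      (div_le_one hδ).2 (by linarith [lt_roundDown_add_gridStep hk g])⟩
  exact ⟨sub_nonneg.2 h_frac.2, sub_le_self _ h_frac.1⟩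

lemma abs_roundCoord_sub_le (hk : 1 ≤ k) (g t : ℝ) : |roundCoord k g t - g| ≤ gridStep k := by
  have h_le := roundDown_le hk g
  have h_lt := lt_roundDown_add_gridStep hk g
  unfold roundCoord
  split_ifs <;> rw [abs_le] <;> constructor <;> linarith

lemma integral_roundCoord (hk : 1 ≤ k) (g : ℝ) :
    ∫ t in Set.Icc (0 : ℝ) 1, roundCoord k g t = g := by
  simp only [roundCoord]
  rw [integral_Icc_zero_one_ite_le (roundProb_mem_Icc hk g), roundProb]
  have := (gridStep_pos hk).ne'
  field_simp
  ring

@[fun_prop]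
lemma measurable_roundDown : Measurable (roundDown k) := by
  unfold roundDown
  fun_prop

@[fun_prop]
lemma measurable_roundProb : Measurable (roundProb k) := by
  unfold roundProb
  fun_prop

lemma measurable_roundCoord : Measurable fun p : ℝ × ℝ => roundCoord k p.1 p.2 := by
  unfold roundCoord
  exact Measurable.ite (measurableSet_le (by fun_prop) (by fun_prop)) (by fun_prop) (by fun_prop)

end Rounding

section RowError

/-- The law of one row of `A` together with its rounding threshold, so that `roundMeasure` is the
law of `k` independent such pairs. -/
def rowMeasure (k m : ℕ) : Measure ((Fin m → ℝ) × ℝ) :=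
  (Measure.pi fun _ : Fin m => gaussianReal 0 (k : NNReal)⁻¹).prod
    (volume.restrict (Set.Icc (0 : ℝ) 1))

instance isProbabilityMeasure_rowMeasure (k m : ℕ) : IsProbabilityMeasure (rowMeasure k m) := by
  unfold rowMeasure
  infer_instance

/-- The contribution of one row of `A` and its threshold to `⟨h_{A,t}(w), Ax⟩`, minus its mean
`⟨w, x⟩ / k`. -/
def rowError (k : ℕ) {m : ℕ} (w x : Fin m → ℝ) (p : (Fin m → ℝ) × ℝ) : ℝ :=
  roundCoord k (dotp p.1 w) p.2 * dotp p.1 x - dotp w x / k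

variable {k m : ℕ} {w x : Fin m → ℝ}

lemma hasLaw_dotp_rowMeasure (k : ℕ) (w : Fin m → ℝ) :
    HasLaw (fun p : (Fin m → ℝ) × ℝ => dotp p.1 w)
      (gaussianReal 0 ((k : NNReal)⁻¹ * (∑ j, w j ^ 2).toNNReal)) (rowMeasure k m) :=
  (hasLaw_dotp_pi_gaussianReal _ w).comp measurePreserving_fst.hasLaw

@[fun_prop]
lemma measurable_roundCoord_dotp (w : Fin m → ℝ) :
    Measurable fun p : (Fin m → ℝ) × ℝ => roundCoord k (dotp p.1 w) p.2 :=
  measurable_roundCoord.comp (by fun_prop : Measurable fun p : (Fin m → ℝ) × ℝ => (dotp p.1 w, p.2))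

@[fun_prop]
lemma measurable_rowError : Measurable (rowError k w x) := by
  unfold rowError
  fun_prop

lemma memLp_dotp_rowMeasure (k : ℕ) (w : Fin m → ℝ) :
    MemLp (fun p : (Fin m → ℝ) × ℝ => dotp p.1 w) 2 (rowMeasure k m) :=
  (memLp_dotp_pi (memLp_id_gaussianReal 2) w).comp_measurePreserving measurePreserving_fst

lemma memLp_roundCoord_dotp (hk : 1 ≤ k) (w : Fin m → ℝ) :
    MemLp (fun p : (Fin m → ℝ) × ℝ => roundCoord k (dotp p.1 w) p.2) 2 (rowMeasure k m) := by
  have h_sub : MemLp (fun p : (Fin m → ℝ) × ℝ => roundCoord k (dotp p.1 w) p.2 - dotp p.1 w) 2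
      (rowMeasure k m) :=
    MemLp.of_bound (by fun_prop) (gridStep k)
      (ae_of_all _ fun p => abs_roundCoord_sub_le hk (dotp p.1 w) p.2)
  convert (memLp_dotp_rowMeasure k w).add h_sub using 1
  exact funext fun p => (add_sub_cancel _ _).symm

lemma integrable_roundCoord_mul_dotp (hk : 1 ≤ k) (w x : Fin m → ℝ) :
    Integrable (fun p : (Fin m → ℝ) × ℝ => roundCoord k (dotp p.1 w) p.2 * dotp p.1 x)
      (rowMeasure k m) :=
  (memLp_roundCoord_dotp hk w).integrable_mul (memLp_dotp_rowMeasure k x)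

lemma integral_roundCoord_mul_dotp (hk : 1 ≤ k) (w x : Fin m → ℝ) :
    ∫ p, roundCoord k (dotp p.1 w) p.2 * dotp p.1 x ∂rowMeasure k m = dotp w x / k := by
  have h_int := integrable_roundCoord_mul_dotp hk w x
  rw [rowMeasure] at h_int ⊢
  rw [integral_prod _ h_int]
  simp only [integral_mul_const, integral_roundCoord hk]
  rw [integral_dotp_mul_dotp_pi_gaussianReal, NNReal.coe_inv, NNReal.coe_natCast, inv_mul_eq_div]

lemma integrable_rowError (hk : 1 ≤ k) (w x : Fin m → ℝ) :
    Integrable (rowError k w x) (rowMeasure k m) :=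
  (integrable_roundCoord_mul_dotp hk w x).sub (integrable_const _)

lemma integral_rowError (hk : 1 ≤ k) (w x : Fin m → ℝ) :
    ∫ p, rowError k w x p ∂rowMeasure k m = 0 := by
  simp only [rowError]
  rw [integral_sub (integrable_roundCoord_mul_dotp hk w x) (integrable_const _),
    integral_roundCoord_mul_dotp hk]
  simp

lemma mul_abs_rowError_le (hk : 1 ≤ k) (hw : ∑ j, w j ^ 2 ≤ 1) (hx : ∑ j, x j ^ 2 ≤ 1)
    (p : (Fin m → ℝ) × ℝ) :
    k * |rowError k w x p| ≤ k * dotp p.1 w ^ 2 + k * dotp p.1 x ^ 2 + 2 := by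
  have hk0 : (0 : ℝ) < k := by exact_mod_cast hk
  set g := dotp p.1 w
  set b := dotp p.1 x
  set r := roundCoord k g p.2
  have h_round_sq : r ^ 2 ≤ 2 * (g ^ 2 + gridStep k ^ 2) := by
    have h_sub : (r - g) ^ 2 ≤ gridStep k ^ 2 :=
      sq_le_sq' (abs_le.1 (abs_roundCoord_sub_le hk g p.2)).1
        (abs_le.1 (abs_roundCoord_sub_le hk g p.2)).2
    calc r ^ 2 = (g + (r - g)) ^ 2 := by ring
      _ ≤ 2 * (g ^ 2 + (r - g) ^ 2) := add_sq_le
      _ ≤ 2 * (g ^ 2 + gridStep k ^ 2) := by gcongr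
  have h_mul : |r * b| ≤ (r ^ 2 + b ^ 2) / 2 := by
    rw [abs_le]
    constructor <;> linarith [sq_nonneg (r + b), sq_nonneg (r - b)]
  calc k * |rowError k w x p| = |k * (r * b) - dotp w x| := by
        rw [← abs_of_pos hk0, ← abs_mul, abs_of_pos hk0, rowError, mul_sub,
          mul_div_cancel₀ _ hk0.ne']
    _ ≤ k * |r * b| + |dotp w x| := by
        rw [← abs_of_pos hk0, ← abs_mul, abs_of_pos hk0]
        exact abs_sub _ _
    _ ≤ k * ((2 * (g ^ 2 + gridStep k ^ 2) + b ^ 2) / 2) + 1 := by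
        gcongr
        · exact h_mul.trans (by gcongr)
        · exact abs_dotp_le_one hw hx
    _ ≤ k * g ^ 2 + k * b ^ 2 + 2 := by
        linarith [mul_gridStep_sq hk, mul_nonneg hk0.le (sq_nonneg b)]

lemma exp_abs_rowError_le (hk : 1 ≤ k) (hw : ∑ j, w j ^ 2 ≤ 1) (hx : ∑ j, x j ^ 2 ≤ 1)
    (p : (Fin m → ℝ) × ℝ) :
    Real.exp (k / 8 * |rowError k w x p|) ≤ Real.exp (1 / 4) / 2 *
      (Real.exp (k / 4 * dotp p.1 w ^ 2) + Real.exp (k / 4 * dotp p.1 x ^ 2)) := by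
  set u := Real.exp (k / 8 * dotp p.1 w ^ 2)
  set v := Real.exp (k / 8 * dotp p.1 x ^ 2)
  have h_sq (y : ℝ) : Real.exp (k / 4 * y ^ 2) = Real.exp (k / 8 * y ^ 2) ^ 2 := by
    rw [← Real.exp_nat_mul]
    congr 1
    push_cast
    ring
  calc Real.exp (k / 8 * |rowError k w x p|)
      ≤ Real.exp (1 / 4 + (k / 8 * dotp p.1 w ^ 2 + k / 8 * dotp p.1 x ^ 2)) := by
        rw [Real.exp_le_exp]
        linarith [mul_abs_rowError_le hk hw hx p]
    _ = Real.exp (1 / 4) / 2 * (2 * u * v) := by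
        rw [Real.exp_add, Real.exp_add]
        ring
    _ ≤ Real.exp (1 / 4) / 2 * (u ^ 2 + v ^ 2) := by
        gcongr
        exact two_mul_le_add_sq u v
    _ = _ := by rw [h_sq, h_sq]

-- The quantity `2 * s * v` of `integral_exp_mul_sq_gaussianReal` for `s = k / 4` and the law of
-- `⟨a, w⟩`.
lemma mul_variance_dotp_rowMeasure (hk : 1 ≤ k) (w : Fin m → ℝ) :
    2 * (k / 4 : ℝ) * ((k : NNReal)⁻¹ * (∑ j, w j ^ 2).toNNReal : NNReal)
      = (∑ j, w j ^ 2) / 2 := by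
  have : (0 : ℝ) < k := by exact_mod_cast hk
  rw [NNReal.coe_mul, Real.coe_toNNReal _ (Finset.sum_nonneg fun j _ => sq_nonneg _),
    NNReal.coe_inv, NNReal.coe_natCast]
  field_simp
  norm_num

lemma integrable_exp_mul_sq_dotp (hk : 1 ≤ k) (hw : ∑ j, w j ^ 2 ≤ 1) :
    Integrable (fun p : (Fin m → ℝ) × ℝ => Real.exp (k / 4 * dotp p.1 w ^ 2))
      (rowMeasure k m) := by
  have h_law := hasLaw_dotp_rowMeasure k w
  have h_gauss : Integrable (fun y => Real.exp (k / 4 * y ^ 2))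
      ((rowMeasure k m).map fun p => dotp p.1 w) := by
    rw [h_law.map_eq]
    exact integrable_exp_mul_sq_gaussianReal (by rw [mul_variance_dotp_rowMeasure hk]; linarith)
  exact h_gauss.comp_aemeasurable h_law.aemeasurable

lemma integral_exp_mul_sq_dotp_le (hk : 1 ≤ k) (hw : ∑ j, w j ^ 2 ≤ 1) :
    ∫ p : (Fin m → ℝ) × ℝ, Real.exp (k / 4 * dotp p.1 w ^ 2) ∂rowMeasure k m ≤ 3 / 2 := by
  have h_eq : ∫ p : (Fin m → ℝ) × ℝ, Real.exp (k / 4 * dotp p.1 w ^ 2) ∂rowMeasure k m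
      = (√(1 - (∑ j, w j ^ 2) / 2))⁻¹ := by
    rw [← mul_variance_dotp_rowMeasure hk,
      ← integral_exp_mul_sq_gaussianReal (by rw [mul_variance_dotp_rowMeasure hk]; linarith)]
    exact (hasLaw_dotp_rowMeasure k w).integral_comp (f := fun y => Real.exp (k / 4 * y ^ 2))
      (by fun_prop)
  have h_sqrt : 2 / 3 ≤ √(1 - (∑ j, w j ^ 2) / 2) := by
    apply Real.le_sqrt_of_sq_le
    linarith
  rw [h_eq]
  exact (inv_anti₀ (by norm_num) h_sqrt).trans_eq (by norm_num)

lemma integrable_exp_abs_rowError (hk : 1 ≤ k) (hw : ∑ j, w j ^ 2 ≤ 1)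
    (hx : ∑ j, x j ^ 2 ≤ 1) :
    Integrable (fun p => Real.exp (k / 8 * |rowError k w x p|)) (rowMeasure k m) :=
  (((integrable_exp_mul_sq_dotp hk hw).add (integrable_exp_mul_sq_dotp hk hx)).const_mul
    (Real.exp (1 / 4) / 2)).mono' (by fun_prop) (ae_of_all _ fun p =>
      (abs_of_pos (Real.exp_pos _)).trans_le (exp_abs_rowError_le hk hw hx p))

lemma integral_exp_abs_rowError_le (hk : 1 ≤ k) (hw : ∑ j, w j ^ 2 ≤ 1)
    (hx : ∑ j, x j ^ 2 ≤ 1) :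
    ∫ p, Real.exp (k / 8 * |rowError k w x p|) ∂rowMeasure k m ≤ 2 := by
  have h_w := integrable_exp_mul_sq_dotp (m := m) hk hw
  have h_x := integrable_exp_mul_sq_dotp (m := m) hk hx
  have h_exp : Real.exp (1 / 4) ≤ 4 / 3 :=
    (Real.exp_bound_div_one_sub_of_interval (by norm_num) (by norm_num)).trans_eq (by norm_num)
  calc ∫ p, Real.exp (k / 8 * |rowError k w x p|) ∂rowMeasure k m
      ≤ ∫ p, Real.exp (1 / 4) / 2 * (Real.exp (k / 4 * dotp p.1 w ^ 2)
          + Real.exp (k / 4 * dotp p.1 x ^ 2)) ∂rowMeasure k m :=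
        integral_mono (integrable_exp_abs_rowError hk hw hx) ((h_w.add h_x).const_mul _)
          (exp_abs_rowError_le hk hw hx)
    _ = Real.exp (1 / 4) / 2 * (∫ p, Real.exp (k / 4 * dotp p.1 w ^ 2) ∂rowMeasure k m
          + ∫ p, Real.exp (k / 4 * dotp p.1 x ^ 2) ∂rowMeasure k m) := by
        rw [integral_const_mul, integral_add h_w h_x]
    _ ≤ 4 / 3 / 2 * (3 / 2 + 3 / 2) := by
        gcongr
        · exact integral_exp_mul_sq_dotp_le hk hw
        · exact integral_exp_mul_sq_dotp_le hk hx
    _ = 2 := by norm_num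

lemma hasSubexponentialMGF_rowError (hk : 1 ≤ k) (hw : ∑ j, w j ^ 2 ≤ 1)
    (hx : ∑ j, x j ^ 2 ≤ 1) :
    HasSubexponentialMGF (rowError k w x) (2048 / k ^ 2) (k / 16) (rowMeasure k m) := by
  have : (0 : ℝ) < k := by exact_mod_cast hk
  convert HasSubexponentialMGF.of_integral_exp_abs_le (integrable_rowError hk w x)
    (integral_rowError hk w x) (by positivity) (integrable_exp_abs_rowError hk hw hx)
    (integral_exp_abs_rowError_le hk hw hx) using 1
  · field_simp
    norm_num
  · ring

end RowError

section RoundingError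

variable {k m : ℕ} {w x : Fin m → ℝ}

instance isProbabilityMeasure_roundMeasure (k m : ℕ) :
    IsProbabilityMeasure (roundMeasure k m) := by
  unfold roundMeasure
  infer_instance

lemma measurePreserving_rows (k m : ℕ) :
    MeasurePreserving (fun (p : (Fin k → Fin m → ℝ) × (Fin k → ℝ)) i => (p.1 i, p.2 i))
      (roundMeasure k m) (Measure.pi fun _ => rowMeasure k m) :=
  (measurePreserving_arrowProdEquivProdArrow (Fin m → ℝ) ℝ (Fin k)
    (fun _ => Measure.pi fun _ => gaussianReal 0 (k : NNReal)⁻¹)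
    (fun _ => volume.restrict (Set.Icc (0 : ℝ) 1))).symm

lemma sum_rowError (hk : 1 ≤ k) (w x : Fin m → ℝ) (p : (Fin k → Fin m → ℝ) × (Fin k → ℝ)) :
    ∑ i, rowError k w x (p.1 i, p.2 i)
      = (∑ r, hRound p.1 p.2 w r * ∑ s, p.1 r s * x s) - dotp w x := by
  have hk0 : (k : ℝ) ≠ 0 := by exact_mod_cast (Nat.one_le_iff_ne_zero.1 hk)
  simp only [rowError]
  rw [Finset.sum_sub_distrib, Finset.sum_const, Finset.card_univ, Fintype.card_fin, nsmul_eq_mul,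
    mul_div_cancel₀ _ hk0]
  rfl

lemma hasSubexponentialMGF_roundingError (hk : 1 ≤ k) (hw : ∑ j, w j ^ 2 ≤ 1)
    (hx : ∑ j, x j ^ 2 ≤ 1) :
    HasSubexponentialMGF
      (fun p => (∑ r, hRound p.1 p.2 w r * ∑ s, p.1 r s * x s) - dotp w x)
      (2048 / k) (k / 16) (roundMeasure k m) := by
  have hk0 : (k : ℝ) ≠ 0 := by exact_mod_cast (Nat.one_le_iff_ne_zero.1 hk)
  have h_sum := ((hasSubexponentialMGF_rowError hk hw hx).sum_pi (ι := Fin k)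
    measurable_rowError).comp_measurePreserving (measurePreserving_rows k m)
  convert h_sum using 1
  · exact funext fun p => (sum_rowError hk w x p).symm
  · rw [Fintype.card_fin]
    field_simp

end RoundingError

theorem statement6_general {k m : ℕ} (hk : 1 ≤ k) {w x : Fin m → ℝ} (hw : ∑ j, w j ^ 2 ≤ 1)
    (hx : ∑ j, x j ^ 2 ≤ 1) {γ : ℝ} (hγ : 0 ≤ γ) :
    (roundMeasure k m
        {p | γ < |(∑ r, hRound p.1 p.2 w r * ∑ s, p.1 r s * x s) - dotp w x|}).toReal ≤
      2 * Real.exp (-min γ (γ ^ 2) * k / 4096) := by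
  have : (0 : ℝ) < k := by exact_mod_cast hk
  have h_rate : min γ (γ ^ 2) * k / 2048 ≤ min (γ / (2048 / k)) (k / 16) * γ := by
    rw [min_mul_of_nonneg _ _ hγ]
    refine le_min ?_ ?_
    · calc min γ (γ ^ 2) * k / 2048 ≤ γ ^ 2 * k / 2048 := by gcongr; exact min_le_right _ _
        _ = γ / (2048 / k) * γ := by field_simp
    · calc min γ (γ ^ 2) * k / 2048 ≤ γ * k / 16 := by
            gcongr
            · exact min_le_left _ _
            · norm_num
        _ = k / 16 * γ := by ring
  calc _ ≤ _ := measureReal_mono fun p (hp : γ < _) => hp.le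
    _ ≤ 2 * Real.exp (-(min (γ / (2048 / k)) (k / 16) * γ / 2)) :=
        (hasSubexponentialMGF_roundingError hk hw hx).measure_abs_ge_le (by positivity)
          (by positivity) hγ
    _ ≤ 2 * Real.exp (-min γ (γ ^ 2) * k / 4096) := by
        gcongr
        linarith

/-- (Lemma 3.5 of the paper.) The randomized rounding approximately
preserves inner products: `|⟨h_{A,t}(w), Ax⟩ - ⟨w,x⟩| > γ` with probability at most
`c·exp(-γ²k/c)` for unit vectors `w, x`. -/
theorem statement6 : ∃ c : ℝ, 0 < c ∧
    ∀ (k m : ℕ), 1 ≤ k →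
    ∀ w x : Fin m → ℝ, (∑ j, w j ^ 2) = 1 → (∑ j, x j ^ 2) = 1 →
    ∀ γ : ℝ, 0 < γ → γ ≤ 1 →
    (roundMeasure k m
        {p | γ < |(∑ r, hRound p.1 p.2 w r * ∑ s, p.1 r s * x s) - dotp w x|}).toReal <
      c * Real.exp (-γ ^ 2 * k / c) := by
  refine ⟨4096, by norm_num, fun k m hk w x hw hx γ hγ hγ1 =>
    (statement6_general hk hw.le hx.le hγ.le).trans_lt ?_⟩
  rw [min_eq_right (pow_le_of_le_one hγ.le hγ1 two_ne_zero)]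
  gcongr
  norm_num
end
end
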